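/- arXiv:2509.06521 — 3 statements merged into one kernel-verified Lean document; each statement's English description precedes it below -/
import Mathlib

section
/- Let G be a finite soluble group whose Sylow subgroups all have nilpotency class at most 2, and whose Sylow 2-subgroups are isomorphic to the quaternion group Q8. Then G is an IYB-group. -/
/-- A finite group is an IYB-group iff it is the multiplicative group of a left
brace, i.e. there is an abelian group operation `+` on `G` with
`a(b + c) = ab − a + ac`. -/
def IsIYB (G : Type*) [Group G] : Prop :=
  ∃ (add : G → G → G) (neg : G → G) (zero : G),
    (∀ a b, add a b = add b a) ∧
    (∀ a b c, add (add a b) c = add a (add b c)) ∧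
    (∀ a, add zero a = a) ∧
    (∀ a, add (neg a) a = zero) ∧
    (∀ a b c : G, a * add b c = add (add (a * b) (neg a)) (a * c))

open scoped commutatorElement

/-- Left brace structure on a group, with zero equal to one. -/
structure Br {G : Type*} [Group G] (add : G → G → G) : Prop where
  comm : ∀ a b, add a b = add b a
  assoc : ∀ a b c, add (add a b) c = add a (add b c)
  one_add : ∀ a, add 1 a = a
  neg : ∀ a, ∃ b, add b a = 1
  dist : ∀ a b c, add (a * add b c) a = add (a * b) (a * c)

theorem Br.isIYB {G : Type*} [Group G] {add : G → G → G} (h : Br add) : IsIYB G := by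
  choose neg hneg using h.neg
  refine ⟨add, neg, 1, h.comm, h.assoc, h.one_add, hneg, fun a b c => ?_⟩
  have h1 := h.dist a b c
  have h2 : add (add (a * add b c) a) (neg a) = a * add b c := by
    rw [h.assoc, h.comm a, hneg, h.comm, h.one_add]
  rw [← h2, h1, h.assoc, h.assoc, h.comm (a * c)]

/-- Glueing. -/
theorem glue {G : Type*} [Group G] (L H : Subgroup G) [L.Normal]
    (hLH : ∀ g : G, ∃ (l : L) (h : H), g = l * h)
    (addL : L → L → L) (bL : Br addL)
    (heq : ∀ (g : G) (x y : L), addL (MulAut.conjNormal g x) (MulAut.conjNormal g y)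
      = MulAut.conjNormal g (addL x y))
    (addH : H → H → H) (bH : Br addH)
    (hKL : ∀ k : L, (k : G) ∈ H → ∀ l, addL k l = k * l)
    (hKc : ∀ k : L, (k : G) ∈ H → ∀ l, k * l = l * k)
    (hKH : ∀ k : H, (k : G) ∈ L → ∀ h, addH k h = k * h) :
    ∃ add : G → G → G, Br add ∧ ∀ (l l' : L) (h h' : H),
      add (l * h) (l' * h') = (addL l l' : G) * (addH h h' : G) := by
  choose α β hαβ using hLH
  have key : ∀ (l l1 l' : L) (h h1 h' : H), (l * h : G) = l1 * h1 →
      (addL l l' : G) * (addH h h' : G) = (addL l1 l' : G) * (addH h1 h' : G) := by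
    intro l l1 l' h h1 h' e
    obtain ⟨k, hk⟩ : ∃ k : G, k = (l : G)⁻¹ * l1 := ⟨_, rfl⟩
    have hk2 : k = h * (h1 : G)⁻¹ := by
      rw [hk, inv_mul_eq_iff_eq_mul, ← mul_assoc, e]; simp
    have kL : k ∈ L := hk ▸ L.mul_mem (L.inv_mem l.2) l1.2
    have kH : k ∈ H := hk2 ▸ H.mul_mem h.2 (H.inv_mem h1.2)
    have e1 : l1 = ⟨k, kL⟩ * l := by
      rw [hKc _ kH]; ext; simp [hk]
    have e2 : h = ⟨k, kH⟩ * h1 := by ext; simp [hk2]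
    rw [e1, ← hKL ⟨k, kL⟩ kH, bL.assoc, hKL ⟨k, kL⟩ kH, hKc ⟨k, kL⟩ kH, e2,
      ← hKH ⟨k, kH⟩ kL, bH.assoc, hKH ⟨k, kH⟩ kL]
    simp [mul_assoc]
  have hadd : ∀ (l l' : L) (h h' : H),
      (addL (α (l * h)) (α (l' * h')) : G) * (addH (β (l * h)) (β (l' * h')) : G)
        = (addL l l' : G) * (addH h h' : G) := by
    intro l l' h h'
    rw [key (α (l * h)) l _ (β (l * h)) h _ (hαβ _).symm, bL.comm, bH.comm,
      key (α (l' * h')) l' _ (β (l' * h')) h' _ (hαβ _).symm, bL.comm, bH.comm]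
  let add : G → G → G := fun g g' => (addL (α g) (α g') : G) * (addH (β g) (β g') : G)
  have hadd' : ∀ (l l' : L) (h h' : H),
      add (l * h) (l' * h') = (addL l l' : G) * (addH h h' : G) := hadd
  clear_value add
  have rep : ∀ g : G, ∃ (l : L) (h : H), g = l * h := fun g => ⟨_, _, hαβ g⟩
  have mulrep : ∀ (l l' : L) (h h' : H), ((l : G) * h) * (l' * h')
      = ((l * MulAut.conjNormal (h : G) l' : L) : G) * ((h * h' : H) : G) := by
    intro l l' h h'
    simp [mul_assoc]
  refine ⟨add, ⟨?_, ?_, ?_, ?_, ?_⟩, hadd'⟩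
  · intro a b
    obtain ⟨l, h, rfl⟩ := rep a
    obtain ⟨l', h', rfl⟩ := rep b
    rw [hadd', hadd', bL.comm, bH.comm]
  · intro a b c
    obtain ⟨l, h, rfl⟩ := rep a
    obtain ⟨l', h', rfl⟩ := rep b
    obtain ⟨l'', h'', rfl⟩ := rep c
    rw [hadd', hadd', hadd', hadd', bL.assoc, bH.assoc]
  · intro a
    obtain ⟨l, h, rfl⟩ := rep a
    have := hadd' 1 l 1 h
    simpa [bL.one_add, bH.one_add] using this
  · intro a
    obtain ⟨l, h, rfl⟩ := rep a
    obtain ⟨l', hl⟩ := bL.neg l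
    obtain ⟨h', hh⟩ := bH.neg h
    exact ⟨l' * h', by rw [hadd', hl, hh]; simp⟩
  · intro a b c
    obtain ⟨l, h, rfl⟩ := rep a
    obtain ⟨l', h', rfl⟩ := rep b
    obtain ⟨l'', h'', rfl⟩ := rep c
    rw [hadd', mulrep, mulrep, mulrep, hadd', hadd', ← heq, bL.dist, bH.dist]

theorem commElt_eq {L : Type*} [Group L] (x y : L) : x * y = ⁅x, y⁆ * (y * x) := by
  simp [commutatorElement_def, mul_assoc]

/-- Half-commutator forms. -/
structure Fm {L : Type*} [Group L] (φ : L → L → Subgroup.center L) : Prop where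
  mul_left : ∀ x y z, φ (x * y) z = φ x z * φ y z
  mul_right : ∀ x y z, φ x (y * z) = φ x y * φ x z
  left_center : ∀ x ∈ Subgroup.center L, ∀ y, φ x y = 1
  right_center : ∀ x ∈ Subgroup.center L, ∀ y, φ y x = 1
  half : ∀ x y, ⁅x, y⁆ * φ x y = φ y x

theorem Fm.br {L : Type*} [Group L] {φ : L → L → Subgroup.center L} (h : Fm φ) :
    Br (fun x y => x * y * φ x y) := by
  have cen : ∀ (z : Subgroup.center L) (x : L), x * (z : L) = z * x :=
    fun z x => Subgroup.mem_center_iff.1 z.2 x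
  have lc : ∀ (z : Subgroup.center L) y, φ z y = 1 := fun z y => h.left_center _ z.2 y
  have rc : ∀ (z : Subgroup.center L) y, φ y z = 1 := fun z y => h.right_center _ z.2 y
  have one : ∀ y, φ 1 y = 1 := fun y => h.left_center _ (Subgroup.one_mem _) y
  have hcomm : ∀ a b, a * b * φ a b = b * a * φ b a := by
    intro a b
    rw [← h.half a b, commElt_eq a b, ← mul_assoc (b * a)]
    have : ⁅a, b⁆ ∈ Subgroup.center L := by
      have := h.half a b
      rw [← eq_mul_inv_iff_mul_eq] at this
      rw [this]
      exact (φ b a * (φ a b)⁻¹).2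
    rw [Subgroup.mem_center_iff.1 this]
  have c2 : ∀ (u v : Subgroup.center L), (u : L) * v = v * u := fun u v => cen v u
  have c3 : ∀ (u v : Subgroup.center L) (w : L), (u : L) * (v * w) = v * (u * w) := by
    intro u v w
    rw [← mul_assoc, c2, mul_assoc]
  refine ⟨hcomm, ?_, ?_, ?_, ?_⟩
  · intro a b c
    simp only [h.mul_left, h.mul_right, lc, rc, Subgroup.coe_mul, mul_one]
    rw [mul_assoc (a * b), ← cen (φ a b) c]
    simp only [mul_assoc, c2, c3]
  · intro a; simp [one]
  · intro a
    refine ⟨a⁻¹ * φ a a, ?_⟩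
    simp only [h.mul_left, lc, mul_one]
    rw [mul_assoc a⁻¹, ← cen, inv_mul_cancel_left]
    have := h.mul_left a a⁻¹ a
    rw [mul_inv_cancel, one] at this
    have := congrArg Subtype.val this
    simpa using this.symm
  · intro a b c
    simp only [h.mul_left, h.mul_right, lc, Subgroup.coe_mul, mul_one]
    have h1 := hcomm c a
    have e1 : a * (b * c * (φ b c : L)) * a * (φ a a * (φ b a * φ c a))
      = a * b * (c * a * φ c a) * (φ b c * φ a a * φ b a) := by
      rw [← mul_assoc a (b * c), mul_assoc _ (φ b c : L) a, ← cen (φ b c) a]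
      simp only [mul_assoc, c2, c3]
    rw [e1, h1]
    simp only [mul_assoc, c2, c3]

open scoped commutatorElement

/-- Class at most two. -/
def Cl2 (L : Type*) [Group L] : Prop := ∀ x y : L, ⁅x, y⁆ ∈ Subgroup.center L

section cl2
variable {L : Type*} [Group L]

theorem Cl2.mul_left (h : Cl2 L) (x y z : L) : ⁅x * y, z⁆ = ⁅x, z⁆ * ⁅y, z⁆ := by
  have h1 := Subgroup.mem_center_iff.1 (h y z) x
  have : ⁅x * y, z⁆ = x * ⁅y, z⁆ * x⁻¹ * ⁅x, z⁆ := by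
    simp [commutatorElement_def, mul_assoc]
  rw [this, h1, mul_inv_cancel_right, Subgroup.mem_center_iff.1 (h y z)]

theorem Cl2.mul_right (h : Cl2 L) (x y z : L) : ⁅x, y * z⁆ = ⁅x, y⁆ * ⁅x, z⁆ := by
  rw [← commutatorElement_inv, h.mul_left, mul_inv_rev, commutatorElement_inv,
    commutatorElement_inv, Subgroup.mem_center_iff.1 (h x y)]

theorem Cl2.pow_left (h : Cl2 L) (x y : L) (n : ℕ) : ⁅x ^ n, y⁆ = ⁅x, y⁆ ^ n := by
  induction n with
  | zero => simp
  | succ n ih => rw [pow_succ, pow_succ, h.mul_left, ih]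

theorem Cl2.pow_right (h : Cl2 L) (x y : L) (n : ℕ) : ⁅x, y ^ n⁆ = ⁅x, y⁆ ^ n := by
  induction n with
  | zero => simp
  | succ n ih => rw [pow_succ, pow_succ, h.mul_right, ih]

theorem comm_center_left {x : L} (hx : x ∈ Subgroup.center L) (y : L) : ⁅x, y⁆ = 1 := by
  rw [commutatorElement_eq_one_iff_mul_comm]
  exact (Subgroup.mem_center_iff.1 hx y).symm

theorem comm_center_right {x : L} (hx : x ∈ Subgroup.center L) (y : L) : ⁅y, x⁆ = 1 := by
  rw [commutatorElement_eq_one_iff_mul_comm]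
  exact (Subgroup.mem_center_iff.1 hx y)

theorem Cl2.commute (h : Cl2 L) (x y z : L) : Commute ⁅x, y⁆ z :=
  (Subgroup.mem_center_iff.1 (h x y) z).symm

theorem Cl2.mul_pow (h : Cl2 L) (x y : L) (n : ℕ) :
    (x * y) ^ n = x ^ n * y ^ n * ⁅y, x⁆ ^ (n.choose 2) := by
  induction n with
  | zero => simp
  | succ n ih =>
    have h1 : y ^ n * x = ⁅y, x⁆ ^ n * (x * y ^ n) := by
      rw [commElt_eq, h.pow_left]
    have h2 : (n + 1).choose 2 = n + n.choose 2 := by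
      rw [Nat.choose_succ_succ']; simp
    rw [pow_succ, ih, h2, pow_add ⁅y, x⁆]
    have c1 := ((h.commute y x (x * y)).pow_left (n.choose 2)).eq
    have c2 := ((h.commute y x (x ^ n)).pow_left n).eq
    have c3 := ((h.commute y x (x ^ (n + 1) * y ^ (n+1))).pow_left n).eq
    calc x ^ n * y ^ n * ⁅y, x⁆ ^ n.choose 2 * (x * y)
        = x ^ n * (y ^ n * x) * y * ⁅y, x⁆ ^ n.choose 2 := by
          rw [mul_assoc _ _ (x * y), c1]; simp only [mul_assoc]
      _ = (x ^ n * ⁅y, x⁆ ^ n) * (x * y ^ n) * y * ⁅y, x⁆ ^ n.choose 2 := by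
          rw [h1]; simp only [mul_assoc]
      _ = ⁅y, x⁆ ^ n * (x ^ (n + 1) * y ^ (n + 1)) * ⁅y, x⁆ ^ n.choose 2 := by
          rw [← c2, pow_succ x, pow_succ y]; simp only [mul_assoc]
      _ = _ := by rw [c3]; simp only [mul_assoc]

theorem Cl2.mul_pow_comm (h : Cl2 L) (x y z w : L) (n : ℕ) :
    (⁅x, y⁆ * ⁅z, w⁆) ^ n = ⁅x, y⁆ ^ n * ⁅z, w⁆ ^ n :=
  (h.commute x y _).mul_pow n

theorem form1 (h : Cl2 L) (m : ℕ) (hm : ∀ x y : L, ⁅x, y⁆ ^ (2 * m + 1) = 1) :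
    Fm (fun x y : L => (⟨⁅x, y⁆ ^ m, Subgroup.pow_mem _ (h x y) m⟩ : Subgroup.center L)) := by
  refine ⟨?_, ?_, ?_, ?_, ?_⟩
  · intro x y z; ext; simp [h.mul_left, h.mul_pow_comm]
  · intro x y z; ext; simp [h.mul_right, h.mul_pow_comm]
  · intro x hx y; ext; simp [comm_center_left hx]
  · intro x hx y; ext; simp [comm_center_right hx]
  · intro x y
    have := hm x y
    show ⁅x, y⁆ * ⁅x, y⁆ ^ m = ⁅y, x⁆ ^ m
    rw [← commutatorElement_inv x y, inv_pow, eq_inv_iff_mul_eq_one, ← this, two_mul, pow_succ',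
      pow_add, mul_assoc]

/-- Half-commutator on the quaternion group. -/
def bet : QuaternionGroup 2 → QuaternionGroup 2 → QuaternionGroup 2
  | .xa _, .a i => if i = 1 ∨ i = 3 then .a 2 else 1
  | .xa _, .xa i => if i = 1 ∨ i = 3 then .a 2 else 1
  | _, _ => 1

theorem bet_left : ∀ x y z, bet (x * y) z = bet x z * bet y z := by decide
theorem bet_right : ∀ x y z, bet x (y * z) = bet x y * bet x z := by decide
theorem bet_center : ∀ x y z, bet x y * z = z * bet x y := by decide
theorem bet_cl : ∀ x, (∀ y, x * y = y * x) → ∀ y, bet x y = 1 ∧ bet y x = 1 := by decide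
theorem bet_half : ∀ x y, x * y * bet x y = y * x * bet y x := by decide

theorem form2 (h : Cl2 L) (n : ℕ) (hn : Odd n) (hL : ∀ x : L, x ^ (8 * n) = 1)
    (P : Subgroup L) (hP : ∀ x : L, x ^ 8 = 1 → x ∈ P) (hP8 : ∀ x ∈ P, x ^ 8 = 1)
    (f : P ≃* QuaternionGroup 2) :
    ∃ φ : L → L → Subgroup.center L, Fm φ := by
  obtain ⟨e, j, e', h1, h2⟩ : ∃ e j e', e = 16 * j + 1 ∧ e = n * e' := by
    have hco : Nat.Coprime 16 n := by
      have : Nat.Coprime (2 ^ 4) n := Nat.Coprime.pow_left _ (Nat.coprime_two_left.2 hn)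
      simpa using this
    obtain ⟨k, hk1, hk2⟩ := Nat.chineseRemainder hco 1 0
    have : k % 16 = 1 := hk1
    refine ⟨k, k / 16, k / n, by omega, ?_⟩
    exact (Nat.mul_div_cancel' (Nat.modEq_zero_iff_dvd.1 hk2)).symm
  have hch : e.choose 2 = 8 * n * (e' * j) := by
    rw [Nat.choose_two_right]
    have : e * (e - 1) = 2 * (8 * n * (e' * j)) := by
      have : e - 1 = 16 * j := by omega
      rw [this, h2]; ring
    rw [this]; simp
  have hee : e * e = 8 * n * (2 * e' * j) + e := by
    calc e * e = (n * e') * (16 * j + 1) := by rw [← h2, ← h1]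
      _ = 8 * n * (2 * e' * j) + n * e' := by ring
      _ = _ := by rw [← h2]
  let π : L →* P :=
    { toFun := fun x => ⟨x ^ e, hP _ (by rw [← pow_mul, h2, mul_comm, ← mul_assoc, pow_mul, hL, one_pow])⟩
      map_one' := by ext; simp
      map_mul' := by
        intro x y; ext
        simp only [Subgroup.coe_mul]
        rw [h.mul_pow, hch, pow_mul, hL, one_pow, mul_one] }
  have hπ : ∀ x, (π x : L) = x ^ e := fun x => rfl
  have hπP : ∀ x : P, (x : L) ^ e = x := by
    intro x
    rw [h1, pow_succ, show 16 * j = 8 * (2 * j) by ring, pow_mul, hP8 x x.2, one_pow, one_mul]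
  let B : L → L → P := fun x y => f.symm (bet (f (π x)) (f (π y)))
  have hB : ∀ x y, B x y = f.symm (bet (f (π x)) (f (π y))) := fun _ _ => rfl
  clear_value π B
  have hPc : ∀ x : P, (∀ y : P, x * y = y * x) → (x : L) ∈ Subgroup.center L := by
    intro x hx
    rw [Subgroup.mem_center_iff]
    intro y
    rw [eq_comm, ← commutatorElement_eq_one_iff_mul_comm, ← hπP, h.pow_left, ← h.pow_right,
      commutatorElement_eq_one_iff_mul_comm, ← hπ]
    exact congrArg Subtype.val (hx (π y))
  have hBc : ∀ x y, (B x y : L) ∈ Subgroup.center L := by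
    intro x y
    apply hPc
    intro z
    apply f.injective
    rw [map_mul, map_mul, hB, MulEquiv.apply_symm_apply, bet_center]
  have hcπ : ∀ x ∈ Subgroup.center L, ∀ y, f (π x) * y = y * f (π x) := by
    intro x hx y
    obtain ⟨y, rfl⟩ := f.surjective y
    rw [← map_mul, ← map_mul]
    congr 1
    ext
    simp only [Subgroup.coe_mul, hπ]
    exact (Subgroup.mem_center_iff.1 (Subgroup.pow_mem _ hx e) _).symm
  have hBh : ∀ x y, (⁅x, y⁆ ^ e) * B x y = B y x := by
    intro x y
    have h1 := bet_half (f (π x)) (f (π y))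
    have h2 : π x * π y * B x y = π y * π x * B y x := by
      apply f.injective
      simpa [hB] using h1
    have h3 : (⁅π x, π y⁆ : P) * B x y = B y x := by
      rw [commElt_eq (π x) (π y)] at h2
      have h4 : ⁅π x, π y⁆ * (π y * π x) = (π y * π x) * ⁅π x, π y⁆ := by
        ext
        have := h.commute (π x) (π y) (π y * π x)
        simpa [commutatorElement_def] using this.eq
      rw [h4, mul_assoc] at h2
      exact mul_left_cancel h2
    have h5 := congrArg Subtype.val h3
    have h6 : ((⁅π x, π y⁆ : P) : L) = ⁅x, y⁆ ^ e := by
      have : ((⁅π x, π y⁆ : P) : L) = ⁅(π x : L), (π y : L)⁆ := by simp [commutatorElement_def]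
      rw [this, hπ, hπ, h.pow_left, h.pow_right, ← pow_mul, hee, pow_add, pow_mul, hL, one_pow,
        one_mul]
    rw [Subgroup.coe_mul, h6] at h5
    exact h5
  refine ⟨fun x y => ⟨⁅x, y⁆ ^ (8 * j) * B x y, Subgroup.mul_mem _ (Subgroup.pow_mem _ (h x y) _)
    (hBc x y)⟩, ?_, ?_, ?_, ?_, ?_⟩
  · intro x y z; ext
    simp only [Subgroup.coe_mul]
    have : B (x * y) z = B x z * B y z := by simp [hB, bet_left]
    rw [this, h.mul_left, h.mul_pow_comm, Subgroup.coe_mul]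
    have := ((h.commute y z (B x z)).pow_left (8 * j)).eq
    simp only [mul_assoc]
    rw [← mul_assoc (⁅y, z⁆ ^ (8 * j)), this, mul_assoc]
  · intro x y z; ext
    simp only [Subgroup.coe_mul]
    have : B x (y * z) = B x y * B x z := by simp [hB, bet_right]
    rw [this, h.mul_right, h.mul_pow_comm, Subgroup.coe_mul]
    have := ((h.commute x z (B x y)).pow_left (8 * j)).eq
    simp only [mul_assoc]
    rw [← mul_assoc (⁅x, z⁆ ^ (8 * j)), this, mul_assoc]
  · intro x hx y; ext
    simp [comm_center_left hx, hB, (bet_cl _ (hcπ x hx) (f (π y))).1]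
  · intro x hx y; ext
    simp [comm_center_right hx, hB, (bet_cl _ (hcπ x hx) (f (π y))).2]
  · intro x y
    show ⁅x, y⁆ * (⁅x, y⁆ ^ (8 * j) * B x y) = ⁅y, x⁆ ^ (8 * j) * B y x
    rw [← hBh x y, ← mul_assoc, ← mul_assoc]
    congr 1
    rw [← commutatorElement_inv x y, inv_pow, eq_inv_mul_iff_mul_eq, h1, ← pow_succ', ← pow_add]
    congr 1; ring

end cl2

open scoped commutatorElement IsMulCommutative

theorem average {G : Type*} [Group G] [Finite G] (L : Subgroup G) [L.Normal] (h : Cl2 L)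
    (hodd : Odd L.index) (φ : L → L → Subgroup.center L) (hφ : Fm φ) :
    ∃ φ' : L → L → Subgroup.center L, Fm φ' ∧ ∀ (g : G) (x y : L),
      (φ' (MulAut.conjNormal g x) (MulAut.conjNormal g y) : L)
        = MulAut.conjNormal g (φ' x y : L) := by
  have hcc : ∀ (σ : MulAut L) (z : L), z ∈ Subgroup.center L → σ z ∈ Subgroup.center L := by
    intro σ z hz
    rw [Subgroup.mem_center_iff] at *
    intro y
    obtain ⟨y, rfl⟩ := σ.surjective y
    rw [← map_mul, ← map_mul, hz]
  let F : G → L → L → Subgroup.center L := fun g x y =>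
    ⟨MulAut.conjNormal g (φ (MulAut.conjNormal g⁻¹ x) (MulAut.conjNormal g⁻¹ y) : L),
      hcc _ _ (φ _ _).2⟩
  have hF : ∀ g x y, (F g x y : L) =
    MulAut.conjNormal g (φ (MulAut.conjNormal g⁻¹ x) (MulAut.conjNormal g⁻¹ y) : L) :=
    fun _ _ _ => rfl
  clear_value F
  have hgg : ∀ (g : G) (x : L), MulAut.conjNormal g (MulAut.conjNormal g⁻¹ x) = x := by
    intro g x; ext; simp
  have hFm : ∀ g, Fm (F g) := by
    intro g
    refine ⟨?_, ?_, ?_, ?_, ?_⟩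
    · intro x y z; ext; simp [hF, hφ.mul_left]
    · intro x y z; ext; simp [hF, hφ.mul_right]
    · intro x hx y; apply Subtype.ext; rw [hF, hφ.left_center _ (hcc _ _ hx)]; simp
    · intro x hx y; apply Subtype.ext; rw [hF, hφ.right_center _ (hcc _ _ hx)]; simp
    · intro x y
      rw [hF g x y, hF g y x, ← hφ.half (MulAut.conjNormal g⁻¹ x), map_mul, map_commutatorElement,
        hgg, hgg]
  have hFl : ∀ (g : G) (l : L) x y, F (g * l) x y = F g x y := by
    intro g l x y
    have e : ∀ u : L, MulAut.conjNormal ((l : G)⁻¹) u = ⁅l⁻¹, u⁆ * u := by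
      intro u; ext; simp [commutatorElement_def]
    have e2 : ∀ u : L, u ∈ Subgroup.center L → MulAut.conjNormal (l : G) u = u := by
      intro u hu
      have := Subgroup.mem_center_iff.1 hu l
      have : MulAut.conjNormal (l : G) u = l * u * l⁻¹ := by ext; simp
      rw [this, Subgroup.mem_center_iff.1 hu l, mul_inv_cancel_right]
    apply Subtype.ext
    rw [hF, hF, mul_inv_rev, map_mul, map_mul]
    simp only [MulAut.mul_apply]
    rw [e2 _ (φ _ _).2, e, e, hφ.mul_left, hφ.mul_right, hφ.mul_right, hφ.left_center _ (h _ _),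
      hφ.left_center _ (h _ _), hφ.right_center _ (h _ _)]
    simp
  have hFo : ∀ (g : G) x y, F (QuotientGroup.mk g : G ⧸ L).out x y = F g x y := by
    intro g x y
    obtain ⟨l, hl⟩ := QuotientGroup.mk_out_eq_mul L g
    rw [hl, hFl]
  obtain ⟨m, hm⟩ := hodd
  have : Fintype (G ⧸ L) := Fintype.ofFinite _
  have hcard : Fintype.card (G ⧸ L) = 2 * m + 1 := by
    rw [← hm, Subgroup.index, Nat.card_eq_fintype_card]
  let c : L → L → Subgroup.center L := fun x y => ⟨⁅x, y⁆, h x y⟩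
  have hc : ∀ x y, (c x y : L) = ⁅x, y⁆ := fun _ _ => rfl
  have hcl : ∀ x y z, c (x * y) z = c x z * c y z := by
    intro x y z; apply Subtype.ext; rw [Subgroup.coe_mul, hc, hc, hc, h.mul_left]
  have hcr : ∀ x y z, c x (y * z) = c x y * c x z := by
    intro x y z; apply Subtype.ext; rw [Subgroup.coe_mul, hc, hc, hc, h.mul_right]
  have hci : ∀ x y, c y x = (c x y)⁻¹ := by
    intro x y; apply Subtype.ext; rw [Subgroup.coe_inv, hc, hc, commutatorElement_inv]
  have hcx : ∀ x ∈ Subgroup.center L, ∀ y, c x y = 1 := by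
    intro x hx y; apply Subtype.ext; rw [hc, comm_center_left hx]; rfl
  have hcy : ∀ x ∈ Subgroup.center L, ∀ y, c y x = 1 := by
    intro x hx y; apply Subtype.ext; rw [hc, comm_center_right hx]; rfl
  clear_value c
  refine ⟨fun x y => c x y ^ m * ∏ q : G ⧸ L, F q.out x y, ⟨?_, ?_, ?_, ?_, ?_⟩, ?_⟩
  · intro x y z
    simp only [(hFm _).mul_left, Finset.prod_mul_distrib, hcl, mul_pow]
    exact mul_mul_mul_comm _ _ _ _
  · intro x y z
    simp only [(hFm _).mul_right, Finset.prod_mul_distrib, hcr, mul_pow]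
    exact mul_mul_mul_comm _ _ _ _
  · intro x hx y
    simp [(hFm _).left_center x hx, hcx x hx]
  · intro x hx y
    simp [(hFm _).right_center x hx, hcy x hx]
  · intro x y
    have e : ∀ g, F g y x = c x y * F g x y := by
      intro g; apply Subtype.ext; rw [Subgroup.coe_mul, hc, (hFm g).half]
    rw [← hc, ← Subgroup.coe_mul]
    congr 1
    simp only [e, Finset.prod_mul_distrib, Finset.prod_const, Finset.card_univ, hcard]
    rw [hci x y, ← mul_assoc, ← mul_assoc]
    congr 1
    rw [inv_pow, eq_inv_mul_iff_mul_eq, ← pow_succ', ← pow_add]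
    congr 1; ring
  · intro g x y
    have e : ∀ q : G ⧸ L, (F q.out (MulAut.conjNormal g x) (MulAut.conjNormal g y) : L)
        = MulAut.conjNormal g (F (g⁻¹ • q : G ⧸ L).out x y : L) := by
      intro q
      induction q using QuotientGroup.induction_on with
      | H k =>
        rw [MulAction.Quotient.smul_mk, hFo, hFo, hF, hF, smul_eq_mul]
        simp only [map_mul, mul_inv_rev, MulAut.mul_apply, map_inv, inv_inv, MulAut.apply_inv_self]
    have e3 : ((∏ q : G ⧸ L, F q.out (MulAut.conjNormal g x) (MulAut.conjNormal g y) :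
        Subgroup.center L) : L) = MulAut.conjNormal g
          ((∏ q : G ⧸ L, F q.out x y : Subgroup.center L) : L) := by
      let τ : Subgroup.center L →* Subgroup.center L :=
        { toFun := fun z => ⟨MulAut.conjNormal g (z : L), hcc _ _ z.2⟩
          map_one' := by ext; simp
          map_mul' := by intro a b; ext; simp }
      have hτ : ∀ z, (τ z : L) = MulAut.conjNormal g (z : L) := fun _ => rfl
      rw [← hτ]
      congr 1
      rw [map_prod]
      rw [← Equiv.prod_comp (MulAction.toPerm (g : G) : Equiv.Perm (G ⧸ L))]
      apply Finset.prod_congr rfl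
      intro q _
      apply Subtype.ext
      rw [e, hτ, MulAction.toPerm_apply, inv_smul_smul]
    simp only [Subgroup.coe_mul, Subgroup.coe_pow, map_mul, map_pow, e3]
    rw [hc, hc, map_commutatorElement]

open scoped commutatorElement IsMulCommutative

/-- The inductive hypothesis on Sylow subgroups. -/
structure Good (G : Type*) [Group G] : Prop where
  cl : ∀ p : ℕ, p.Prime → ∀ P : Subgroup G, IsPGroup p P → Cl2 P
  two : ∀ P : Subgroup G, IsPGroup 2 P → ∃ f : P →* QuaternionGroup 2, Function.Injective f

theorem Cl2.of_injective {A B : Type*} [Group A] [Group B] (f : A →* B)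
    (hf : Function.Injective f) (h : Cl2 B) : Cl2 A := by
  intro x y
  rw [Subgroup.mem_center_iff]
  intro z
  apply hf
  rw [map_mul, map_mul, map_commutatorElement]
  exact (h.commute _ _ _).eq.symm

theorem Good.subgroup {G : Type*} [Group G] (h : Good G) (H : Subgroup G) : Good H := by
  refine ⟨fun p hp P hP => ?_, fun P hP => ?_⟩
  · exact Cl2.of_injective (P.equivMapOfInjective H.subtype H.subtype_injective).toMonoidHom
      (MulEquiv.injective _) (h.cl p hp _ (hP.map H.subtype))
  · obtain ⟨f, hf⟩ := h.two _ (hP.map H.subtype)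
    exact ⟨f.comp (P.equivMapOfInjective H.subtype H.subtype_injective).toMonoidHom,
      hf.comp (MulEquiv.injective _)⟩

theorem Good.cl2 {L : Type*} [Group L] [Finite L] (h : Good L) (hn : Group.IsNilpotent L) :
    Cl2 L := by
  obtain ⟨e⟩ := (Group.isNilpotent_of_finite_tfae.out 0 4 rfl rfl).1 hn
  apply Cl2.of_injective e.symm.toMonoidHom e.symm.injective
  intro x y
  rw [Subgroup.mem_center_iff]
  intro z
  ext p P : 2
  have := (h.cl p (Nat.prime_of_mem_primeFactors p.2) P P.2).commute (x p P) (y p P) (z p P)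
  exact this.eq.symm

theorem mem_sylow_of_normal {L : Type*} [Group L] [Finite L] {p : ℕ} [Fact p.Prime]
    (P : Sylow p L) (hP : (P : Subgroup L).Normal) {x : L} {k : ℕ} (hx : x ^ p ^ k = 1) :
    x ∈ (P : Subgroup L) := by
  have h1 : IsPGroup p (Subgroup.zpowers x) := by
    intro ⟨y, hy⟩
    obtain ⟨i, rfl⟩ := Subgroup.mem_zpowers_iff.1 hy
    refine ⟨k, ?_⟩
    ext
    simp only [Subgroup.coe_pow, Subgroup.coe_one]
    rw [← zpow_natCast, ← zpow_mul, mul_comm, zpow_mul, zpow_natCast, hx, one_zpow]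
  obtain ⟨Q, hQ⟩ := h1.exists_le_sylow
  have := Sylow.unique_of_normal P hP
  have e : Q = P := Subsingleton.elim _ _
  rw [← e]
  exact hQ (Subgroup.mem_zpowers x)

theorem q8_gen : ∀ x y z : QuaternionGroup 2, x * y ≠ y * x →
    ∃ i j : Fin 4, z = x ^ (i : ℕ) * y ^ (j : ℕ) := by decide

theorem nilForm {G : Type*} [Group G] [Finite G] (h : Good G) (L : Subgroup G) [L.Normal]
    (hn : Group.IsNilpotent L) :
    ∃ φ' : L → L → Subgroup.center L, Fm φ' ∧ ∀ (g : G) (x y : L),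
      (φ' (MulAut.conjNormal g x) (MulAut.conjNormal g y) : L)
        = MulAut.conjNormal g (φ' x y : L) := by
  have hc := (h.subgroup L).cl2 hn
  have P : Sylow 2 L := default
  have hPn : (P : Subgroup L).Normal := inferInstance
  obtain ⟨f, hf⟩ := (h.subgroup L).two P P.2
  have hodd : Odd (P : Subgroup L).index := by
    rw [← Nat.not_even_iff_odd, even_iff_two_dvd]
    exact P.not_dvd_index
  obtain ⟨k, hk⟩ := IsPGroup.iff_card.1 P.2
  have hcard : Nat.card P * (P : Subgroup L).index = Nat.card L := Subgroup.card_mul_index _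
  by_cases hcomm : ∀ x y : P, x * y = y * x
  · have hm : ∀ x : L, x ^ (P : Subgroup L).index ∈ (P : Subgroup L) := by
      intro x
      apply mem_sylow_of_normal P hPn (k := k)
      rw [← pow_mul, ← hk, mul_comm, hcard, pow_card_eq_one']
    obtain ⟨m, hm2⟩ := hodd.mul hodd
    refine ⟨_, form1 hc m ?_, ?_⟩
    · intro x y
      rw [← hm2, pow_mul, ← hc.pow_left, ← hc.pow_right, commutatorElement_eq_one_iff_mul_comm]
      exact congrArg Subtype.val (hcomm ⟨_, hm x⟩ ⟨_, hm y⟩)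
    · intro g x y
      simp only [map_pow, map_commutatorElement]
  · push Not at hcomm
    obtain ⟨x, y, hxy⟩ := hcomm
    have hsurj : Function.Surjective f := by
      intro z
      obtain ⟨i, j, hz⟩ := q8_gen (f x) (f y) z (by
        rw [← map_mul, ← map_mul]; exact fun e => hxy (hf e))
      exact ⟨x ^ (i : ℕ) * y ^ (j : ℕ), by simp [hz]⟩
    let e : P ≃* QuaternionGroup 2 := MulEquiv.ofBijective f ⟨hf, hsurj⟩
    have hQc : Nat.card (QuaternionGroup 2) = 8 := by
      rw [Nat.card_eq_fintype_card]; rfl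
    have hP8 : Nat.card P = 8 := by
      rw [Nat.card_congr e.toEquiv, hQc]
    obtain ⟨φ, hφ⟩ := form2 hc _ hodd (fun x => by rw [← hP8, hcard, pow_card_eq_one']) P
      (fun x hx => mem_sylow_of_normal P hPn (k := 3) (by simpa using hx))
      (fun x hx => by
        have : (⟨x, hx⟩ : (P : Subgroup L)) ^ 8 = 1 := by rw [← hP8, pow_card_eq_one']
        exact congrArg Subtype.val this) e
    refine average L hc ?_ φ hφ
    rw [← Nat.not_even_iff_odd, even_iff_two_dvd]
    intro hd
    have S : Sylow 2 G := default
    have h16 : 2 ^ 4 ∣ Nat.card G := by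
      rw [← L.card_mul_index, ← hcard, hP8, show 2 ^ 4 = 8 * 2 by norm_num]
      exact mul_dvd_mul (Dvd.intro _ rfl) hd
    have h1 := S.pow_dvd_card_of_pow_dvd_card h16
    obtain ⟨f', hf'⟩ := h.two S S.2
    have h2 := Nat.card_le_card_of_injective f' hf'
    have h3 := Nat.le_of_dvd Nat.card_pos h1
    rw [hQc] at h2
    have : Nat.card S = Nat.card (S : Subgroup G) := rfl
    omega

theorem nilBr {G : Type*} [Group G] [Finite G] (h : Good G) (L : Subgroup G) [L.Normal]
    (hn : Group.IsNilpotent L) :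
    ∃ add : L → L → L, Br add ∧ (∀ (g : G) (x y : L),
      add (MulAut.conjNormal g x) (MulAut.conjNormal g y) = MulAut.conjNormal g (add x y)) ∧
      ∀ k ∈ Subgroup.center L, ∀ l, add k l = k * l := by
  obtain ⟨φ, hφ, hi⟩ := nilForm h L hn
  refine ⟨_, hφ.br, ?_, ?_⟩
  · intro g x y
    simp only [map_mul, hi]
  · intro k hk l
    simp [hφ.left_center k hk]

open scoped commutatorElement IsMulCommutative

/-- Elements of `p`-power order. -/
def PE {G : Type*} [Group G] (p : ℕ) (x : G) : Prop := ∃ k : ℕ, x ^ p ^ k = 1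

theorem PE.eq_one {G : Type*} [Group G] {p n : ℕ} {x : G} (h : PE p x) (hc : Nat.Coprime p n)
    (hx : x ^ n = 1) : x = 1 := by
  obtain ⟨k, hk⟩ := h
  have h1 := orderOf_dvd_of_pow_eq_one hk
  have h2 := orderOf_dvd_of_pow_eq_one hx
  have := Nat.Coprime.eq_one_of_dvd (Nat.Coprime.coprime_dvd_left h1 (hc.pow_left k)) h2
  exact orderOf_eq_one_iff.1 this

theorem PE.conj {G : Type*} [Group G] {p : ℕ} {x : G} (h : PE p x) (g : G) :
    PE p (g * x * g⁻¹) := by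
  obtain ⟨k, hk⟩ := h
  exact ⟨k, by rw [conj_pow, hk]; simp⟩

/-- The `p`-elements commuting with all `p`-elements. -/
def EE (p : ℕ) (G : Type*) [Group G] : Subgroup G where
  carrier := {t | PE p t ∧ ∀ s, PE p s → t * s = s * t}
  one_mem' := ⟨⟨0, by simp⟩, by simp⟩
  mul_mem' := by
    rintro a b ⟨ha, ha'⟩ ⟨hb, hb'⟩
    refine ⟨?_, fun s hs => ?_⟩
    · have hab : Commute a b := ha' b hb
      obtain ⟨k, hk⟩ := ha
      obtain ⟨l, hl⟩ := hb
      refine ⟨k + l, ?_⟩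
      rw [hab.mul_pow, pow_add, pow_mul, hk, one_pow, one_mul, mul_comm, pow_mul, hl, one_pow]
    · exact (Commute.mul_left (ha' s hs) (hb' s hs) : Commute (a * b) s)
  inv_mem' := by
    rintro a ⟨⟨k, hk⟩, ha'⟩
    refine ⟨⟨k, by rw [inv_pow, hk, inv_one]⟩, fun s hs => ?_⟩
    exact (Commute.inv_left (ha' s hs) : Commute a⁻¹ s)

theorem mem_EE {p : ℕ} {G : Type*} [Group G] {t : G} :
    t ∈ EE p G ↔ PE p t ∧ ∀ s, PE p s → t * s = s * t := Iff.rfl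

instance EE_normal (p : ℕ) (G : Type*) [Group G] : (EE p G).Normal := by
  refine ⟨fun t ht g => ?_⟩
  rw [mem_EE] at *
  refine ⟨ht.1.conj g, fun s hs => ?_⟩
  have := ht.2 _ (hs.conj g⁻¹)
  simp only [inv_inv] at this
  have h2 := congrArg (fun x => g * x * g⁻¹) this
  simpa [mul_assoc] using h2

instance EE_comm (p : ℕ) (G : Type*) [Group G] : IsMulCommutative (EE p G) :=
  ⟨⟨fun a b => Subtype.ext ((mem_EE.1 a.2).2 b (mem_EE.1 b.2).1)⟩⟩

theorem EE_subgroup {p : ℕ} {G : Type*} [Group G] (H : Subgroup G) (t : H)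
    (ht : (t : G) ∈ EE p G) : t ∈ EE p H := by
  obtain ⟨⟨k, hk⟩, h2⟩ := mem_EE.1 ht
  refine mem_EE.2 ⟨⟨k, Subtype.ext hk⟩, fun s hs => ?_⟩
  obtain ⟨j, hj⟩ := hs
  exact Subtype.ext (h2 s ⟨j, congrArg Subtype.val hj⟩)

theorem card_split (p : ℕ) (hp : p.Prime) (n : ℕ) (hn : n ≠ 0) :
    ∃ a m, n = p ^ a * m ∧ Nat.Coprime p m := by
  obtain ⟨a, m, h1, h2⟩ := Nat.exists_eq_pow_mul_and_not_dvd hn p hp.ne_one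
  exact ⟨a, m, h2, (Nat.Prime.coprime_iff_not_dvd hp).2 h1⟩

theorem EE_centralizes {p : ℕ} (hp : p.Prime) {G : Type*} [Group G] [Finite G] (L : Subgroup G)
    [L.Normal] (hc : Cl2 L) {t : G} (ht : t ∈ EE p G) {l : G} (hl : l ∈ L) : t * l = l * t := by
  obtain ⟨a, n, hn, hcop⟩ := card_split p hp (Nat.card L) Nat.card_pos.ne'
  have hcL : ∀ u ∈ EE p G, ∀ v ∈ L, ⁅u, v⁆ ∈ L := by
    intro u _ v hv
    rw [commutatorElement_def]
    exact L.mul_mem (Subgroup.Normal.conj_mem inferInstance v hv u) (L.inv_mem hv)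
  have hcE : ∀ u ∈ EE p G, ∀ v : G, ⁅u, v⁆ ∈ EE p G := by
    intro u hu v
    have : ⁅u, v⁆ = u * (v * u⁻¹ * v⁻¹) := by simp [commutatorElement_def, mul_assoc]
    rw [this]
    exact (EE p G).mul_mem hu (Subgroup.Normal.conj_mem inferInstance _ ((EE p G).inv_mem hu) v)
  have hln : PE p (l ^ n) := by
    refine ⟨a, ?_⟩
    have : (⟨l, hl⟩ : L) ^ Nat.card L = 1 := pow_card_eq_one'
    have := congrArg Subtype.val this
    rw [← pow_mul, mul_comm, ← hn]
    exact this
  obtain ⟨c, hcdef⟩ : ∃ c, c = ⁅t, l⁆ := ⟨_, rfl⟩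
  have cL : c ∈ L := hcdef ▸ hcL t ht l hl
  have cE : c ∈ EE p G := hcdef ▸ hcE t ht l
  have h1 : ⁅c, l⁆ = 1 := by
    refine PE.eq_one (mem_EE.1 (hcE c cE l)).1 hcop ?_
    have e1 := hc.pow_right ⟨c, cL⟩ ⟨l, hl⟩ n
    have e2 := congrArg Subtype.val e1
    have e3 : ⁅c, l ^ n⁆ = ⁅c, l⁆ ^ n := by
      simpa [commutatorElement_def] using e2
    rw [← e3, commutatorElement_eq_one_iff_mul_comm]
    exact (mem_EE.1 cE).2 _ hln
  have h2 : Commute c l := by rwa [commutatorElement_eq_one_iff_commute] at h1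
  have h3 : t * l * t⁻¹ = c * l := by rw [hcdef]; simp [commutatorElement_def, mul_assoc]
  have h4 : t * l ^ n * t⁻¹ = l ^ n := by
    rw [(mem_EE.1 ht).2 _ hln, mul_inv_cancel_right]
  rw [← conj_pow, h3, h2.mul_pow, mul_eq_right] at h4
  have h5 : c = 1 := PE.eq_one (mem_EE.1 cE).1 hcop h4
  rw [hcdef, commutatorElement_eq_one_iff_mul_comm] at h5
  exact h5

theorem derived_mem_EE {p : ℕ} (hp : p.Prime) {G : Type*} [Group G] [Finite G] (h : Good G)
    (L : Subgroup G) [L.Normal] (hn : Group.IsNilpotent L) (k : L) (hk : k ∈ commutator L)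
    (hkp : PE p k) : (k : G) ∈ EE p G := by
  have : Fact p.Prime := ⟨hp⟩
  have hc := (h.subgroup L).cl2 hn
  have kp : PE p (k : G) := by
    obtain ⟨j, hj⟩ := hkp
    exact ⟨j, congrArg Subtype.val hj⟩
  refine mem_EE.2 ⟨kp, fun s hs => ?_⟩
  obtain ⟨a, n, hn', hcop⟩ := card_split p hp (Nat.card L) Nat.card_pos.ne'
  have hsp : IsPGroup p (Subgroup.zpowers s) := by
    obtain ⟨j, hj⟩ := hs
    intro ⟨y, hy⟩
    obtain ⟨i, rfl⟩ := Subgroup.mem_zpowers_iff.1 hy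
    refine ⟨j, ?_⟩
    ext
    simp only [Subgroup.coe_pow, Subgroup.coe_one]
    rw [← zpow_natCast, ← zpow_mul, mul_comm, zpow_mul, zpow_natCast, hj, one_zpow]
  obtain ⟨S, hS⟩ := hsp.exists_le_sylow
  have hsS := hS (Subgroup.mem_zpowers s)
  have P : Sylow p L := default
  have hPn : (P : Subgroup L).Normal := inferInstance
  have hPc := Sylow.characteristic_of_normal P hPn
  have hPG : ((P : Subgroup L).map L.subtype).Normal := ConjAct.normal_of_characteristic_of_normal
  have hPS : (P : Subgroup L).map L.subtype ≤ S :=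
    IsPGroup.le_sylow_of_normal (IsPGroup.map P.2 L.subtype) S
  obtain ⟨e, he1, he2⟩ := Nat.chineseRemainder (hcop.pow_left a) 1 0
  have hx : ∀ x : L, ((x ^ e : L) : G) ∈ (S : Subgroup G) := by
    intro x
    apply hPS
    refine ⟨x ^ e, mem_sylow_of_normal P hPn (k := a) ?_, rfl⟩
    obtain ⟨e', rfl⟩ := Nat.modEq_zero_iff_dvd.1 he2
    rw [← pow_mul, show n * e' * p ^ a = (p ^ a * n) * e' by ring, ← hn', pow_mul,
      pow_card_eq_one', one_pow]
  have hcen : commutator L ≤ Subgroup.center L := by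
    rw [commutator_eq_closure, Subgroup.closure_le]
    rintro _ ⟨x, y, rfl⟩
    exact hc x y
  have key : Commute ((k ^ (e * e) : L) : G) s := by
    clear hkp kp
    rw [commutator_eq_closure] at hk hcen
    induction hk using Subgroup.closure_induction with
    | mem x hx' =>
      obtain ⟨u, v, rfl⟩ := hx'
      rw [pow_mul, ← hc.pow_left, ← hc.pow_right]
      have := (h.cl p hp S S.2).commute ⟨_, hx u⟩ ⟨_, hx v⟩ ⟨s, hsS⟩
      have := congrArg Subtype.val this.eq
      rw [commute_iff_eq]
      simpa [commutatorElement_def] using this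
    | one => simp
    | mul x y hx' hy ihx ihy =>
      have : Commute x y := (Subgroup.mem_center_iff.1 (hcen hx') y).symm
      rw [this.mul_pow, Subgroup.coe_mul]
      exact Commute.mul_left ihx ihy
    | inv x hx' ih =>
      rw [inv_pow, Subgroup.coe_inv]
      exact ih.inv_left
  have hka : k ^ p ^ a = 1 := by
    refine PE.eq_one (p := p) (n := n) ?_ hcop ?_
    · obtain ⟨j, hj⟩ := hkp
      exact ⟨j, by rw [← pow_mul, mul_comm, pow_mul, hj, one_pow]⟩
    · rw [← pow_mul, ← hn', pow_card_eq_one']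
  have hke : k ^ (e * e) = k := by
    have : (e * e) ≡ 1 [MOD p ^ a] := by simpa using he1.mul he1
    have h2 := this.of_dvd (orderOf_dvd_of_pow_eq_one hka)
    rw [pow_eq_pow_iff_modEq.2 h2, pow_one]
  rw [hke] at key
  exact key.eq

theorem fixed_mem_derived {G : Type*} [Group G] [Finite G] (L Q : Subgroup G) [L.Normal]
    (hLQ : L ≤ ⁅L, Q⁆) (hcop : Nat.Coprime (Nat.card L) (Nat.card Q)) (k : L)
    (hk : ∀ x ∈ Q, x * (k : G) = k * x) : k ∈ commutator L := by
  have : Fintype Q := Fintype.ofFinite _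
  let ψ : L →* Abelianization L :=
    { toFun := fun l => ∏ x : Q, Abelianization.of (MulAut.conjNormal (x : G) l)
      map_one' := by simp
      map_mul' := by intro a b; simp [Finset.prod_mul_distrib] }
  have hψ : ∀ l, ψ l = ∏ x : Q, Abelianization.of (MulAut.conjNormal (x : G) l) := fun _ => rfl
  clear_value ψ
  have hinv : ∀ (y : Q) (l : L), ψ (MulAut.conjNormal (y : G) l) = ψ l := by
    intro y l
    rw [hψ, hψ l, ← Equiv.prod_comp (Equiv.mulRight y)
      (fun x : Q => Abelianization.of (MulAut.conjNormal (x : G) l))]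
    apply Finset.prod_congr rfl
    intro x _
    simp
  have hle : ⁅L, Q⁆ ≤ ψ.ker.map L.subtype := by
    rw [Subgroup.commutator_le]
    intro l hl y hy
    refine ⟨⟨l, hl⟩ * MulAut.conjNormal y (⟨l, hl⟩ : L)⁻¹, ?_, ?_⟩
    · rw [SetLike.mem_coe, MonoidHom.mem_ker, map_mul, hinv ⟨y, hy⟩, ← map_mul, mul_inv_cancel,
        map_one]
    · simp [commutatorElement_def, mul_assoc]
  have h1 : ψ k = 1 := by
    obtain ⟨k', hk', e⟩ := hle (hLQ k.2)
    have : k' = k := Subtype.ext e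
    rw [← this]
    exact hk'
  have h2 : ψ k = Abelianization.of k ^ Nat.card Q := by
    rw [hψ, Nat.card_eq_fintype_card, ← Finset.card_univ, ← Finset.prod_const]
    apply Finset.prod_congr rfl
    intro x _
    congr 1
    ext
    simp [hk x x.2]
  rw [h2] at h1
  have h3 : Abelianization.of k ^ Nat.card L = 1 := by
    rw [← map_pow, pow_card_eq_one', map_one]
  have h4 : Abelianization.of k = 1 := by
    have := Nat.Coprime.eq_one_of_dvd (Nat.Coprime.coprime_dvd_left
      (orderOf_dvd_of_pow_eq_one h3) hcop) (orderOf_dvd_of_pow_eq_one h1)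
    exact orderOf_eq_one_iff.1 this
  rw [← MonoidHom.mem_ker, Abelianization.ker_of] at h4
  exact h4

theorem EE_decomp {p : ℕ} {G : Type*} [Group G] [Finite G] (D Q : Subgroup G)
    (hcop : Nat.Coprime p (Nat.card Q)) (hD : ∀ r ∈ EE p G, ∀ x ∈ Q, ⁅r, x⁆ ∈ D)
    (t : G) (ht : t ∈ EE p G) :
    ∃ l h : G, t = l * h ∧ l ∈ D ∧ l ∈ EE p G ∧ h ∈ EE p G ∧ ∀ x ∈ Q, x * h = h * x := by
  have : Fintype Q := Fintype.ofFinite _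
  obtain ⟨r, hr⟩ : ∃ r : EE p G, r ^ Nat.card Q = ⟨t, ht⟩ := by
    obtain ⟨k, hk⟩ := (mem_EE.1 ht).1
    obtain ⟨e, he1, he2⟩ := Nat.chineseRemainder (hcop.pow_left k) 1 0
    obtain ⟨e', rfl⟩ := Nat.modEq_zero_iff_dvd.1 he2
    refine ⟨⟨t, ht⟩ ^ e', Subtype.ext ?_⟩
    simp only [Subgroup.coe_pow]
    rw [← pow_mul, mul_comm]
    have h2 := he1.of_dvd (orderOf_dvd_of_pow_eq_one hk)
    rw [pow_eq_pow_iff_modEq.2 h2, pow_one]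
  let h : EE p G := ∏ x : Q, MulAut.conjNormal (x : G) r
  let l : EE p G := ∏ x : Q, (r * (MulAut.conjNormal (x : G) r)⁻¹)
  refine ⟨l, h, ?_, ?_, l.2, h.2, ?_⟩
  · have : l * h = ⟨t, ht⟩ := by
      rw [← hr, Nat.card_eq_fintype_card, ← Finset.card_univ, ← Finset.prod_const,
        ← Finset.prod_mul_distrib]
      simp
    exact (congrArg Subtype.val this).symm
  · have : l ∈ D.subgroupOf (EE p G) := by
      apply Subgroup.prod_mem
      intro x _
      rw [Subgroup.mem_subgroupOf]
      have := hD r r.2 x x.2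
      simpa [commutatorElement_def, mul_assoc] using this
    exact this
  · intro x hx
    have : MulAut.conjNormal x h = h := by
      show MulAut.conjNormal x (∏ y : Q, MulAut.conjNormal (y : G) r) = _
      rw [map_prod]
      show _ = ∏ y : Q, MulAut.conjNormal (y : G) r
      rw [← Equiv.prod_comp (Equiv.mulLeft (⟨x, hx⟩ : Q))
        (fun y : Q => MulAut.conjNormal (y : G) r)]
      apply Finset.prod_congr rfl
      intro y _
      simp
    have := congrArg Subtype.val this
    rw [MulAut.conjNormal_apply] at this
    exact mul_inv_eq_iff_eq_mul.1 this

open scoped commutatorElement IsMulCommutative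

theorem nilp_le {G : Type*} [Group G] {A B : Subgroup G} (hAB : A ≤ B)
    (hB : Group.IsNilpotent B) : Group.IsNilpotent A :=
  (Group.isNilpotent_congr (Subgroup.subgroupOfEquivOfLe hAB)).1 (Subgroup.isNilpotent _)

/-- The elements of order prime to `q` in a group of class at most two. -/
def qPrime {L : Type*} [Group L] (hc : Cl2 L) (q : ℕ) : Subgroup L where
  carrier := {x | ∃ m, Nat.Coprime q m ∧ x ^ m = 1}
  one_mem' := ⟨1, by simp, by simp⟩
  mul_mem' := by
    rintro a b ⟨m, hm, ha⟩ ⟨n, hn, hb⟩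
    obtain ⟨r, hr⟩ : ∃ r, r = m * n := ⟨_, rfl⟩
    have har : a ^ r = 1 := by rw [hr, pow_mul, ha, one_pow]
    have hbr : b ^ r = 1 := by rw [hr, mul_comm, pow_mul, hb, one_pow]
    have hqr : Nat.Coprime q r := hr ▸ hm.mul_right hn
    refine ⟨r * r, hqr.mul_right hqr, ?_⟩
    have hcr : ⁅b, a⁆ ^ r = 1 := by rw [← hc.pow_left, hbr]; simp
    have hd : r ∣ (r * r).choose 2 := by
      rw [Nat.choose_two_right]
      rcases Nat.even_or_odd' r with ⟨c, hc | hc⟩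
      · refine ⟨c * (r * r - 1), ?_⟩
        apply Nat.div_eq_of_eq_mul_left (by norm_num)
        calc r * r * (r * r - 1) = r * (2 * c) * (r * r - 1) := by rw [← hc]
          _ = _ := by ring
      · have : ∃ d, r * r - 1 = 2 * d := by
          refine ⟨2 * c * c + 2 * c, ?_⟩
          rw [hc]
          have : (2 * c + 1) * (2 * c + 1) = 2 * (2 * c * c + 2 * c) + 1 := by ring
          omega
        obtain ⟨d, hd⟩ := this
        rw [hd]
        refine ⟨r * d, ?_⟩
        apply Nat.div_eq_of_eq_mul_left (by norm_num)
        ring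
    obtain ⟨d, hd⟩ := hd
    rw [hc.mul_pow, hd, pow_mul, pow_mul, pow_mul, har, hbr, hcr]
    simp
  inv_mem' := by
    rintro a ⟨m, hm, ha⟩
    exact ⟨m, hm, by rw [inv_pow, ha, inv_one]⟩

theorem qPrime_card {L : Type*} [Group L] [Finite L] (hc : Cl2 L) {q : ℕ} (hq : q.Prime) :
    Nat.Coprime q (Nat.card (qPrime hc q)) := by
  rw [Nat.Prime.coprime_iff_not_dvd hq]
  intro hd
  have : Fact q.Prime := ⟨hq⟩
  obtain ⟨x, hx⟩ := exists_prime_orderOf_dvd_card' q hd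
  obtain ⟨m, hm, hxm⟩ := x.2
  have h1 : x ^ m = 1 := Subtype.ext hxm
  have h2 := orderOf_dvd_of_pow_eq_one h1
  rw [hx] at h2
  have := Nat.Coprime.eq_one_of_dvd hm h2
  exact hq.ne_one this

/-- The properties of a candidate pair. -/
structure Cand {G : Type*} [Group G] (q : ℕ) (Q L : Subgroup G) : Prop where
  normal : L.Normal
  nilp : Group.IsNilpotent L
  cop : Nat.Coprime q (Nat.card L)
  sup : (L ⊔ Q).Normal

theorem exists_cand {G : Type*} [Group G] [Finite G] (h : Good G) (hsol : Group.IsSolvable G)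
    (hnn : ¬ Group.IsNilpotent G) :
    ∃ q : ℕ, q.Prime ∧ ∃ Q : Subgroup G, IsPGroup q Q ∧ ¬ Q.Normal ∧ ∃ L, Cand q Q L := by
  classical
  have hex : ∃ n, Group.IsNilpotent (derivedSeries G n) := by
    obtain ⟨n, hn⟩ := (Group.isSolvable_def G).1 hsol
    refine ⟨n, ?_⟩
    rw [hn]
    infer_instance
  obtain ⟨i, hi1, hi2⟩ : ∃ i, ¬ Group.IsNilpotent (derivedSeries G i) ∧
      Group.IsNilpotent (derivedSeries G (i + 1)) := by
    have h0 : Nat.find hex ≠ 0 := by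
      intro h0
      have := Nat.find_spec hex
      rw [h0, derivedSeries_zero] at this
      exact hnn ((Group.isNilpotent_congr Subgroup.topEquiv).1 this)
    obtain ⟨i, hi⟩ := Nat.exists_eq_succ_of_ne_zero h0
    exact ⟨i, Nat.find_min hex (by omega), by rw [← Nat.succ_eq_add_one, ← hi]; exact Nat.find_spec hex⟩
  have hM'n : (derivedSeries G (i + 1)).Normal := derivedSeries_normal _ _
  have hMn : (derivedSeries G i).Normal := derivedSeries_normal _ _
  rw [derivedSeries_succ] at hi2 hM'n
  generalize derivedSeries G i = M at *
  obtain ⟨M', hM'⟩ : ∃ M', M' = ⁅M, M⁆ := ⟨_, rfl⟩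
  rw [← hM'] at hi2 hM'n
  have hM'M : M' ≤ M := hM' ▸ Subgroup.commutator_le_left M M
  rw [Group.isNilpotent_of_finite_tfae.out 0 3 rfl rfl] at hi1
  push Not at hi1
  obtain ⟨q, hq, Q₀, hQ₀⟩ := hi1
  obtain ⟨Q, hQ⟩ : ∃ Q, Q = (Q₀ : Subgroup M).map M.subtype := ⟨_, rfl⟩
  have hQM : Q ≤ M := by rw [hQ]; exact Subgroup.map_subtype_le _
  have hQ' : (Q₀ : Subgroup M) = Q.subgroupOf M := by
    rw [hQ, Subgroup.subgroupOf, Subgroup.comap_map_eq_self_of_injective M.subtype_injective]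
  have hc : Cl2 M' := (h.subgroup M').cl2 hi2
  refine ⟨q, hq.out, Q, hQ ▸ Q₀.2.map _, ?_, (qPrime hc q).map M'.subtype, ?_⟩
  · intro hn
    apply hQ₀
    rw [hQ']
    infer_instance
  have hchar : (qPrime hc q).Characteristic := by
    rw [Subgroup.characteristic_iff_le_comap]
    rintro φ x ⟨m, hm, hx⟩
    exact ⟨m, hm, by rw [MulEquiv.coe_toMonoidHom, ← map_pow, hx, map_one]⟩
  have hnorm : ((qPrime hc q).map M'.subtype).Normal := ConjAct.normal_of_characteristic_of_normal
  have hsupn : (M' ⊔ Q).Normal := by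
    have hx : ∀ g : G, ∀ x ∈ Q, g * x * g⁻¹ ∈ M' ⊔ Q := by
      intro g x hx
      have hxM := hQM hx
      open scoped Pointwise in
      obtain ⟨m, hm⟩ := MulAction.exists_smul_eq M Q₀ ((MulAut.conjNormal g : MulAut M) • Q₀)
      have h1 : MulAut.conjNormal g (⟨x, hxM⟩ : M) ∈
          ((((MulAut.conjNormal g : MulAut M) • Q₀ : Sylow q M)) : Subgroup M) := by
        rw [Sylow.pointwise_smul_def]
        refine Subgroup.smul_mem_pointwise_smul _ (MulAut.conjNormal g : MulAut M) _ ?_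
        rw [hQ']
        exact hx
      rw [← hm, Sylow.coe_subgroup_smul, Subgroup.mem_smul_pointwise_iff_exists] at h1
      obtain ⟨y, hy, hyx⟩ := h1
      have h2 := congrArg Subtype.val hyx
      simp at h2
      rw [← h2]
      have h3 : (m : G) * y * (m : G)⁻¹ = ⁅(m : G), (y : G)⁆ * y := by
        simp [commutatorElement_def, mul_assoc]
      rw [h3]
      refine Subgroup.mul_mem_sup ?_ ?_
      · rw [hM']
        exact Subgroup.commutator_mem_commutator m.2 y.2
      · rw [hQ]
        exact ⟨y, hy, rfl⟩
    refine ⟨fun z hz g => ?_⟩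
    obtain ⟨a, ha, b, hb, rfl⟩ := Subgroup.mem_sup_of_normal_left.1 hz
    have : g * (a * b) * g⁻¹ = (g * a * g⁻¹) * (g * b * g⁻¹) := by simp [mul_assoc]
    rw [this]
    exact Subgroup.mul_mem _ (Subgroup.mem_sup_left (hM'n.conj_mem a ha g)) (hx g b hb)
  have hsup : (qPrime hc q).map M'.subtype ⊔ Q = M' ⊔ Q := by
    apply le_antisymm
    · exact sup_le_sup_right (Subgroup.map_subtype_le _) _
    · refine sup_le ?_ le_sup_right
      intro x hx
      obtain ⟨a, n, hn', hcop⟩ := card_split q hq.out (Nat.card M') Nat.card_pos.ne'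
      have P : Sylow q M' := default
      have hPn : (P : Subgroup M').Normal := inferInstance
      have hPc := Sylow.characteristic_of_normal P hPn
      have hPG : ((P : Subgroup M').map M'.subtype).Normal :=
        ConjAct.normal_of_characteristic_of_normal
      have hPM : (P : Subgroup M').map M'.subtype ≤ M := (Subgroup.map_subtype_le _).trans hM'M
      have hPQ : (P : Subgroup M').map M'.subtype ≤ Q := by
        have : ((P : Subgroup M').map M'.subtype).subgroupOf M ≤ Q₀ := by
          apply IsPGroup.le_sylow_of_normal
          exact (P.2.map M'.subtype).comap_subtype
        rw [hQ'] at this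
        intro y hy
        exact this (x := ⟨y, hPM hy⟩) hy
      obtain ⟨e, he1, he2⟩ := Nat.chineseRemainder (hcop.pow_left a) 1 0
      obtain ⟨e', rfl⟩ := Nat.modEq_zero_iff_dvd.1 he2
      have hxc : (⟨x, hx⟩ : M') ^ (q ^ a * n) = 1 := by rw [← hn']; exact pow_card_eq_one'
      have h1 : x ^ (n * e') ∈ Q := by
        apply hPQ
        refine ⟨⟨x, hx⟩ ^ (n * e'), mem_sylow_of_normal P hPn (k := a) ?_, rfl⟩
        rw [← pow_mul, show n * e' * q ^ a = (q ^ a * n) * e' by ring, pow_mul, hxc, one_pow]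
      have h2 : x * (x ^ (n * e'))⁻¹ ∈ (qPrime hc q).map M'.subtype := by
        refine ⟨⟨x, hx⟩ * (⟨x, hx⟩ ^ (n * e'))⁻¹, ⟨n, hcop, ?_⟩, rfl⟩
        obtain ⟨z, hz⟩ : ∃ z : M', z = ⟨x, hx⟩ := ⟨_, rfl⟩
        rw [← hz] at hxc ⊢
        have hcom : Commute z (z ^ (n * e'))⁻¹ := ((Commute.refl z).pow_right _).inv_right
        rw [hcom.mul_pow, inv_pow, mul_inv_eq_one, ← pow_mul, mul_comm (n * e'), pow_mul]
        have h3 : (z ^ n) ^ q ^ a = 1 := by rw [← pow_mul, mul_comm, hxc]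
        have h4 := he1.of_dvd (orderOf_dvd_of_pow_eq_one h3)
        rw [pow_eq_pow_iff_modEq.2 h4, pow_one]
      have := Subgroup.mul_mem_sup h2 h1
      simpa using this
  refine ⟨hnorm, nilp_le (Subgroup.map_subtype_le _) hi2, ?_, hsup ▸ hsupn⟩
  rw [Subgroup.card_map_of_injective M'.subtype_injective]
  exact qPrime_card hc hq.out

theorem exists_LQ {G : Type*} [Group G] [Finite G] (h : Good G) (hsol : Group.IsSolvable G)
    (hnn : ¬ Group.IsNilpotent G) :
    ∃ q : ℕ, q.Prime ∧ ∃ Q L : Subgroup G, IsPGroup q Q ∧ ¬ Q.Normal ∧ Cand q Q L ∧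
      L ≤ ⁅L, Q⁆ ∧ ∀ g : G, ∃ l ∈ L, ∃ n ∈ Subgroup.normalizer (Q : Set G), g = l * n := by
  obtain ⟨q, hq, Q, hQp, hQn, hL⟩ := exists_cand h hsol hnn
  obtain ⟨L, hL, hmin⟩ := exists_minimal_of_wellFoundedLT _ hL
  have hF : Fact q.Prime := ⟨hq⟩
  have hLn := hL.normal
  have hRn := hL.sup
  have hfr : ∀ g : G, ∃ l ∈ L, ∃ n ∈ Subgroup.normalizer (Q : Set G), g = l * n := by
    let P : Sylow q (L ⊔ Q : Subgroup G) :=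
      { Q.subgroupOf (L ⊔ Q) with
        isPGroup' := hQp.comap_subtype
        is_maximal' := by
          intro S hS hQS
          refine le_antisymm ?_ hQS
          intro x hx
          obtain ⟨l, hl, y, hy, e⟩ := Subgroup.mem_sup_of_normal_left.1 x.2
          obtain ⟨y', hy'⟩ : ∃ y' : (L ⊔ Q : Subgroup G), y' = ⟨y, Subgroup.mem_sup_right hy⟩ :=
            ⟨_, rfl⟩
          have hyS : y' ∈ S := hQS (by rw [hy']; exact hy)
          have h1 : x * y'⁻¹ ∈ S := S.mul_mem hx (S.inv_mem hyS)
          obtain ⟨k, hk⟩ := hS ⟨_, h1⟩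
          have e2 : ((x * y'⁻¹ : (L ⊔ Q : Subgroup G)) : G) = l := by
            rw [hy']; simp [← e]
          have hlp : PE q l := by
            refine ⟨k, ?_⟩
            rw [← e2]
            exact congrArg (fun z => ((z : (L ⊔ Q : Subgroup G)) : G)) (congrArg Subtype.val hk)
          have hl1 : l = 1 := by
            refine hlp.eq_one hL.cop ?_
            exact congrArg Subtype.val (pow_card_eq_one' : (⟨l, hl⟩ : L) ^ Nat.card L = 1)
          rw [hl1, one_mul] at e
          show (x : G) ∈ Q
          rw [← e]
          exact hy }
    have hP : (P : Subgroup (L ⊔ Q : Subgroup G)).map (L ⊔ Q).subtype = Q := by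
      show (Q.subgroupOf (L ⊔ Q)).map (L ⊔ Q).subtype = Q
      exact Subgroup.map_subgroupOf_eq_of_le le_sup_right
    have := Sylow.normalizer_sup_eq_top P
    rw [hP] at this
    intro g
    have hg : g ∈ L ⊔ Subgroup.normalizer (Q : Set G) := by
      have h2 : L ⊔ Subgroup.normalizer (Q : Set G) = ⊤ := by
        rw [eq_top_iff, ← this]
        exact sup_le le_sup_right (sup_le le_sup_left (Subgroup.le_normalizer.trans le_sup_right))
      rw [h2]; trivial
    obtain ⟨l, hl, n, hn, e⟩ := Subgroup.mem_sup_of_normal_left.1 hg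
    exact ⟨l, hl, n, hn, e.symm⟩
  refine ⟨q, hq, Q, L, hQp, hQn, hL, hmin ?_ (Subgroup.commutator_le_left L Q), hfr⟩
  have hCL := Subgroup.commutator_le_left L Q
  have hN : ∀ n ∈ Subgroup.normalizer (Q : Set G), ∀ c ∈ ⁅L, Q⁆, n * c * n⁻¹ ∈ ⁅L, Q⁆ := by
    intro n hn c hc
    have : ⁅L, Q⁆ ≤ ⁅L, Q⁆.comap (MulAut.conj n).toMonoidHom := by
      rw [Subgroup.commutator_le]
      intro l hl x hx
      show n * ⁅l, x⁆ * n⁻¹ ∈ ⁅L, Q⁆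
      have : n * ⁅l, x⁆ * n⁻¹ = ⁅n * l * n⁻¹, n * x * n⁻¹⁆ := by
        simp [commutatorElement_def, mul_assoc]
      rw [this]
      exact Subgroup.commutator_mem_commutator (hLn.conj_mem l hl n)
        ((Subgroup.mem_normalizer_iff.1 hn x).1 hx)
    exact this hc
  have hA : ∀ a ∈ L, ∀ c ∈ ⁅L, Q⁆, a * c * a⁻¹ ∈ ⁅L, Q⁆ := by
    intro n hn c hc
    have : ⁅L, Q⁆ ≤ ⁅L, Q⁆.comap (MulAut.conj n).toMonoidHom := by
      rw [Subgroup.commutator_le]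
      intro l hl x hx
      show n * ⁅l, x⁆ * n⁻¹ ∈ ⁅L, Q⁆
      have : n * ⁅l, x⁆ * n⁻¹ = ⁅n * l, x⁆ * ⁅n, x⁆⁻¹ := by
        simp [commutatorElement_def, mul_assoc]
      rw [this]
      exact Subgroup.mul_mem _ (Subgroup.commutator_mem_commutator (L.mul_mem hn hl) hx)
        (Subgroup.inv_mem _ (Subgroup.commutator_mem_commutator hn hx))
    exact this hc
  have hCn : ⁅L, Q⁆.Normal := by
    refine ⟨fun c hc g => ?_⟩
    obtain ⟨l, hl, n, hn, rfl⟩ := hfr g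
    have := hA l hl _ (hN n hn c hc)
    simpa [mul_assoc] using this
  refine ⟨hCn, nilp_le hCL hL.nilp,
    Nat.Coprime.coprime_dvd_right (Subgroup.card_dvd_of_le hCL) hL.cop, ?_⟩
  refine ⟨fun z hz g => ?_⟩
  obtain ⟨a, ha, b, hb, rfl⟩ := Subgroup.mem_sup_of_normal_left.1 hz
  have : g * (a * b) * g⁻¹ = (g * a * g⁻¹) * (g * b * g⁻¹) := by simp [mul_assoc]
  rw [this]
  refine Subgroup.mul_mem _ (Subgroup.mem_sup_left (hCn.conj_mem a ha g)) ?_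
  obtain ⟨l, hl, n, hn, rfl⟩ := hfr g
  have hb' := (Subgroup.mem_normalizer_iff.1 hn b).1 hb
  have : l * n * b * (l * n)⁻¹ = ⁅l, n * b * n⁻¹⁆ * (n * b * n⁻¹) := by
    simp [commutatorElement_def, mul_assoc]
  rw [this]
  exact Subgroup.mul_mem_sup (Subgroup.commutator_mem_commutator hl hb') hb'

open scoped commutatorElement IsMulCommutative

theorem mem_of_prime_parts {K : Type*} [Group K] (T : Submonoid K) (n : ℕ) :
    n ≠ 0 → ∀ k : K, k ^ n = 1 →
      (∀ (j p : ℕ), p.Prime → PE p (k ^ j) → k ^ j ∈ T) → k ∈ T := by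
  induction n using Nat.recOnPosPrimePosCoprime with
  | prime_pow p a hp ha =>
    intro _ k hk h
    have := h 1 p hp ⟨a, by rw [pow_one, hk]⟩
    rwa [pow_one] at this
  | zero => intro h; exact absurd rfl h
  | one => intro _ k hk _; rw [pow_one] at hk; rw [hk]; exact T.one_mem
  | coprime a b ha hb hab iha ihb =>
    intro _ k hk h
    obtain ⟨e, he1, he2⟩ := Nat.chineseRemainder hab 1 0
    obtain ⟨f, hf1, hf2⟩ := Nat.chineseRemainder hab 0 1
    have hsum : e + f ≡ 1 [MOD a * b] := by
      rw [← Nat.modEq_and_modEq_iff_modEq_mul hab]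
      exact ⟨he1.add hf1, by simpa using he2.add hf2⟩
    have hk2 : k = k ^ e * k ^ f := by
      have h4 := hsum.of_dvd (orderOf_dvd_of_pow_eq_one hk)
      rw [← pow_add, pow_eq_pow_iff_modEq.2 h4, pow_one]
    rw [hk2]
    refine T.mul_mem (iha (by omega) _ ?_ ?_) (ihb (by omega) _ ?_ ?_)
    · obtain ⟨c, rfl⟩ := Nat.modEq_zero_iff_dvd.1 he2
      rw [← pow_mul, show b * c * a = (a * b) * c by ring, pow_mul, hk, one_pow]
    · intro j p hp
      rw [← pow_mul]
      exact h _ p hp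
    · obtain ⟨c, rfl⟩ := Nat.modEq_zero_iff_dvd.1 hf1
      rw [← pow_mul, show a * c * b = (a * b) * c by ring, pow_mul, hk, one_pow]
    · intro j p hp
      rw [← pow_mul]
      exact h _ p hp

/-- The conclusion proved by induction. -/
def Concl (G : Type*) [Group G] : Prop :=
  ∃ add : G → G → G, Br add ∧ ∀ p : ℕ, p.Prime → ∀ t ∈ EE p G, ∀ b, add t b = t * b

theorem concl_nilp {G : Type*} [Group G] [Finite G] (h : Good G) (hn : Group.IsNilpotent G) :
    Concl G := by
  have hn' : Group.IsNilpotent (⊤ : Subgroup G) :=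
    (Group.isNilpotent_congr Subgroup.topEquiv).2 hn
  obtain ⟨addL, bL, hinv, hcen⟩ := nilBr h ⊤ hn'
  have hc := (h.subgroup ⊤).cl2 hn'
  obtain ⟨add, hb, hadd⟩ := glue (⊤ : Subgroup G) ⊥
    (fun g => ⟨⟨g, trivial⟩, 1, by simp⟩) addL bL hinv (fun a b => a * b)
    ⟨fun a b => Subsingleton.elim _ _, fun a b c => Subsingleton.elim _ _,
      fun a => Subsingleton.elim _ _, fun a => ⟨1, Subsingleton.elim _ _⟩,
      fun a b c => Subsingleton.elim _ _⟩
    (by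
      intro k hk l
      have : k = 1 := Subtype.ext (Subgroup.mem_bot.1 hk)
      rw [this, bL.one_add, one_mul])
    (by
      intro k hk l
      have : k = 1 := Subtype.ext (Subgroup.mem_bot.1 hk)
      rw [this, mul_one, one_mul])
    (by intros; rfl)
  refine ⟨add, hb, fun p hp t ht b => ?_⟩
  have h1 := hadd ⟨t, trivial⟩ ⟨b, trivial⟩ 1 1
  rw [hcen] at h1
  · simpa using h1
  · rw [Subgroup.mem_center_iff]
    intro g
    exact Subtype.ext (EE_centralizes hp ⊤ hc ht g.2).symm

theorem concl_step {G : Type*} [Group G] [Finite G] (h : Good G) (hsol : Group.IsSolvable G)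
    (hnn : ¬ Group.IsNilpotent G)
    (ih : ∀ H : Subgroup G, H ≠ ⊤ → Concl H) : Concl G := by
  obtain ⟨q, hq, Q, L, hQp, hQn, hC, hLQ, hfr⟩ := exists_LQ h hsol hnn
  have hF : Fact q.Prime := ⟨hq⟩
  have hLn := hC.normal
  have hRn := hC.sup
  have hc : Cl2 L := (h.subgroup L).cl2 hC.nilp
  obtain ⟨H, hH⟩ : ∃ H, H = Subgroup.normalizer (Q : Set G) := ⟨_, rfl⟩
  rw [← hH] at hfr
  have hHne : H ≠ ⊤ := by
    rw [hH]
    exact fun e => hQn (Subgroup.normalizer_eq_top_iff.1 e)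
  obtain ⟨addH, bH, hEH⟩ := ih H hHne
  obtain ⟨addL, bL, hinv, hcenL⟩ := nilBr h L hC.nilp
  have hQPE : ∀ x ∈ Q, PE q x := by
    intro x hx
    obtain ⟨k, hk⟩ := hQp ⟨x, hx⟩
    exact ⟨k, congrArg Subtype.val hk⟩
  obtain ⟨m, hm⟩ := IsPGroup.iff_card.1 hQp
  have hcomH : ∀ t : G, (∀ x ∈ Q, x * t = t * x) → t ∈ H := by
    intro t ht
    have ht' : ∀ x ∈ Q, t * x * t⁻¹ = x := fun x hx => by rw [← ht x hx, mul_inv_cancel_right]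
    rw [hH, Subgroup.mem_normalizer_iff]
    intro x
    constructor
    · intro hx
      rw [ht' x hx]; exact hx
    · intro hx
      have h2 := ht' _ hx
      have h3 : t * x * t⁻¹ = x := by
        have := mul_inv_eq_iff_eq_mul.1 h2
        rw [mul_inv_eq_iff_eq_mul]
        have h4 := mul_left_cancel (a := t) (b := t * x * t⁻¹) (c := x * t * t⁻¹)
          (by rw [this]; group)
        rw [mul_inv_cancel_right] at h4
        exact mul_inv_eq_iff_eq_mul.1 h4
      rwa [h3] at hx
  have hcen : commutator L ≤ Subgroup.center L := by
    rw [commutator_eq_closure, Subgroup.closure_le]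
    rintro _ ⟨x, y, rfl⟩
    exact hc x y
  have hKder : ∀ k : L, (k : G) ∈ H → k ∈ commutator L := by
    intro k hk
    refine fixed_mem_derived L Q hLQ ?_ k ?_
    · rw [hm]
      exact (hC.cop.pow_left m).symm
    · intro x hx
      rw [hH] at hk
      have h1 := (Subgroup.mem_normalizer_iff.1 hk x).1 hx
      obtain ⟨c, hcd⟩ : ∃ c : G, c = k * x * (k : G)⁻¹ * x⁻¹ := ⟨_, rfl⟩
      have cQ : c ∈ Q := hcd ▸ Q.mul_mem h1 (Q.inv_mem hx)
      have cL : c ∈ L := by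
        have : c = k * (x * (k : G)⁻¹ * x⁻¹) := by rw [hcd]; simp [mul_assoc]
        rw [this]
        exact L.mul_mem k.2 (hLn.conj_mem _ (L.inv_mem k.2) x)
      have c1 : c = 1 := (hQPE c cQ).eq_one hC.cop
        (congrArg Subtype.val (pow_card_eq_one' : (⟨c, cL⟩ : L) ^ Nat.card L = 1))
      rw [hcd, mul_inv_eq_one, mul_inv_eq_iff_eq_mul] at c1
      exact c1.symm
  obtain ⟨add, hb, hadd⟩ := glue L H
    (by
      intro g
      obtain ⟨l, hl, n, hn, e⟩ := hfr g
      exact ⟨⟨l, hl⟩, ⟨n, hn⟩, e⟩) addL bL hinv addH bH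
    (fun k hk l => hcenL k (hcen (hKder k hk)) l)
    (fun k hk l => (Subgroup.mem_center_iff.1 (hcen (hKder k hk)) l).symm)
    (by
      intro k hk
      let T : Submonoid H :=
        { carrier := {t | ∀ b, addH t b = t * b}
          one_mem' := fun b => by rw [bH.one_add, one_mul]
          mul_mem' := by
            intro a c ha hc b
            have : a * c = addH a c := (ha c).symm
            rw [this, bH.assoc, hc, ha, ha, mul_assoc] }
      have : k ∈ T := by
        refine mem_of_prime_parts T (Nat.card H) Nat.card_pos.ne' k pow_card_eq_one' ?_
        intro j p hp hj b
        refine hEH p hp _ ?_ b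
        apply EE_subgroup
        have h1 := derived_mem_EE hp h L hC.nilp ((⟨k, hk⟩ : L) ^ j)
          (Subgroup.pow_mem _ (hKder ⟨k, hk⟩ k.2) j)
          (by
            obtain ⟨i, hi⟩ := hj
            exact ⟨i, Subtype.ext (congrArg (fun z : H => (z : G)) hi)⟩)
        exact h1
      exact this)
  refine ⟨add, hb, fun p hp t ht b => ?_⟩
  have hdec : ∃ l r : G, t = l * r ∧ l ∈ L ∧ l ∈ EE p G ∧ r ∈ EE p G ∧
      ∀ x ∈ Q, x * r = r * x := by
    by_cases hpq : p = q
    · subst hpq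
      exact ⟨1, t, (one_mul t).symm, L.one_mem, Subgroup.one_mem _, ht,
        fun x hx => ((mem_EE.1 ht).2 x (hQPE x hx)).symm⟩
    · have hcop : Nat.Coprime p (Nat.card Q) := by
        rw [hm]
        exact Nat.Coprime.pow_right m ((Nat.coprime_primes hp hq).2 hpq)
      refine EE_decomp L Q hcop ?_ t ht
      intro r hr x hx
      have e1 : ⁅r, x⁆ = r * (x * r⁻¹ * x⁻¹) := by simp [commutatorElement_def, mul_assoc]
      have e2 : ⁅r, x⁆ = (r * x * r⁻¹) * x⁻¹ := by simp [commutatorElement_def, mul_assoc]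
      have m1 : ⁅r, x⁆ ∈ EE p G := by
        rw [e1]
        exact Subgroup.mul_mem _ hr
          ((EE_normal p G).conj_mem _ (Subgroup.inv_mem _ hr) x)
      have m2 : ⁅r, x⁆ ∈ L ⊔ Q := by
        rw [e2]
        exact Subgroup.mul_mem _ (hRn.conj_mem _ (Subgroup.mem_sup_right hx) r)
          (Subgroup.mem_sup_right (Q.inv_mem hx))
      obtain ⟨l, hl, y, hy, e⟩ := Subgroup.mem_sup_of_normal_left.1 m2
      rw [← QuotientGroup.eq_one_iff]
      have hPE : PE p ((⁅r, x⁆ : G) : G ⧸ L) := by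
        obtain ⟨k, hk⟩ := (mem_EE.1 m1).1
        exact ⟨k, by rw [← QuotientGroup.mk_pow, hk, QuotientGroup.mk_one]⟩
      refine hPE.eq_one hcop ?_
      have hl1 : ((l : G) : G ⧸ L) = 1 := (QuotientGroup.eq_one_iff l).2 hl
      have hy1 : y ^ Nat.card Q = 1 :=
        congrArg Subtype.val (pow_card_eq_one' : (⟨y, hy⟩ : Q) ^ Nat.card Q = 1)
      rw [← e, QuotientGroup.mk_mul, hl1, one_mul, ← QuotientGroup.mk_pow, hy1,
        QuotientGroup.mk_one]
  obtain ⟨l, r, rfl, hlL, hlE, hrE, hrQ⟩ := hdec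
  have hrH : r ∈ H := hcomH r hrQ
  obtain ⟨l1, hl1, n1, hn1, rfl⟩ := hfr b
  have h1 := hadd ⟨l, hlL⟩ ⟨l1, hl1⟩ ⟨r, hrH⟩ ⟨n1, hn1⟩
  rw [hcenL, hEH p hp ⟨r, hrH⟩ (EE_subgroup H ⟨r, hrH⟩ hrE)] at h1
  · simp only [Subgroup.coe_mul] at h1
    rw [h1]
    have h2 := EE_centralizes hp L hc hrE hl1
    rw [mul_assoc l l1, ← mul_assoc l1 r, ← h2]
    simp [mul_assoc]
  · rw [Subgroup.mem_center_iff]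
    intro g
    exact Subtype.ext (EE_centralizes hp L hc hlE g.2).symm

theorem concl_all.{u} (n : ℕ) : ∀ {G : Type u} [Group G] [Finite G], Nat.card G ≤ n → Good G →
    Group.IsSolvable G → Concl G := by
  induction n with
  | zero =>
    intro G _ _ hG
    have : 0 < Nat.card G := Nat.card_pos
    omega
  | succ n ih =>
    intro G _ _ hG h hsol
    by_cases hnn : Group.IsNilpotent G
    · exact concl_nilp h hnn
    · refine concl_step h hsol hnn (fun H hH => ?_)
      refine ih ?_ (h.subgroup H) inferInstance
      have h1 : Nat.card H ≠ Nat.card G := fun e => hH (Subgroup.eq_top_of_card_eq H e)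
      have h2 : Nat.card H ≤ Nat.card G := Subgroup.card_le_card_group H
      omega

theorem good_of_sylow {G : Type*} [Group G] [Finite G]
    (hSyl : ∀ p : ℕ, p.Prime → ∀ P : Sylow p G,
      Subgroup.lowerCentralSeries (P : Subgroup G) 2 = ⊥)
    (hQ8 : ∀ P : Sylow 2 G, Nonempty ((P : Subgroup G) ≃* QuaternionGroup 2)) : Good G := by
  refine ⟨fun p hp P hP => ?_, fun P hP => ?_⟩
  · obtain ⟨S, hS⟩ := hP.exists_le_sylow
    refine Cl2.of_injective (Subgroup.inclusion hS) (Subgroup.inclusion_injective hS) ?_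
    have h1 := hSyl p hp S
    intro x y
    rw [Subgroup.mem_center_iff]
    intro z
    have hz : ⁅⁅(x : G), (y : G)⁆, (z : G)⁆ ∈ Subgroup.lowerCentralSeries (S : Subgroup G) 2 :=
      Subgroup.commutator_mem_commutator (Subgroup.commutator_mem_commutator x.2 y.2) z.2
    rw [h1, Subgroup.mem_bot, commutatorElement_eq_one_iff_mul_comm] at hz
    exact Subtype.ext hz.symm
  · obtain ⟨S, hS⟩ := hP.exists_le_sylow
    obtain ⟨e⟩ := hQ8 S
    exact ⟨e.toMonoidHom.comp (Subgroup.inclusion hS),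
      e.injective.comp (Subgroup.inclusion_injective hS)⟩

theorem isIYB_of_sylow_two_quaternion
    {G : Type*} [Group G] [Finite G] (hsol : IsSolvable G)
    (hSyl : ∀ p : ℕ, p.Prime → ∀ P : Sylow p G,
      lowerCentralSeries (P : Subgroup G) 2 = ⊥)
    (hQ8 : ∀ P : Sylow 2 G, Nonempty ((P : Subgroup G) ≃* QuaternionGroup 2)) :
    IsIYB G := by
  obtain ⟨add, hb, -⟩ := concl_all _ le_rfl (good_of_sylow hSyl hQ8) hsol
  exact hb.isIYB
end

section
/- Let G be a finite soluble group with all Sylow subgroups of nilpotency class at most 2 that is 2-nilpotent (has a normal 2-complement). Then G is an IYB-group. -/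
/-- unipotent of order prime to p is trivial -/
lemma unip_eq_one {E : Type*} [Ring E] (p : ℕ) [Fact p.Prime] [CharP E p] (z : E) (m : ℕ)
    (hm : m.Coprime p) (hz : z ^ m = 1) (n : ℕ) (h : (z - 1) ^ n = 0) : z = 1 := by
  have hp : p.Prime := Fact.out
  have h1 : (z - 1) ^ p ^ n = 0 := by
    exact pow_eq_zero_of_le (Nat.lt_pow_self hp.one_lt).le h
  rw [sub_pow_char_pow_of_commute (p := p) n (Commute.one_right z), one_pow, sub_eq_zero] at h1
  have h2 : orderOf z ∣ m := orderOf_dvd_of_pow_eq_one hz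
  have h3 : orderOf z ∣ p ^ n := orderOf_dvd_of_pow_eq_one h1
  have h4 : orderOf z = 1 := Nat.eq_one_of_dvd_coprimes (Nat.Coprime.pow_right n hm) h2 h3
  exact orderOf_eq_one_iff.mp h4

lemma two_cancel {E : Type*} [Ring E] (p : ℕ) [Fact p.Prime] [CharP E p] (hp2 : p ≠ 2)
    (w : E) (h : 2 * w = 0) : w = 0 := by
  have hp : p.Prime := Fact.out
  obtain ⟨k, hk⟩ := hp.odd_of_ne_two hp2
  have h1 : (p : E) * w = 0 := by rw [CharP.cast_eq_zero]; simp
  rw [hk] at h1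
  push_cast at h1
  have : (2 * (k:E) + 1) * w = k * (2 * w) + w := by
    have : (2:E) * k = k * 2 := (Nat.cast_commute k (2:E)).symm.eq
    rw [this]; noncomm_ring
  rw [this, h] at h1
  simpa using h1

/-- s = z + z inverse is preserved -/
lemma class_two_step {E : Type*} [Ring E] (p : ℕ) [Fact p.Prime] [CharP E p] (hp2 : p ≠ 2)
    (z c z' c' : E) (m : ℕ) (hm : m.Coprime p) (hodd : Odd m) (hc : c ^ m = 1)
    (hzz : z * z' = 1) (hcc : c * c' = 1) (hcc' : c' * c = 1)
    (com : Commute z c)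
    (h1 : z * c + z' * c' = z + z') (h2 : z * (c * c) + z' * (c' * c') = z + z') : c = 1 := by
  have e1 : (c - 1) * (z * z * c - 1) = 0 := by
    have : z * (z * c + z' * c') * c = z * (z + z') * c := by rw [h1]
    have l : z * (z * c + z' * c') * c = z * z * c * c + 1 := by
      calc z * (z * c + z' * c') * c = z * z * c * c + (z * z') * (c' * c) := by noncomm_ring
        _ = _ := by rw [hzz, hcc', one_mul]
    have r : z * (z + z') * c = z * z * c + c := by
      calc z * (z + z') * c = z * z * c + (z * z') * c := by noncomm_ring
        _ = _ := by rw [hzz, one_mul]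
    rw [l, r] at this
    have k : c * (z * z * c) = z * z * c * c := by
      have : Commute (z * z * c) c := (com.mul_left com).mul_left (Commute.refl c)
      exact this.eq.symm
    calc (c - 1) * (z * z * c - 1) = c * (z * z * c) - c - z * z * c + 1 := by noncomm_ring
      _ = (z * z * c * c + 1) - (z * z * c + c) := by rw [k]; abel
      _ = 0 := by rw [this]; abel
  have e2 : (c + 1) * ((c - 1) * (z * z * (c * c) - 1)) = 0 := by
    have : z * (z * (c * c) + z' * (c' * c')) * (c * c) = z * (z + z') * (c * c) := by rw [h2]
    have l : z * (z * (c * c) + z' * (c' * c')) * (c * c) = z * z * c * c * c * c + 1 := by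
      calc z * (z * (c * c) + z' * (c' * c')) * (c * c)
          = z * z * c * c * c * c + (z * z') * (c' * (c' * c) * c) := by noncomm_ring
        _ = _ := by rw [hzz, hcc', mul_one, hcc', one_mul]
    have r : z * (z + z') * (c * c) = z * z * c * c + c * c := by
      calc z * (z + z') * (c * c) = z * z * c * c + (z * z') * (c * c) := by noncomm_ring
        _ = _ := by rw [hzz, one_mul]
    rw [l, r] at this
    have k : c * c * (z * z * (c * c)) = z * z * c * c * c * c := by
      have : Commute (z * z * (c * c)) (c * c) := by
        have := com.mul_right com
        exact (this.mul_left this).mul_left (Commute.refl _)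
      rw [← this.eq]; noncomm_ring
    calc (c + 1) * ((c - 1) * (z * z * (c * c) - 1))
        = c * c * (z * z * (c * c)) - c * c - z * z * c * c + 1 := by noncomm_ring
      _ = (z * z * c * c * c * c + 1) - (z * z * c * c + c * c) := by rw [k]; abel
      _ = 0 := by rw [this]; abel
  have e3 : (c - 1) * (z * z * (c * c) - 1) = 0 := by
    apply two_cancel p hp2
    obtain ⟨q, hq⟩ : ∃ q : E, q * (c + 1) = 2 := by
      have : (c - (-1)) ∣ c ^ m - (-1) ^ m := (Commute.neg_one_right c).sub_dvd_pow_sub_pow m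
      rw [hc, hodd.neg_one_pow] at this
      obtain ⟨q, hq⟩ := ((Commute.neg_one_right c).symm.sub_dvd_pow_sub_pow m)
      refine ⟨∑ i ∈ Finset.range m, c ^ i * (-1) ^ (m - 1 - i), ?_⟩
      have := (Commute.neg_one_right c).geom_sum₂_mul m
      rw [hc, hodd.neg_one_pow, sub_neg_eq_add, sub_neg_eq_add] at this
      rw [this]; norm_num
    rw [← hq, mul_assoc, e2, mul_zero]
  have e4 : (c - 1) ^ 2 = 0 := by
    have k : (c - 1) * (z * z * c) * (c - 1) = 0 := by
      calc (c - 1) * (z * z * c) * (c - 1)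
          = (c - 1) * (z * z * (c * c) - 1) - (c - 1) * (z * z * c - 1) := by noncomm_ring
        _ = 0 := by rw [e1, e3, sub_zero]
    have cm : Commute (z * z * c) (c - 1) :=
      ((com.mul_left com).mul_left (Commute.refl c)).sub_right (Commute.one_right _)
    rw [mul_assoc, cm.eq, ← mul_assoc] at k
    calc (c - 1) ^ 2 = (c - 1) * (c - 1) * (z * (z * (c * c') * z') * z') := by
          rw [hcc, mul_one, hzz, mul_one, hzz]; noncomm_ring
      _ = ((c - 1) * (c - 1) * (z * z * c)) * (c' * z' * z') := by noncomm_ring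
      _ = 0 := by rw [k, zero_mul]
  exact unip_eq_one p c m hm hc 2 e4

lemma quad_comm_step {E : Type*} [Ring E] (p : ℕ) [Fact p.Prime] [CharP E p] (hp2 : p ≠ 2)
    (a b : E) (ha : a * a = 0) (hb : b * b = 0) (m : ℕ) (hm : m.Coprime p)
    (z u : E) (hz : z = (1 - a) * (1 + b)) (hu : u = (1 + b) * (1 - a)) (hzm : z ^ m = 1)
    (hcom : Commute z u) : z = 1 := by
  set z' := (1 - b) * (1 + a) with hz'
  have hzz : z * z' = 1 := by
    rw [hz, hz']
    calc (1 - a) * (1 + b) * ((1 - b) * (1 + a))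
        = 1 - a * a - (1 - a) * (b * b) * (1 + a) := by noncomm_ring
      _ = 1 := by rw [ha, hb]; simp
  have hzz' : z' * z = 1 := by
    rw [hz, hz']
    calc (1 - b) * (1 + a) * ((1 - a) * (1 + b))
        = 1 - b * b - (1 - b) * (a * a) * (1 + b) := by noncomm_ring
      _ = 1 := by rw [ha, hb]; simp
  set u' := (1 + a) * (1 - b) with hu'
  have huu : u * u' = 1 := by
    rw [hu, hu']
    calc (1 + b) * (1 - a) * ((1 + a) * (1 - b))
        = 1 - b * b - (1 + b) * (a * a) * (1 - b) := by noncomm_ring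
      _ = 1 := by rw [ha, hb]; simp
  set t := a * b + b * a with ht
  have hs : z + z' = 2 - t := by rw [hz, hz', ht, ← one_add_one_eq_two]; noncomm_ring
  have hs' : u + u' = 2 - t := by rw [hu, hu', ht, ← one_add_one_eq_two]; noncomm_ring
  have hd : (z - u) * (z - u) = t * t := by
    rw [hz, hu, ht]
    calc _ = b * a * b * a + a * b * a * b - b * (a * a) * b - a * (b * b) * a := by noncomm_ring
      _ = b * a * b * a + a * b * a * b + b * (a * a) * b + a * (b * b) * a := by
          rw [ha, hb]; simp
      _ = _ := by noncomm_ring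
  have cz' : Commute z z' := by rw [Commute, SemiconjBy, hzz, hzz']
  have cuz' : Commute u z' := by
    calc u * z' = (z' * z) * u * z' := by rw [hzz', one_mul]
      _ = z' * (z * u) * z' := by noncomm_ring
      _ = z' * u * (z * z') := by rw [hcom.eq]; noncomm_ring
      _ = z' * u := by rw [hzz, mul_one]
  have tz : t = 2 - z - z' := by rw [sub_sub, hs]; abel
  have q : (u - z) * (u - z') = 0 := by
    have h1 : u * (u + u') = u * (z + z') := by rw [hs, hs']
    rw [mul_add, huu] at h1
    calc (u - z) * (u - z') = u * u - u * z' - z * u + z * z' := by noncomm_ring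
      _ = (u * u + 1) - u * (z + z') := by rw [hzz, hcom.eq]; noncomm_ring
      _ = 0 := by rw [h1, sub_self]
  have h4 : (t * t) * (t * t) = (t * t) * ((z' - z) * (z' - z)) := by
    have h3 : t * t = (u - z) * (z' - z) := by
      rw [← hd]
      calc (z - u) * (z - u) = (u - z) * (u - z') + (u - z) * (z' - z) := by noncomm_ring
        _ = _ := by rw [q, zero_add]
    have c1 : Commute (u - z) (z' - z) :=
      (cuz'.sub_right hcom.symm).sub_left (cz'.sub_right (Commute.refl z))
    calc (t * t) * (t * t) = (u - z) * (z' - z) * ((u - z) * (z' - z)) := by rw [← h3]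
      _ = (u - z) * ((z' - z) * (u - z)) * (z' - z) := by noncomm_ring
      _ = ((z - u) * (z - u)) * ((z' - z) * (z' - z)) := by rw [← c1.eq]; noncomm_ring
      _ = _ := by rw [hd]
  have tzz : t * z = - ((z - 1) * (z - 1)) := by
    rw [tz, sub_mul, hzz']; noncomm_ring
  have ctz : Commute t z := by
    rw [tz]
    exact ((Commute.ofNat_left 2 z).sub_left (Commute.refl z)).sub_left cz'.symm
  have key : (z - 1) ^ 6 = 0 := by
    have A : (t * t) * (t * t) * (z * z * z * z) = (z - 1) ^ 8 := by
      calc (t * t) * (t * t) * (z * z * z * z) = t * t * t * (t * z) * z * z * z := by noncomm_ring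
        _ = t * t * t * (z * t) * z * z * z := by rw [ctz.eq]
        _ = t * t * (t * z) * (t * z) * z * z := by noncomm_ring
        _ = t * t * (z * t) * (z * t) * z * z := by rw [ctz.eq]
        _ = t * (t * z) * (t * z) * (t * z) * z := by noncomm_ring
        _ = t * (z * t) * (z * t) * (z * t) * z := by rw [ctz.eq]
        _ = (t * z) * (t * z) * (t * z) * (t * z) := by noncomm_ring
        _ = _ := by rw [tzz]; noncomm_ring
    have B : (t * t) * ((z' - z) * (z' - z)) * (z * z * z * z)
        = (z - 1) ^ 4 * ((z - 1) ^ 2 * (z + 1) ^ 2) := by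
      have zz : (z' - z) * z = - ((z - 1) * (z + 1)) := by rw [sub_mul, hzz']; noncomm_ring
      have cz2 : Commute (z' - z) z := cz'.symm.sub_left (Commute.refl z)
      have C1 : (z' - z) * (z' - z) * (z * z) = (z - 1) ^ 2 * (z + 1) ^ 2 := by
        calc (z' - z) * (z' - z) * (z * z) = (z' - z) * ((z' - z) * z) * z := by noncomm_ring
          _ = (z' - z) * (z * (z' - z)) * z := by rw [cz2.eq]
          _ = ((z' - z) * z) * ((z' - z) * z) := by noncomm_ring
          _ = _ := by rw [zz]; noncomm_ring
      have C2 : t * t * (z * z) = (z - 1) ^ 4 := by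
        calc t * t * (z * z) = t * (t * z) * z := by noncomm_ring
          _ = t * (z * t) * z := by rw [ctz.eq]
          _ = (t * z) * (t * z) := by noncomm_ring
          _ = _ := by rw [tzz]; noncomm_ring
      have cc : Commute ((z' - z) * (z' - z)) (z * z) :=
        (cz2.mul_left cz2).mul_right (cz2.mul_left cz2)
      calc (t * t) * ((z' - z) * (z' - z)) * (z * z * z * z)
          = (t * t) * (((z' - z) * (z' - z)) * (z * z)) * (z * z) := by noncomm_ring
        _ = (t * t) * ((z * z) * ((z' - z) * (z' - z))) * (z * z) := by rw [cc.eq]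
        _ = (t * t * (z * z)) * ((z' - z) * (z' - z) * (z * z)) := by noncomm_ring
        _ = _ := by rw [C1, C2]
    rw [h4, B] at A
    have D : (4 : E) * ((z - 1) ^ 6 * z) = 0 := by
      calc (4 : E) * ((z - 1) ^ 6 * z)
          = (z - 1) ^ 4 * ((z - 1) ^ 2 * (z + 1) ^ 2) - (z - 1) ^ 8 := by noncomm_ring
        _ = 0 := by rw [A, sub_self]
    have D' : (z - 1) ^ 6 * z = 0 := by
      apply two_cancel p hp2
      apply two_cancel p hp2
      rw [← D]; noncomm_ring
    calc (z - 1) ^ 6 = (z - 1) ^ 6 * z * z' := by rw [mul_assoc, hzz, mul_one]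
      _ = 0 := by rw [D', zero_mul]
  exact unip_eq_one p z m hm hzm 6 key

/-- Combined: quadratic action of `x` on a class two group. -/
lemma quad_centralizes {E : Type*} [Ring E] (p : ℕ) [Fact p.Prime] [CharP E p] (hp2 : p ≠ 2)
    (D : Subgroup Eˣ) (m : ℕ) (hm : m.Coprime p) (hodd : Odd m) (hDm : ∀ d ∈ D, d ^ m = 1)
    (hD2 : ∀ d ∈ D, ∀ e ∈ D, ∀ f ∈ D, Commute (d * e * d⁻¹ * e⁻¹) f) (x : Eˣ)
    (hx : ((x : E) - 1) * ((x : E) - 1) = 0)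
    (hxD : ∀ d ∈ D, x * d * x⁻¹ ∈ D) (g : Eˣ) (hg : g ∈ D) : Commute x g := by
  have hxi : ∀ d ∈ D, x⁻¹ * d * x ∈ D := by
    intro d hd
    have : ∀ n : ℕ, x ^ n * d * (x ^ n)⁻¹ ∈ D := by
      intro n
      induction n with
      | zero => simpa using hd
      | succ n ih =>
        have := hxD _ ih
        rw [pow_succ']; convert this using 1; group
    have hxp : x ^ p = 1 := by
      have : ((x : E) - 1) ^ p = 0 := by
        apply pow_eq_zero_of_le (m := 2) (Fact.out : p.Prime).two_le
        rw [pow_two, hx]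
      rw [sub_pow_char_of_commute (p := p) (Commute.one_right _), one_pow, sub_eq_zero] at this
      ext; simpa using this
    have h1 := this (p - 1)
    have h2 : x ^ (p - 1) = x⁻¹ := by
      rw [eq_inv_iff_mul_eq_one, ← pow_succ, Nat.sub_add_cancel (Fact.out : p.Prime).one_le, hxp]
    rw [h2] at h1; simpa using h1
  set y := g⁻¹ * x * g with hy
  set z := x⁻¹ * y with hz
  set u := y * x⁻¹ with hu
  have hzD : z ∈ D := by
    have : z = (x⁻¹ * g⁻¹ * x) * g := by rw [hz, hy]; group
    rw [this]; exact D.mul_mem (hxi _ (D.inv_mem hg)) hg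
  have hux : u = x * z * x⁻¹ := by rw [hu, hz]; group
  have huD : u ∈ D := by rw [hux]; exact hxD _ hzD
  set a : E := (x : E) - 1 with ha
  set b : E := (y : E) - 1 with hb
  have hbb : b * b = 0 := by
    have : b = (g⁻¹ : Eˣ) * a * g := by
      rw [hb, ha, hy]; push_cast
      rw [mul_sub, sub_mul]; simp
    rw [this]
    calc ((g⁻¹ : Eˣ) : E) * a * g * (((g⁻¹ : Eˣ) : E) * a * g)
        = ((g⁻¹ : Eˣ) : E) * a * (g * ((g⁻¹ : Eˣ) : E)) * a * g := by noncomm_ring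
      _ = ((g⁻¹ : Eˣ) : E) * (a * a) * g := by rw [Units.mul_inv]; noncomm_ring
      _ = 0 := by rw [hx]; simp
  have xv : (x : E) = 1 + a := by rw [ha]; abel
  have yv : (y : E) = 1 + b := by rw [hb]; abel
  have xi : ((x⁻¹ : Eˣ) : E) = 1 - a := by
    apply Units.inv_eq_of_mul_eq_one_right
    rw [xv]
    calc (1 + a) * (1 - a) = 1 - a * a := by noncomm_ring
      _ = 1 := by rw [hx, sub_zero]
  have yi : ((y⁻¹ : Eˣ) : E) = 1 - b := by
    apply Units.inv_eq_of_mul_eq_one_right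
    rw [yv]
    calc (1 + b) * (1 - b) = 1 - b * b := by noncomm_ring
      _ = 1 := by rw [hbb, sub_zero]
  have zv : (z : E) = (1 - a) * (1 + b) := by rw [hz, Units.val_mul, xi, yv]
  have uv : (u : E) = (1 + b) * (1 - a) := by rw [hu, Units.val_mul, xi, yv]
  have ziv : ((z⁻¹ : Eˣ) : E) = (1 - b) * (1 + a) := by
    rw [hz, mul_inv_rev, inv_inv, Units.val_mul, yi, xv]
  have sv : (z : E) + ((z⁻¹ : Eˣ) : E) = 2 - (a * b + b * a) := by
    rw [zv, ziv, ← one_add_one_eq_two]; noncomm_ring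
  have sa : Commute ((z : E) + ((z⁻¹ : Eˣ) : E)) a := by
    rw [sv]
    apply (Commute.ofNat_left 2 a).sub_left
    calc (a * b + b * a) * a = a * b * a + b * (a * a) := by noncomm_ring
      _ = a * b * a + (a * a) * b := by rw [hx]; simp
      _ = _ := by noncomm_ring
  have sb : Commute ((z : E) + ((z⁻¹ : Eˣ) : E)) b := by
    rw [sv]
    apply (Commute.ofNat_left 2 b).sub_left
    calc (a * b + b * a) * b = b * a * b + a * (b * b) := by noncomm_ring
      _ = b * a * b + (b * b) * a := by rw [hbb]; simp
      _ = _ := by noncomm_ring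
  have su : Commute ((z : E) + ((z⁻¹ : Eˣ) : E)) u := by
    rw [uv]
    exact ((Commute.one_right _).add_right sb).mul_right ((Commute.one_right _).sub_right sa)
  have conj : ∀ v : Eˣ, Commute ((z : E) + ((z⁻¹ : Eˣ) : E)) v →
      ((v * z * v⁻¹ : Eˣ) : E) + (((v * z * v⁻¹)⁻¹ : Eˣ) : E) = (z : E) + ((z⁻¹ : Eˣ) : E) := by
    intro v hv
    have : ((v * z * v⁻¹ : Eˣ) : E) + (((v * z * v⁻¹)⁻¹ : Eˣ) : E)
      = v * ((z : E) + ((z⁻¹ : Eˣ) : E)) * (v⁻¹ : Eˣ) := by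
      simp only [mul_inv_rev, inv_inv, Units.val_mul]; noncomm_ring
    rw [this, ← hv.eq, mul_assoc, Units.mul_inv, mul_one]
  set c : Eˣ := z⁻¹ * u * z⁻¹⁻¹ * u⁻¹ with hc
  have hcD : c ∈ D := by
    rw [hc]
    exact D.mul_mem (D.mul_mem (D.mul_mem (D.inv_mem hzD) huD) (by simpa using hzD)) (D.inv_mem huD)
  have cu : Commute c u := hD2 _ (D.inv_mem hzD) _ huD _ huD
  have cz : Commute c z := hD2 _ (D.inv_mem hzD) _ huD _ hzD
  have c1 : u * z * u⁻¹ = z * c := by rw [hc]; group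
  have c2 : (u * u) * z * (u * u)⁻¹ = z * (c * c) := by
    calc (u * u) * z * (u * u)⁻¹ = u * (u * z * u⁻¹) * u⁻¹ := by group
      _ = u * (z * c) * u⁻¹ := by rw [c1]
      _ = u * z * u⁻¹ * (u * c * u⁻¹) := by group
      _ = z * c * c := by rw [c1, ← cu.eq, mul_inv_cancel_right]
      _ = _ := by group
  have hc1 : (c : E) = 1 := by
    apply class_two_step p hp2 (z : E) c ((z⁻¹ : Eˣ) : E) ((c⁻¹ : Eˣ) : E) m hm hodd
    · rw [← Units.val_pow_eq_pow_val, hDm c hcD, Units.val_one]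
    · simp
    · simp
    · simp
    · exact cz.symm.units_val
    · have := conj u su
      rw [c1, mul_inv_rev, (cz.inv_inv).eq] at this
      simpa using this
    · have := conj (u * u) (by rw [Units.val_mul]; exact su.mul_right su)
      rw [c2, mul_inv_rev, (((cz.mul_left cz)).inv_inv).eq] at this
      simpa using this
  have hc1' : c = 1 := by ext; simpa using hc1
  have czu : Commute z u := by
    have := c1
    rw [hc1', mul_one, mul_inv_eq_iff_eq_mul] at this
    exact this.symm
  have : (z : E) = 1 := by
    apply quad_comm_step p hp2 a b hx hbb m hm _ _ zv uv _ czu.units_val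
    rw [← Units.val_pow_eq_pow_val, hDm z hzD, Units.val_one]
  have hz1 : z = 1 := by ext; simpa using this
  have : y = x := by rw [hz, inv_mul_eq_one] at hz1; exact hz1.symm
  rw [hy, mul_assoc, inv_mul_eq_iff_eq_mul] at this
  exact this


lemma not_dvd_card_of_class_two {L : Type*} [Group L] [Finite L] (p : ℕ) [Fact p.Prime]
    (hOp : ∀ D : Subgroup L, D.Normal → IsPGroup p D → D = ⊥)
    (D : Subgroup L) (hDn : D.Normal)
    (hD2 : ∀ d ∈ D, ∀ e ∈ D, ∀ f ∈ D, Commute (d * e * d⁻¹ * e⁻¹) f) : ¬ p ∣ Nat.card D := by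
  have hnil : Group.IsNilpotent D := by
    refine Subgroup.isNilpotent_of_ker_le_center (Abelianization.of (G := D)) ?_
    rw [Abelianization.ker_of, commutator_def, Subgroup.commutator_le]
    rintro ⟨d, hd⟩ - ⟨e, he⟩ -
    rw [Subgroup.mem_center_iff]
    rintro ⟨f, hf⟩
    ext
    exact (hD2 d hd e he f hf).eq.symm
  intro hdvd
  let P : Sylow p D := default
  have hPn : (P : Subgroup D).Normal := inferInstance
  have hPc : (P : Subgroup D).Characteristic := P.characteristic_of_normal hPn
  have h1 : ((P : Subgroup D).map D.subtype).Normal := ConjAct.normal_of_characteristic_of_normal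
  have h2 := hOp _ h1 (P.isPGroup'.map _)
  rw [Subgroup.map_eq_bot_iff_of_injective _ D.subtype_injective] at h2
  exact P.ne_bot_of_dvd_card hdvd h2

lemma linear_step {L : Type*} [Group L] [Finite L] (hsol : Group.IsSolvable L)
    {E : Type*} [Ring E] (p : ℕ) [Fact p.Prime] [CharP E p] (hp2 : p ≠ 2)
    (ρ : L →* Eˣ) (hρ : Function.Injective ρ) (S : Set L)
    (hSodd : Odd (Nat.card (Subgroup.normalClosure S)))
    (hS : ∀ x ∈ S, ∃ k : ℕ, x ^ p ^ k = 1)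
    (hquad : ∀ x ∈ S, ((ρ x : E) - 1) * ((ρ x : E) - 1) = 0)
    (hOp : ∀ D : Subgroup L, D.Normal → IsPGroup p D → D = ⊥) :
    ∀ x ∈ S, x = 1 := by
  have hp : p.Prime := Fact.out
  set N := Subgroup.normalClosure S with hN
  have key : ∀ D : Subgroup L, D.Normal → D ≤ N →
      (∀ d ∈ D, ∀ e ∈ D, ∀ f ∈ D, Commute (d * e * d⁻¹ * e⁻¹) f) →
      N ≤ Subgroup.centralizer (D : Set L) := by
    intro D hDn hDN hD2
    have hpD := not_dvd_card_of_class_two p hOp D hDn hD2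
    apply Subgroup.normalClosure_le_normal
    intro x hx
    rw [SetLike.mem_coe, Subgroup.mem_centralizer_iff]
    intro g hg
    apply hρ
    rw [map_mul, map_mul]
    symm
    refine quad_centralizes p hp2 (D.map ρ) (Nat.card D) ?_ ?_ ?_ ?_ (ρ x) (hquad x hx) ?_ (ρ g)
      (Subgroup.mem_map_of_mem _ hg)
    · exact ((Nat.Prime.coprime_iff_not_dvd hp).mpr hpD).symm
    · exact hSodd.of_dvd_nat (Subgroup.card_dvd_of_le hDN)
    · rintro _ ⟨d, hd, rfl⟩
      have : (⟨d, hd⟩ : D) ^ Nat.card D = 1 := pow_card_eq_one'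
      rw [← map_pow, show d ^ Nat.card D = 1 from congrArg Subtype.val this, map_one]
    · rintro _ ⟨d, hd, rfl⟩ _ ⟨e, he, rfl⟩ _ ⟨f, hf, rfl⟩
      simpa using (hD2 d hd e he f hf).map ρ
    · rintro _ ⟨d, hd, rfl⟩
      exact ⟨x * d * x⁻¹, hDn.conj_mem d hd x, by simp⟩
  have hcentral : ∀ n : ℕ, ∀ i : ℕ, derivedSeries L (i + n) = ⊥ →
      N ≤ Subgroup.centralizer ((derivedSeries L i ⊓ N : Subgroup L) : Set L) := by
    intro n
    induction n with
    | zero =>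
      intro i hi
      rw [add_zero] at hi
      rw [hi, bot_inf_eq]
      intro x _
      rw [Subgroup.mem_centralizer_iff]
      intro g hg
      have : g = 1 := by simpa using hg
      simp [this]
    | succ n ih =>
      intro i hi
      have h1 := ih (i + 1) (by rw [← hi]; congr 1; ring)
      have hdn := derivedSeries_normal L i
      apply key
      · infer_instance
      · exact inf_le_right
      · intro d hd e he f hf
        have hm : d * e * d⁻¹ * e⁻¹ ∈ derivedSeries L (i + 1) ⊓ N := by
          refine ⟨?_, ?_⟩
          · rw [derivedSeries_succ]
            exact Subgroup.commutator_mem_commutator hd.1 he.1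
          · exact N.mul_mem (N.mul_mem (N.mul_mem hd.2 he.2) (N.inv_mem hd.2)) (N.inv_mem he.2)
        exact (Subgroup.mem_centralizer_iff.mp (h1 hf.2)) _ hm
  obtain ⟨n, hn⟩ := hsol.solvable
  have hab := hcentral n 0 (by simpa using hn)
  rw [derivedSeries_zero, top_inf_eq] at hab
  have hpN := not_dvd_card_of_class_two p hOp N inferInstance (by
    intro d hd e he f hf
    have hm : d * e * d⁻¹ * e⁻¹ ∈ N :=
      N.mul_mem (N.mul_mem (N.mul_mem hd he) (N.inv_mem hd)) (N.inv_mem he)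
    exact (Subgroup.mem_centralizer_iff.mp (hab hf)) _ hm)
  intro x hx
  obtain ⟨k, hk⟩ := hS x hx
  have hxN : x ∈ N := Subgroup.subset_normalClosure hx
  have h1 : orderOf x ∣ p ^ k := orderOf_dvd_of_pow_eq_one hk
  have h2 : orderOf x ∣ Nat.card N := by
    have := orderOf_dvd_natCard (⟨x, hxN⟩ : N)
    rwa [Subgroup.orderOf_mk] at this
  rw [← orderOf_eq_one_iff]
  exact Nat.eq_one_of_dvd_coprimes
    (Nat.Coprime.pow_left k ((Nat.Prime.coprime_iff_not_dvd hp).mpr hpN)) h1 h2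


lemma quad_aux {E : Type*} [Ring E] (x : E) (h : x * x + 1 = x + x) :
    (x - 1) * (x - 1) = 0 := by
  calc (x - 1) * (x - 1) = (x * x + 1) - (x + x) := by noncomm_ring
    _ = 0 := by rw [h, sub_self]

lemma irred_step {G : Type*} [Group G] [Finite G] (hsol : Group.IsSolvable G)
    {A : Type*} [CommGroup A] [Finite A] [Nontrivial A]
    (p : ℕ) [Fact p.Prime] (hp2 : p ≠ 2) (hexp : ∀ a : A, a ^ p = 1)
    (φ : G →* MulAut A)
    (hirr : ∀ M : Subgroup A, (∀ g : G, ∀ m ∈ M, φ g m ∈ M) → M = ⊥ ∨ M = ⊤)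
    (H : Subgroup G) (hHn : H.Normal) (hHodd : Odd (Nat.card H)) (S : Set G) (hSH : S ⊆ H)
    (hS : ∀ x ∈ S, ∃ k : ℕ, x ^ p ^ k = 1)
    (hquad : ∀ x ∈ S, ∀ a : A, φ x (φ x a) * a = φ x a * φ x a) :
    ∀ x ∈ S, φ x = 1 := by
  have hp : p.Prime := Fact.out
  let φ₀ : G →* AddMonoid.End (Additive A) :=
    { toFun := fun g => MonoidHom.toAdditive (φ g).toMonoidHom
      map_one' := by ext; simp only [map_one]; rfl
      map_mul' := by intro g h; ext; simp only [map_mul]; rfl }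
  have hφ₀ : ∀ g (a : A), φ₀ g (Additive.ofMul a) = Additive.ofMul (φ g a) := fun g a => rfl
  have hch : CharP (AddMonoid.End (Additive A)) p := by
    have h0 : (p : AddMonoid.End (Additive A)) = 0 := by
      ext a
      change ((p : AddMonoid.End (Additive A)) a) = 0
      rw [AddMonoid.End.natCast_apply]
      exact hexp a.toMul
    have : Nontrivial (AddMonoid.End (Additive A)) := by
      refine ⟨⟨0, 1, ?_⟩⟩
      intro h
      obtain ⟨a, ha⟩ := exists_ne (1 : A)
      have := DFunLike.congr_fun h (Additive.ofMul a)
      exact ha this.symm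
    obtain ⟨q, hq⟩ := CharP.exists (AddMonoid.End (Additive A))
    have hqp : q ∣ p := (CharP.cast_eq_zero_iff (AddMonoid.End (Additive A)) q p).mp h0
    rcases (Nat.dvd_prime hp).mp hqp with h | h
    · exact absurd h (CharP.char_ne_one (AddMonoid.End (Additive A)) q)
    · rwa [h] at hq
  let ψ : G →* (AddMonoid.End (Additive A))ˣ := φ₀.toHomUnits
  have hψ : ∀ g, ((ψ g : (AddMonoid.End (Additive A))ˣ) : AddMonoid.End (Additive A)) = φ₀ g :=
    fun g => rfl
  have hker : ∀ g, ψ g = 1 → φ g = 1 := by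
    intro g hg
    ext a
    have h1 : φ₀ g = 1 := by rw [← hψ, hg]; rfl
    have := DFunLike.congr_fun h1 (Additive.ofMul a)
    exact this
  let L := ψ.range
  let π : G →* L := ψ.rangeRestrict
  have hπ : Function.Surjective π := ψ.rangeRestrict_surjective
  have hLfin : Finite L := Finite.of_surjective π hπ
  have hLsol : Group.IsSolvable L := Group.isSolvable_of_surjective hπ
  have main := linear_step (L := L) hLsol p hp2 L.subtype L.subtype_injective (Set.image π S) ?_ ?_ ?_ ?_
  · intro x hx
    apply hker
    have := main (π x) ⟨x, hx, rfl⟩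
    exact congrArg Subtype.val this
  · have hn : (H.map π).Normal := hHn.map π hπ
    have h1 : Subgroup.normalClosure (Set.image π S) ≤ H.map π := by
      apply Subgroup.normalClosure_le_normal
      rintro _ ⟨x, hx, rfl⟩
      exact ⟨x, hSH hx, rfl⟩
    have h2 : Nat.card (H.map π) ∣ Nat.card H := H.card_map_dvd π
    exact hHodd.of_dvd_nat ((Subgroup.card_dvd_of_le h1).trans h2)
  · rintro _ ⟨x, hx, rfl⟩
    obtain ⟨k, hk⟩ := hS x hx
    exact ⟨k, by rw [← map_pow, hk, map_one]⟩
  · rintro _ ⟨x, hx, rfl⟩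
    change (φ₀ x - 1) * (φ₀ x - 1) = 0
    have h2 : φ₀ x * φ₀ x + 1 = φ₀ x + φ₀ x := by
      ext a
      exact hquad x hx a.toMul
    exact quad_aux _ h2
  · intro D hDn hDp
    let D' : Subgroup G := D.comap π
    have hD' : D'.Normal := hDn.comap π
    let M : Subgroup A :=
      { carrier := {a | ∀ d ∈ D', φ d a = a}
        mul_mem' := by
          intro a b ha hb d hd
          rw [map_mul, ha d hd, hb d hd]
        one_mem' := by intro d _; exact map_one _
        inv_mem' := by
          intro a ha d hd
          rw [map_inv, ha d hd] }
    have hM : M = ⊥ ∨ M = ⊤ := by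
      apply hirr
      intro g m hm d hd
      have h1 := hm (g⁻¹ * d * g) (by simpa using hD'.conj_mem d hd g⁻¹)
      calc φ d (φ g m) = φ g (φ (g⁻¹ * d * g) m) := by
            rw [← MulAut.mul_apply, ← MulAut.mul_apply, ← map_mul, ← map_mul]; congr 2; group
        _ = φ g m := by rw [h1]
    rcases hM with hM | hM
    · exfalso
      let act : MulAction D A :=
        { smul := fun d a => ((((d : L) : (AddMonoid.End (Additive A))ˣ) :
              AddMonoid.End (Additive A)) (Additive.ofMul a)).toMul
          one_smul := fun a => rfl
          mul_smul := fun d e a => rfl }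
      have hpA : p ∣ Nat.card A := by
        obtain ⟨a, ha⟩ := exists_ne (1 : A)
        have : orderOf a = p := orderOf_eq_prime (hexp a) ha
        rw [← this]; exact orderOf_dvd_natCard a
      obtain ⟨b, hb, hb1⟩ := hDp.exists_fixed_point_of_prime_dvd_card_of_fixed_point A hpA
        (a := (1 : A)) (by
          intro d
          exact map_zero (((d : L) : (AddMonoid.End (Additive A))ˣ) : AddMonoid.End (Additive A)))
      have : b ∈ M := by
        intro d hd
        exact hb ⟨π d, hd⟩
      rw [hM, Subgroup.mem_bot] at this
      exact hb1 this.symm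
    · rw [eq_bot_iff]
      intro l hl
      obtain ⟨g, rfl⟩ := hπ l
      rw [Subgroup.mem_bot]
      ext a
      have : a.toMul ∈ M := by rw [hM]; trivial
      exact this g hl


lemma central_split {X : Type*} [Group X] [Finite X] (p : ℕ) [Fact p.Prime] (W : Subgroup X)
    (hWp : ∀ w ∈ W, w ^ p = 1) (hWc : ∀ w ∈ W, ∀ x : X, Commute w x) (hidx : ¬ p ∣ W.index) :
    ∃ C : Subgroup X, ¬ p ∣ Nat.card C ∧ (∃ n, C.index = p ^ n) ∧
      ∀ g, g ∈ C ↔ (orderOf g).Coprime p := by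
  have hp : p.Prime := Fact.out
  have hWn : W.Normal := ⟨fun w hw g => by rw [← (hWc w hw g).eq, mul_inv_cancel_right]; exact hw⟩
  have hWP : IsPGroup p W := fun w => ⟨1, by ext; simpa using hWp w w.2⟩
  obtain ⟨n, hn⟩ := IsPGroup.iff_card.mp hWP
  obtain ⟨C, hC⟩ := Subgroup.exists_right_complement'_of_coprime (N := W) (by
    rw [hn]; exact Nat.Coprime.pow_left n ((Nat.Prime.coprime_iff_not_dvd hp).mpr hidx))
  have hCcard : Nat.card C = W.index := (hC.symm.index_eq_card).symm
  refine ⟨C, by rwa [hCcard], ⟨n, by rw [hC.index_eq_card, hn]⟩, ?_⟩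
  intro g
  constructor
  · intro hg
    have h2 : orderOf g ∣ Nat.card C := by
      have := orderOf_dvd_natCard (⟨g, hg⟩ : C)
      rwa [Subgroup.orderOf_mk] at this
    rw [hCcard] at h2
    exact Nat.Coprime.coprime_dvd_left h2 ((Nat.Prime.coprime_iff_not_dvd hp).mpr hidx).symm
  · intro hg
    obtain ⟨⟨⟨w, hw⟩, ⟨c, hc⟩⟩, hwc, -⟩ := (Subgroup.isComplement'_def.mp hC).existsUnique g
    simp only at hwc
    have hw' : w ∈ W := hw
    have hc' : c ∈ C := hc
    have h1 : w ^ orderOf g * c ^ orderOf g = 1 := by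
      rw [← (hWc w hw' c).mul_pow, hwc, pow_orderOf_eq_one]
    have h2 : w ^ orderOf g ∈ C := by
      rw [mul_eq_one_iff_eq_inv] at h1
      rw [h1]; exact C.inv_mem (C.pow_mem hc' _)
    have h3 : w ^ orderOf g = 1 :=
      Subgroup.disjoint_def.mp hC.disjoint (W.pow_mem hw' _) h2
    have h4 : w = 1 := by
      rw [← orderOf_eq_one_iff]
      exact Nat.eq_one_of_dvd_coprimes hg (orderOf_dvd_of_pow_eq_one h3)
        (orderOf_dvd_of_pow_eq_one (hWp w hw'))
    rw [← hwc, h4, one_mul]; exact hc'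

lemma exists_min_normal {G : Type*} [Group G] [Finite G] [Nontrivial G]
    (hsol : Group.IsSolvable G) : ∃ (W : Subgroup G) (r : ℕ), W.Normal ∧ W ≠ ⊥ ∧ r.Prime ∧
      (∀ a ∈ W, ∀ b ∈ W, a * b = b * a) ∧ (∀ a ∈ W, a ^ r = 1) ∧
      (∀ M : Subgroup G, M.Normal → M ≤ W → M = ⊥ ∨ M = W) := by
  obtain ⟨W, -, hW⟩ := exists_minimal_le_of_wellFoundedLT
    (fun M : Subgroup G => M.Normal ∧ M ≠ ⊥) ⊤ ⟨inferInstance, top_ne_bot⟩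
  obtain ⟨⟨hWn, hWb⟩, hmin⟩ := hW
  have hmin' : ∀ M : Subgroup G, M.Normal → M ≤ W → M = ⊥ ∨ M = W := by
    intro M hM hMW
    by_cases h : M = ⊥
    · exact Or.inl h
    · exact Or.inr (le_antisymm hMW (hmin ⟨hM, h⟩ hMW))
  have hab : ∀ a ∈ W, ∀ b ∈ W, a * b = b * a := by
    have hc : ⁅W, W⁆ = ⊥ := by
      rcases hmin' ⁅W, W⁆ inferInstance (Subgroup.commutator_le_left W W) with h | h
      · exact h
      · exfalso
        have : ∀ n, W ≤ derivedSeries G n := by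
          intro n
          induction n with
          | zero => exact le_top
          | succ n ih =>
            rw [derivedSeries_succ]
            calc W = ⁅W, W⁆ := h.symm
              _ ≤ _ := Subgroup.commutator_mono ih ih
        obtain ⟨n, hn⟩ := hsol.solvable
        have := this n
        rw [hn, le_bot_iff] at this
        exact hWb this
    rw [Subgroup.commutator_eq_bot_iff_le_centralizer] at hc
    intro a ha b hb
    exact Subgroup.mem_centralizer_iff.mp (hc hb) a ha
  have hcard : Nat.card W ≠ 1 := by rwa [Ne, Subgroup.card_eq_one]
  obtain ⟨r, hr, hrd⟩ := Nat.exists_prime_and_dvd hcard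
  have : Fact r.Prime := ⟨hr⟩
  refine ⟨W, r, hWn, hWb, hr, hab, ?_, hmin'⟩
  let M : Subgroup G :=
    { carrier := {a | a ∈ W ∧ a ^ r = 1}
      one_mem' := ⟨W.one_mem, one_pow r⟩
      mul_mem' := by
        rintro a b ⟨ha, ha'⟩ ⟨hb, hb'⟩
        exact ⟨W.mul_mem ha hb, by rw [Commute.mul_pow (hab a ha b hb), ha', hb', one_mul]⟩
      inv_mem' := by
        rintro a ⟨ha, ha'⟩
        exact ⟨W.inv_mem ha, by rw [inv_pow, ha', inv_one]⟩ }
  have hM : M.Normal := by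
    constructor
    rintro a ⟨ha, ha'⟩ g
    exact ⟨hWn.conj_mem a ha g, by rw [conj_pow, ha']; group⟩
  rcases hmin' M hM (fun a ha => ha.1) with h | h
  · exfalso
    obtain ⟨⟨x, hxW⟩, hx⟩ := exists_prime_orderOf_dvd_card' (G := W) r hrd
    rw [Subgroup.orderOf_mk] at hx
    have : x ∈ M := ⟨hxW, by rw [← hx, pow_orderOf_eq_one]⟩
    rw [h, Subgroup.mem_bot] at this
    rw [this, orderOf_one] at hx
    exact hr.one_lt.ne hx
  · intro a ha
    rw [← h] at ha
    exact ha.2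

lemma p_mem_odd {G : Type*} [Group G] (p : ℕ) [Fact p.Prime] (hp2 : p ≠ 2)
    (H : Subgroup G) (hHn : H.Normal) (hHi : ∃ n : ℕ, H.index = 2 ^ n)
    (x : G) (k : ℕ) (hx : x ^ p ^ k = 1) : x ∈ H := by
  have hp : p.Prime := Fact.out
  obtain ⟨n, hn⟩ := hHi
  rw [← QuotientGroup.eq_one_iff, ← orderOf_eq_one_iff]
  have h1 : orderOf (x : G ⧸ H) ∣ p ^ k := by
    apply orderOf_dvd_of_pow_eq_one
    rw [← QuotientGroup.mk_pow, hx]; rfl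
  have h2 : orderOf (x : G ⧸ H) ∣ 2 ^ n := by
    rw [← hn]; exact orderOf_dvd_natCard _
  exact Nat.eq_one_of_dvd_coprimes
    (Nat.Coprime.pow _ _ ((Nat.coprime_primes hp Nat.prime_two).mpr hp2)) h1 h2

lemma centralize_min {G : Type*} [Group G] [Finite G] (hsol : Group.IsSolvable G)
    (p : ℕ) [Fact p.Prime] (hp2 : p ≠ 2)
    (H : Subgroup G) (hHn : H.Normal) (hHodd : Odd (Nat.card H)) (hHi : ∃ n : ℕ, H.index = 2 ^ n)
    (P : Sylow p G) (hP : ∀ a ∈ P, ∀ b ∈ P, ∀ c ∈ P, Commute (a * b * a⁻¹ * b⁻¹) c)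
    (W : Subgroup G) (hWn : W.Normal) (hWb : W ≠ ⊥) (hab : ∀ a ∈ W, ∀ b ∈ W, a * b = b * a)
    (hexp : ∀ a ∈ W, a ^ p = 1)
    (hmin : ∀ M : Subgroup G, M.Normal → M ≤ W → M = ⊥ ∨ M = W) :
    Subgroup.normalClosure (P : Set G) ≤ Subgroup.centralizer (W : Set G) := by
  have hWP : IsPGroup p W := fun w => ⟨1, by ext; simpa using hexp w w.2⟩
  have hWleP : W ≤ P := hWP.le_sylow_of_normal P
  have hpk : ∀ x ∈ P, ∃ k : ℕ, x ^ p ^ k = 1 := by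
    intro x hx
    obtain ⟨k, hk⟩ := P.isPGroup' ⟨x, hx⟩
    exact ⟨k, congrArg Subtype.val hk⟩
  apply Subgroup.normalClosure_le_normal
  letI : CommGroup W :=
    { W.toGroup with mul_comm := fun a b => Subtype.ext (hab a a.2 b b.2) }
  have : Nontrivial W := (Subgroup.nontrivial_iff_ne_bot W).mpr hWb
  have main := irred_step hsol (A := W) p hp2 (fun a => Subtype.ext (by simpa using hexp a a.2))
    (MulAut.conjNormal : G →* MulAut W) ?_ H hHn hHodd (P : Set G) ?_ hpk ?_
  · intro x hx
    rw [SetLike.mem_coe, Subgroup.mem_centralizer_iff]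
    intro w hw
    have := DFunLike.congr_fun (main x hx) (⟨w, hw⟩ : W)
    have := congrArg Subtype.val this
    rw [MulAut.conjNormal_apply, mul_inv_eq_iff_eq_mul] at this
    exact this.symm
  · intro M hM
    have hMn : (M.map W.subtype).Normal := by
      constructor
      rintro _ ⟨m, hm, rfl⟩ g
      exact ⟨_, hM g m hm, MulAut.conjNormal_apply g m⟩
    rcases hmin _ hMn (Subgroup.map_subtype_le M) with h | h
    · left
      rwa [Subgroup.map_eq_bot_iff_of_injective _ W.subtype_injective] at h
    · right
      rw [eq_top_iff]
      intro w _
      have : (w : G) ∈ M.map W.subtype := by rw [h]; exact w.2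
      obtain ⟨m, hm, hmw⟩ := this
      have : m = w := Subtype.ext hmw
      rwa [← this]
  · intro x hx
    obtain ⟨k, hk⟩ := hpk x hx
    exact p_mem_odd p hp2 H hHn hHi x k hk
  · rintro x hx ⟨w, hw⟩
    apply Subtype.ext
    simp only [Subgroup.coe_mul, MulAut.conjNormal_apply]
    have c1 := hP x hx w (hWleP hw) x hx
    have c2 := hP x hx w (hWleP hw) w (hWleP hw)
    set c := x * w * x⁻¹ * w⁻¹ with hc
    have e : x * w * x⁻¹ = c * w := by rw [hc]; group
    rw [e]
    calc x * (c * w) * x⁻¹ * w = (x * c) * w * x⁻¹ * w := by group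
      _ = c * (x * w * x⁻¹) * w := by rw [← c1.eq]; group
      _ = c * (c * w) * w := by rw [e]
      _ = c * (w * c) * w := by rw [c2.eq]
      _ = c * w * (c * w) := by group

lemma card_comap_mk {G : Type*} [Group G] [Finite G] (W : Subgroup G) [W.Normal]
    (K : Subgroup (G ⧸ W)) :
    Nat.card (K.comap (QuotientGroup.mk' W)) = Nat.card K * Nat.card W := by
  have h1 := Subgroup.index_comap_of_surjective K (QuotientGroup.mk'_surjective W)
  have h2 := (K.comap (QuotientGroup.mk' W)).card_mul_index
  have h3 := K.card_mul_index
  have h4 := W.card_eq_card_quotient_mul_card_subgroup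
  rw [h1, h4, ← h3] at h2
  have h5 : 0 < K.index := Nat.pos_of_ne_zero Subgroup.index_ne_zero_of_finite
  apply Nat.eq_of_mul_eq_mul_right h5
  rw [h2]; ring

theorem p_length_one.{u} (p : ℕ) [Fact p.Prime] (hp2 : p ≠ 2) (n : ℕ) :
    ∀ (G : Type u) [Group G] [Finite G], Nat.card G = n → Group.IsSolvable G →
    ∀ (H : Subgroup G), H.Normal → Odd (Nat.card H) → (∃ n : ℕ, H.index = 2 ^ n) →
    ∀ P : Sylow p G, (∀ a ∈ P, ∀ b ∈ P, ∀ c ∈ P, Commute (a * b * a⁻¹ * b⁻¹) c) →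
    ∃ K N : Subgroup G, K.Normal ∧ N.Normal ∧ K ≤ N ∧ (P : Subgroup G) ≤ N ∧
      ¬ p ∣ Nat.card K ∧ ∃ m, K.relIndex N = p ^ m := by
  induction n using Nat.strong_induction_on with
  | _ n ih =>
  intro G _ _ hcard hsol H hHn hHodd hHi P hP
  have hp : p.Prime := Fact.out
  rcases subsingleton_or_nontrivial G with hs | hs
  · refine ⟨⊤, ⊤, inferInstance, inferInstance, le_rfl, le_top, ?_, 0, by simp⟩
    rw [Nat.card_of_subsingleton (1 : (⊤ : Subgroup G))]
    exact hp.one_lt.ne' ∘ Nat.dvd_one.mp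
  obtain ⟨W, r, hWn, hWb, hr, hab, hexp, hmin⟩ := exists_min_normal hsol
  have hlt : Nat.card (G ⧸ W) < n := by
    rw [← hcard, W.card_eq_card_quotient_mul_card_subgroup]
    have h1 : 1 < Nat.card W := (Subgroup.one_lt_card_iff_ne_bot W).mpr hWb
    have h2 : 0 < Nat.card (G ⧸ W) := Nat.card_pos
    nlinarith
  have hq := QuotientGroup.mk'_surjective W
  obtain ⟨K', N', hK'n, hN'n, hKN', hPN', hK'p, m, hm⟩ := ih _ hlt (G ⧸ W) rfl
    (Group.isSolvable_of_surjective hq) (H.map (QuotientGroup.mk' W)) (hHn.map _ hq)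
    (hHodd.of_dvd_nat (H.card_map_dvd _))
    (by
      obtain ⟨k, hk⟩ := hHi
      have h1 : (H.map (QuotientGroup.mk' W)).index ∣ H.index := H.index_map_dvd hq
      rw [hk] at h1
      obtain ⟨j, -, hj⟩ := (Nat.dvd_prime_pow Nat.prime_two).mp h1
      exact ⟨j, hj⟩)
    (P.mapSurjective hq)
    (by
      rintro _ ⟨a, ha, rfl⟩ _ ⟨b, hb, rfl⟩ _ ⟨c, hc, rfl⟩
      simpa using (hP a ha b hb c hc).map (QuotientGroup.mk' W))
  set q := QuotientGroup.mk' W with hqdef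
  set K₁ := K'.comap q with hK₁
  set N₁ := N'.comap q with hN₁
  have hK₁n : K₁.Normal := hK'n.comap q
  have hN₁n : N₁.Normal := hN'n.comap q
  have hPN₁ : (P : Subgroup G) ≤ N₁ := by
    intro x hx
    exact hPN' ⟨x, hx, rfl⟩
  have hKN₁ : K₁ ≤ N₁ := Subgroup.comap_mono hKN'
  have hrel : K₁.relIndex N₁ = p ^ m := by
    rw [hK₁, hN₁, Subgroup.relIndex_comap, Subgroup.map_comap_eq_self_of_surjective hq, hm]
  have hcK₁ : Nat.card K₁ = Nat.card K' * Nat.card W := card_comap_mk W K'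
  have : Fact r.Prime := ⟨hr⟩
  have hWr : IsPGroup r W := fun w => ⟨1, by ext; simpa using hexp w w.2⟩
  by_cases hrp : r = p
  · subst hrp
    have hcen := centralize_min hsol r hp2 H hHn hHodd hHi P hP W hWn hWb hab hexp hmin
    set N₀ := Subgroup.normalClosure (P : Set G) with hN₀
    have hN₀n : N₀.Normal := Subgroup.normalClosure_normal
    have hPN₀ : (P : Subgroup G) ≤ N₀ := Subgroup.subset_normalClosure
    have hN₀₁ : N₀ ≤ N₁ := Subgroup.normalClosure_le_normal hPN₁
    have hWN₀ : W ≤ N₀ := (hWr.le_sylow_of_normal P).trans hPN₀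
    set K₂ := K₁ ⊓ N₀ with hK₂
    have hWK₁ : W ≤ K₁ := by
      intro w hw
      have : q w = 1 := (QuotientGroup.eq_one_iff w).mpr hw
      rw [hK₁, Subgroup.mem_comap, this]; exact K'.one_mem
    have hWK₂ : W ≤ K₂ := le_inf hWK₁ hWN₀
    obtain ⟨C, hCp, ⟨j, hj⟩, hC⟩ := central_split (X := K₂) r (W.subgroupOf K₂)
      (by
        rintro ⟨w, hw'⟩ hw
        exact Subtype.ext (hexp w hw))
      (by
        rintro ⟨w, hw'⟩ hw ⟨x, hx⟩
        exact Subtype.ext (Subgroup.mem_centralizer_iff.mp (hcen hx.2) w hw))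
      (by
        change ¬ r ∣ W.relIndex K₂
        intro hd
        apply hK'p
        have h1 : W.relIndex K₂ * K₂.relIndex K₁ = W.relIndex K₁ :=
          Subgroup.relIndex_mul_relIndex _ _ _ hWK₂ inf_le_left
        have h2 : W.relIndex K₁ * Nat.card W = Nat.card K₁ := by
          rw [mul_comm, ← Subgroup.relIndex_bot_left, ← Subgroup.relIndex_bot_left]
          exact Subgroup.relIndex_mul_relIndex _ _ _ bot_le hWK₁
        rw [hcK₁] at h2
        have h3 := Nat.eq_of_mul_eq_mul_right Nat.card_pos h2
        rw [← h3, ← h1]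
        exact hd.mul_right _)
    have hmem : ∀ g, g ∈ C.map K₂.subtype ↔ g ∈ K₂ ∧ (orderOf g).Coprime r := by
      intro g
      constructor
      · rintro ⟨c, hc, rfl⟩
        refine ⟨c.2, ?_⟩
        have := (hC c).mp hc
        rwa [← Subgroup.orderOf_coe] at this
      · rintro ⟨hg, hg'⟩
        refine ⟨⟨g, hg⟩, (hC _).mpr ?_, rfl⟩
        rwa [Subgroup.orderOf_mk]
    refine ⟨C.map K₂.subtype, N₀, ?_, hN₀n, ?_, hPN₀, ?_, ?_⟩
    · constructor
      intro x hx g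
      rw [hmem] at hx ⊢
      have hK₂n : K₂.Normal := inferInstance
      refine ⟨hK₂n.conj_mem x hx.1 g, ?_⟩
      have : orderOf (g * x * g⁻¹) = orderOf x := (MulAut.conj g).orderOf_eq x
      rw [this]; exact hx.2
    · exact (Subgroup.map_subtype_le C).trans inf_le_right
    · rwa [Subgroup.card_map_of_injective K₂.subtype_injective]
    · have h1 : (C.map K₂.subtype).relIndex K₂ * K₂.relIndex N₀ = (C.map K₂.subtype).relIndex N₀ :=
        Subgroup.relIndex_mul_relIndex _ _ _ (Subgroup.map_subtype_le C) inf_le_right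
      have h2 : (C.map K₂.subtype).relIndex K₂ = r ^ j := by
        rw [← hj, Subgroup.relIndex]
        congr 1
        exact Subgroup.comap_map_eq_self_of_injective K₂.subtype_injective C
      have h3 : K₂.relIndex N₀ ∣ r ^ m := by
        rw [hK₂, Subgroup.inf_relIndex_right, ← hrel, ← Subgroup.relIndex_subgroupOf hN₀₁]
        exact Subgroup.relIndex_dvd_index_of_normal _ _
      obtain ⟨i, -, hi⟩ := (Nat.dvd_prime_pow hp).mp h3
      exact ⟨j + i, by rw [← h1, h2, hi, pow_add]⟩
  · refine ⟨K₁, N₁, hK₁n, hN₁n, hKN₁, hPN₁, ?_, m, hrel⟩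
    rw [hcK₁]
    obtain ⟨k, hk⟩ := IsPGroup.iff_card.mp hWr
    rw [hk]
    intro hd
    rcases (Nat.Prime.dvd_mul hp).mp hd with h | h
    · exact hK'p h
    · exact hrp ((Nat.prime_dvd_prime_iff_eq hp hr).mp (hp.dvd_of_dvd_pow h)).symm


/-- a bilinear central form used to linearise a group of class at most two -/
structure BForm {P : Type*} [Group P] (f : P → P → P) : Prop where
  central : ∀ a b c, f a b * c = c * f a b
  mul_left : ∀ a b c, f (a * b) c = f a c * f b c
  mul_right : ∀ a b c, f a (b * c) = f a b * f a c
  left_one : ∀ a b c, f (f a b) c = 1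
  right_one : ∀ a b c, f c (f a b) = 1
  comm : ∀ a b, a * b * f a b = b * a * f b a

namespace BForm

variable {P : Type*} [Group P] {f : P → P → P}

lemma one_l (hf : BForm f) (c : P) : f 1 c = 1 := by
  have := hf.mul_left 1 1 c
  rw [mul_one] at this
  exact left_eq_mul.mp this

lemma one_r (hf : BForm f) (c : P) : f c 1 = 1 := by
  have := hf.mul_right c 1 1
  rw [mul_one] at this
  exact left_eq_mul.mp this

lemma inv_l (hf : BForm f) (a c : P) : f a⁻¹ c = (f a c)⁻¹ := by
  have := hf.mul_left a⁻¹ a c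
  rw [inv_mul_cancel, hf.one_l] at this
  exact eq_inv_of_mul_eq_one_left this.symm

lemma inv_r (hf : BForm f) (a c : P) : f c a⁻¹ = (f c a)⁻¹ := by
  have := hf.mul_right c a⁻¹ a
  rw [inv_mul_cancel, hf.one_r] at this
  exact eq_inv_of_mul_eq_one_left this.symm

lemma comm_inv (hf : BForm f) (a b c : P) : (f a b)⁻¹ * c = c * (f a b)⁻¹ := by
  have : Commute (f a b) c := hf.central a b c
  exact this.inv_left.eq

/-- the additive group -/
@[reducible] def addGrp (hf : BForm f) : AddCommGroup P where
  add a b := a * b * f a b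
  zero := 1
  neg a := a⁻¹ * f a a
  nsmul := @nsmulRec P ⟨1⟩ ⟨fun a b => a * b * f a b⟩
  zsmul := @zsmulRec P ⟨1⟩ ⟨fun a b => a * b * f a b⟩ ⟨fun a => a⁻¹ * f a a⟩
    (@nsmulRec P ⟨1⟩ ⟨fun a b => a * b * f a b⟩)
  add_assoc a b c := by
    change (a * b * f a b) * c * f (a * b * f a b) c = a * (b * c * f b c) * f a (b * c * f b c)
    rw [hf.mul_left, hf.mul_left, hf.left_one, hf.mul_right, hf.mul_right, hf.right_one, mul_one,
      mul_one]
    have h1 := hf.central a b c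
    have h2 := hf.central b c (f a b * f a c)
    calc a * b * f a b * c * (f a c * f b c) = a * b * (f a b * c) * (f a c * f b c) := by group
      _ = a * b * (c * f a b) * (f a c * f b c) := by rw [h1]
      _ = a * b * c * (f a b * f a c * f b c) := by group
      _ = a * b * c * (f b c * (f a b * f a c)) := by rw [h2]
      _ = _ := by group
  zero_add a := by
    change 1 * a * f 1 a = a
    rw [hf.one_l]; simp
  add_zero a := by
    change a * 1 * f a 1 = a
    rw [hf.one_r]; simp
  neg_add_cancel a := by
    change a⁻¹ * f a a * a * f (a⁻¹ * f a a) a = 1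
    rw [hf.mul_left, hf.left_one, hf.inv_l, mul_assoc a⁻¹, hf.central]
    group
  add_comm a b := hf.comm a b

/-- the twisted translation -/
def lam (f : P → P → P) (u v : P) : P := v * (f u v)⁻¹

lemma f_lam (hf : BForm f) (u v w : P) : f w (lam f u v) = f w v := by
  rw [lam, hf.mul_right, hf.inv_r, hf.right_one]; simp

lemma f_lam_l (hf : BForm f) (u v w : P) : f (lam f u v) w = f v w := by
  rw [lam, hf.mul_left, hf.inv_l, hf.left_one]; simp

lemma lam_add (hf : BForm f) (u v w : P) :
    lam f u (v * w * f v w) = lam f u v * lam f u w * f (lam f u v) (lam f u w) := by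
  rw [hf.f_lam, hf.f_lam_l]
  unfold lam
  rw [hf.mul_right, hf.mul_right, hf.right_one]
  have h1 := hf.comm_inv u v
  have h2 := hf.comm_inv u w
  rw [mul_one, mul_inv_rev]
  calc v * w * f v w * ((f u w)⁻¹ * (f u v)⁻¹)
      = v * w * f v w * ((f u v)⁻¹ * (f u w)⁻¹) := by rw [h1]
    _ = v * w * (f v w * ((f u v)⁻¹ * (f u w)⁻¹)) := by group
    _ = v * w * (((f u v)⁻¹ * (f u w)⁻¹) * f v w) := by rw [hf.central]
    _ = v * (w * (f u v)⁻¹) * (f u w)⁻¹ * f v w := by group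
    _ = v * ((f u v)⁻¹ * w) * (f u w)⁻¹ * f v w := by rw [h1]
    _ = _ := by group

lemma lam_inj (hf : BForm f) (u v : P) (h : lam f u v = 1) : v = 1 := by
  have h1 : v = f u v := by
    unfold lam at h
    exact mul_inv_eq_one.mp h
  rw [h1, ← hf.f_lam u, h, hf.one_r]

lemma add_lam (hf : BForm f) (u v : P) : u * lam f u v * f u (lam f u v) = u * v := by
  rw [hf.f_lam, lam]; group

end BForm

/-- data of an additive cocycle -/
lemma cocycle_of_form {G : Type*} {P : Type*} [Group G] [Group P] {f : P → P → P} (hf : BForm f)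
    (τ : G → MulAut P) (hτ : ∀ g a b, f (τ g a) (τ g b) = τ g (f a b))
    (π : G → P) (hπ : ∀ g h, π (g * h) = π g * τ g (π h)) :
    ∃ (_ : AddCommGroup P) (φ : G → P →+ P) (ψ : G → P),
      (∀ g, Function.Injective (φ g)) ∧ (∀ g h, ψ (g * h) = ψ g + φ g (ψ h)) ∧
      (∀ g, ψ g = 0 → π g = 1) := by
  let _ : AddCommGroup P := hf.addGrp
  refine ⟨inferInstance, fun g => AddMonoidHom.mk' (fun v => BForm.lam f (π g) (τ g v)) ?_, π,
    ?_, ?_, ?_⟩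
  · intro v w
    change BForm.lam f (π g) (τ g (v * w * f v w)) = BForm.lam f (π g) (τ g v) *
      BForm.lam f (π g) (τ g w) * f (BForm.lam f (π g) (τ g v)) (BForm.lam f (π g) (τ g w))
    rw [map_mul, map_mul, ← hτ, hf.lam_add]
  · intro g
    rw [injective_iff_map_eq_zero]
    intro v hv
    have h1 : BForm.lam f (π g) (τ g v) = 1 := hv
    have h2 := hf.lam_inj _ _ h1
    exact (map_eq_one_iff (τ g) (τ g).injective).mp h2
  · intro g h
    change π (g * h) = π g * BForm.lam f (π g) (τ g (π h)) *
      f (π g) (BForm.lam f (π g) (τ g (π h)))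
    rw [hf.add_lam, hπ]
  · intro g hg
    exact hg

/-- the commutator form -/
def cf {P : Type*} [Group P] (a b : P) : P := b⁻¹ * a⁻¹ * b * a


lemma cf_central {P : Type*} [Group P] (h : ∀ a b c : P, Commute (a * b * a⁻¹ * b⁻¹) c)
    (a b c : P) : cf a b * c = c * cf a b := by
  have := (h b⁻¹ a⁻¹ c).eq
  simpa [cf] using this

lemma cf_mul_left {P : Type*} [Group P] (h : ∀ a b c : P, Commute (a * b * a⁻¹ * b⁻¹) c)
    (a b c : P) : cf (a * b) c = cf a c * cf b c := by
  rw [cf_central h a c]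
  have h1 := cf_central h a c b
  calc cf (a * b) c = c⁻¹ * b⁻¹ * c * (cf a c * b) := by unfold cf; group
    _ = _ := by rw [h1]; unfold cf; group

lemma cf_mul_right {P : Type*} [Group P] (h : ∀ a b c : P, Commute (a * b * a⁻¹ * b⁻¹) c)
    (a b c : P) : cf a (b * c) = cf a b * cf a c := by
  have h1 := cf_central h a b (a⁻¹ * c * a)
  calc cf a (b * c) = c⁻¹ * (cf a b * (a⁻¹ * c * a)) := by unfold cf; group
    _ = c⁻¹ * a⁻¹ * c * a * cf a b := by rw [h1]; group
    _ = cf a c * cf a b := rfl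
    _ = _ := cf_central h _ _ _

lemma cf_comm {P : Type*} [Group P] (a b : P) : a * b * cf a b = b * a := by
  unfold cf; group

lemma cf_swap {P : Type*} [Group P] (a b : P) : cf b a = (cf a b)⁻¹ := by
  unfold cf; group

lemma cf_of_comm {P : Type*} [Group P] (a b : P) (h : a * b = b * a) : cf a b = 1 := by
  have := cf_comm a b
  rw [h] at this
  exact mul_eq_left.mp this

lemma cf_map {P Q : Type*} [Group P] [Group Q] (τ : P →* Q) (a b : P) :
    cf (τ a) (τ b) = τ (cf a b) := by
  simp [cf]

lemma bform_odd {P : Type*} [Group P] [Finite P] (hodd : Odd (Nat.card P))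
    (h : ∀ a b c : P, Commute (a * b * a⁻¹ * b⁻¹) c) :
    ∃ f : P → P → P, BForm f ∧ ∀ (τ : MulAut P) a b, f (τ a) (τ b) = τ (f a b) := by
  obtain ⟨k, hk⟩ := hodd
  have hpow : ∀ x : P, x ^ (k + 1) * x ^ (k + 1) = x := by
    intro x
    rw [← pow_add, show k + 1 + (k + 1) = Nat.card P + 1 by omega, pow_succ, pow_card_eq_one',
      one_mul]
  have hc : ∀ a b c : P, Commute (cf a b) c := cf_central h
  refine ⟨fun a b => cf a b ^ (k + 1), ⟨?_, ?_, ?_, ?_, ?_, ?_⟩, ?_⟩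
  · intro a b c
    exact ((hc a b c).pow_left _).eq
  · intro a b c
    rw [cf_mul_left h, (hc a c _).mul_pow]
  · intro a b c
    rw [cf_mul_right h, (hc a b _).mul_pow]
  · intro a b c
    rw [cf_of_comm _ c ((hc a b c).pow_left _).eq, one_pow]
  · intro a b c
    rw [cf_of_comm c _ ((hc a b c).pow_left _).eq.symm, one_pow]
  · intro a b
    rw [← cf_comm a b, cf_swap a b, mul_assoc (a * b)]
    congr 1
    nth_rw 2 [← hpow (cf a b)]
    rw [inv_pow]; group
  · intro τ a b
    have := cf_map τ.toMonoidHom a b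
    change cf (τ a) (τ b) = τ (cf a b) at this
    simp only [this, map_pow]

lemma skew_split {B Z : Type*} [CommGroup B] [Finite B] [CommGroup Z] (ω : B →* B →* Z)
    (alt : ∀ b, ω b b = 1) : ∃ F : B →* B →* Z, ∀ a b, ω a b = F a b * (F b a)⁻¹ := by
  obtain ⟨ι, _, n, hn, ⟨e⟩⟩ := CommGroup.equiv_prod_multiplicative_zmod_of_finite B
  classical
  have hanti : ∀ x y, (ω x y)⁻¹ = ω y x := by
    intro x y
    have := alt (x * y)
    rw [map_mul, map_mul, MonoidHom.mul_apply, MonoidHom.mul_apply, alt, alt, one_mul, mul_one]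
      at this
    exact inv_eq_of_mul_eq_one_left this
  let pr : ι → B →* B := fun i =>
    e.symm.toMonoidHom.comp ((MonoidHom.mulSingle (fun i => Multiplicative (ZMod (n i))) i).comp
      ((Pi.evalMonoidHom (fun i => Multiplicative (ZMod (n i))) i).comp e.toMonoidHom))
  have hprod : ∀ a, ∏ i, pr i a = a := by
    intro a
    apply e.injective
    rw [map_prod]
    simp only [pr, MonoidHom.comp_apply, MulEquiv.toMonoidHom_eq_coe, MonoidHom.coe_coe,
      MulEquiv.apply_symm_apply, MonoidHom.mulSingle_apply, Pi.evalMonoidHom_apply]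
    exact Finset.univ_prod_mulSingle (e a)
  have hdiag : ∀ i a b, ω (pr i a) (pr i b) = 1 := by
    intro i a b
    have hgen : ∃ g : B, ∀ x, ∃ k : ℕ, pr i x = g ^ k := by
      refine ⟨e.symm (Pi.mulSingle i (Multiplicative.ofAdd 1)), fun x => ?_⟩
      have : NeZero (n i) := ⟨by have := hn i; omega⟩
      refine ⟨(Multiplicative.toAdd (e x i)).val, ?_⟩
      rw [← map_pow, ← Pi.mulSingle_pow, ← ofAdd_nsmul]
      simp [pr]
    obtain ⟨g, hg⟩ := hgen
    obtain ⟨k, hk⟩ := hg a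
    obtain ⟨l, hl⟩ := hg b
    rw [hk, hl, map_pow, map_pow, MonoidHom.pow_apply, alt]; simp
  let r : ι ≃ Fin (Fintype.card ι) := Fintype.equivFin ι
  let F : B →* B →* Z := ∏ i, ∏ j, if r i < r j then
    (MonoidHom.compHom' (pr j)).comp (ω.comp (pr i)) else 1
  have hF : ∀ a b, F a b = ∏ i, ∏ j, if r i < r j then ω (pr i a) (pr j b) else 1 := by
    intro a b
    simp only [F, MonoidHom.finsetProd_apply]
    refine Finset.prod_congr rfl fun i _ => Finset.prod_congr rfl fun j _ => ?_
    split_ifs <;> rfl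
  refine ⟨F, fun a b => ?_⟩
  rw [hF, hF]
  rw [Finset.prod_comm (f := fun i j => if r i < r j then ω (pr i b) (pr j a) else 1)]
  rw [← Finset.prod_inv_distrib, ← Finset.prod_mul_distrib]
  have h1 : ω a b = ∏ i, ∏ j, ω (pr i a) (pr j b) := by
    conv_lhs => rw [← hprod a, ← hprod b]
    simp only [map_prod, MonoidHom.finsetProd_apply]
    first | rfl | exact Finset.prod_comm
  rw [h1]
  refine Finset.prod_congr rfl fun i _ => ?_
  rw [← Finset.prod_inv_distrib, ← Finset.prod_mul_distrib]
  refine Finset.prod_congr rfl fun j _ => ?_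
  rcases lt_trichotomy (r i) (r j) with hl | hl | hl
  · rw [if_pos hl, if_neg hl.not_gt]; simp
  · have := r.injective hl
    subst this
    simp [hdiag]
  · rw [if_neg hl.not_gt, if_pos hl, hanti]; simp

lemma bform_any {P : Type*} [Group P] [Finite P]
    (h : ∀ a b c : P, Commute (a * b * a⁻¹ * b⁻¹) c) :
    ∃ f : P → P → P, BForm f := by
  have hcen : ∀ z ∈ commutator P, ∀ c, z * c = c * z := by
    intro z hz c
    have : commutator P ≤ Subgroup.center P := by
      rw [commutator_def, Subgroup.commutator_le]
      intro a _ b _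
      rw [Subgroup.mem_center_iff]
      intro c
      exact (h a b c).eq.symm
    exact (Subgroup.mem_center_iff.mp (this hz) c).symm
  let _ : CommGroup (commutator P) :=
    { (inferInstance : Group (commutator P)) with
      mul_comm := fun a b => Subtype.ext (hcen a a.2 b) }
  have hmem : ∀ a b : P, cf a b ∈ commutator P := by
    intro a b
    have : cf a b = b⁻¹ * a⁻¹ * (b⁻¹)⁻¹ * (a⁻¹)⁻¹ := by simp [cf]
    rw [this, commutator_def]
    exact Subgroup.commutator_mem_commutator (Subgroup.mem_top _) (Subgroup.mem_top _)
  let ω0 : P →* P →* commutator P := MonoidHom.mk' (fun a => MonoidHom.mk'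
    (fun b => ⟨cf a b, hmem a b⟩) (fun b c => Subtype.ext (cf_mul_right h a b c)))
    (fun a b => MonoidHom.ext fun c => Subtype.ext (cf_mul_left h a b c))
  let L : (P →* commutator P) →* (Abelianization P →* commutator P) :=
    MonoidHom.mk' (fun φ => Abelianization.lift φ) (fun φ ψ => by
      apply Abelianization.hom_ext
      ext x
      simp)
  let ω : Abelianization P →* Abelianization P →* commutator P := Abelianization.lift (L.comp ω0)
  have hω : ∀ a b : P, ω (Abelianization.of a) (Abelianization.of b) = ⟨cf a b, hmem a b⟩ := by
    intro a b
    simp [ω, L, ω0]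
  obtain ⟨F, hF⟩ := skew_split ω (by
    intro b
    obtain ⟨b, rfl⟩ := QuotientGroup.mk_surjective b
    exact (hω b b).trans (Subtype.ext (cf_of_comm b b rfl)))
  have hof : ∀ z : commutator P, Abelianization.of (z : P) = 1 := by
    intro z
    exact (QuotientGroup.eq_one_iff (z : P)).mpr z.2
  refine ⟨fun a b => F (Abelianization.of a) (Abelianization.of b), ⟨?_, ?_, ?_, ?_, ?_, ?_⟩⟩
  · intro a b c
    exact hcen _ (Subtype.prop _) c
  · intro a b c
    simp
  · intro a b c
    simp
  · intro a b c
    rw [hof]; simp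
  · intro a b c
    rw [hof]; simp
  · intro a b
    have h1 := hF (Abelianization.of a) (Abelianization.of b)
    rw [hω, eq_mul_inv_iff_mul_eq] at h1
    rw [← h1, ← cf_comm a b]
    simp [mul_assoc]


lemma map_cocycle {Q : Type*} [Group Q] [Finite Q] (p : ℕ) [Fact p.Prime] (N : Subgroup Q)
    [N.Normal] (m : ℕ) (hcard : Nat.card N = p ^ m) (hidx : ¬ p ∣ N.index)
    (f : N → N → N) (hf : BForm f)
    (hinv : (∀ (τ : MulAut N) a b, f (τ a) (τ b) = τ (f a b)) ∨ N = ⊤) :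
    ∃ (_ : AddCommGroup N) (φ : Q → N →+ N) (ψ : Q → N),
      (∀ g, Function.Injective (φ g)) ∧ (∀ g h, ψ (g * h) = ψ g + φ g (ψ h)) ∧
      (∀ g, ψ g = 0 → g ^ p = 1 → g = 1) := by
  have hp : p.Prime := Fact.out
  obtain ⟨C, hC⟩ := Subgroup.exists_right_complement'_of_coprime (N := N) (by
    rw [hcard]; exact Nat.Coprime.pow_left m ((Nat.Prime.coprime_iff_not_dvd hp).mpr hidx))
  have hCcard : Nat.card C = N.index := (hC.symm.index_eq_card).symm
  have hex : ∀ g : Q, ∃ x : N × C, (x.1 : Q) * x.2 = g := hC.2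
  choose d hd using hex
  have huniq : ∀ (g : Q) (x : N × C), (x.1 : Q) * x.2 = g → d g = x := fun g x hx =>
    hC.1 ((hd g).trans hx.symm)
  obtain ⟨inst, φ, ψ, h1, h2, h3⟩ := cocycle_of_form (G := Q) hf
    (fun g => MulAut.conjNormal ((d g).2 : Q)) (by
      intro g a b
      rcases hinv with hinv | hN
      · exact hinv _ a b
      · have hc1 : ((d g).2 : Q) = 1 := by
          have : C = ⊥ := by
            rw [← Subgroup.card_eq_one, hCcard, hN, Subgroup.index_top]
          have h : ∀ x ∈ C, x = 1 := fun x hx => by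
            rw [this] at hx
            exact Subgroup.mem_bot.mp hx
          exact h _ (d g).2.2
        rw [hc1]; simp)
    (fun g => (d g).1) (by
      intro g h
      have := huniq (g * h) ((d g).1 * MulAut.conjNormal ((d g).2 : Q) (d h).1,
        (d g).2 * (d h).2) (by
          simp only [Subgroup.coe_mul, MulAut.conjNormal_apply]
          conv_rhs => rw [← hd g, ← hd h]
          group)
      rw [this])
  refine ⟨inst, φ, ψ, h1, h2, fun g hg hgp => ?_⟩
  have h4 := h3 g hg
  have hgC : g ∈ C := by
    rw [← hd g, h4]; simp
  have h5 : orderOf g ∣ Nat.card C := by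
    have := orderOf_dvd_natCard (⟨g, hgC⟩ : C)
    rwa [Subgroup.orderOf_mk] at this
  rw [hCcard] at h5
  have h6 : orderOf g ∣ p := orderOf_dvd_of_pow_eq_one hgp
  rcases (Nat.dvd_prime hp).mp h6 with h7 | h7
  · exact orderOf_eq_one_iff.mp h7
  · exact absurd (h7 ▸ h5) hidx

lemma prime_cocycle.{u} {G : Type u} [Group G] [Finite G] (p : ℕ) [Fact p.Prime] (P : Sylow p G)
    (hP : ∀ a ∈ P, ∀ b ∈ P, ∀ c ∈ P, Commute (a * b * a⁻¹ * b⁻¹) c)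
    (K N : Subgroup G) (hK : K.Normal) (hN : N.Normal) (hKN : K ≤ N)
    (hPN : (P : Subgroup G) ≤ N) (hpK : ¬ p ∣ Nat.card K) (m : ℕ) (hm : K.relIndex N = p ^ m)
    (h2 : p ≠ 2 ∨ N = ⊤) :
    ∃ (A : Type u) (_ : AddCommGroup A) (φ : G → A →+ A) (ψ : G → A),
      (∀ g, Function.Injective (φ g)) ∧ (∀ g h, ψ (g * h) = ψ g + φ g (ψ h)) ∧
      (∀ g, ψ g = 0 → g ^ p = 1 → g = 1) ∧ Nat.card A = p ^ (Nat.card G).factorization p := by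
  have hp : p.Prime := Fact.out
  have hPidx : ¬ p ∣ (P : Subgroup G).index := P.not_dvd_index
  have hNidx : ¬ p ∣ N.index := fun h => hPidx (h.trans (Subgroup.index_dvd_of_le hPN))
  set q := QuotientGroup.mk' K with hq
  have hqs : Function.Surjective q := QuotientGroup.mk'_surjective K
  have hker : q.ker = K := QuotientGroup.ker_mk' K
  let M : Subgroup (G ⧸ K) := N.map q
  have hMn : M.Normal := hN.map q hqs
  have hcm : M.comap q = N := by
    rw [Subgroup.comap_map_eq, hker, sup_eq_left.mpr hKN]
  have hMidx : M.index = N.index := by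
    rw [← hcm, Subgroup.index_comap_of_surjective _ hqs]
  have hNcard : Nat.card N = Nat.card K * p ^ m := by
    rw [← hm, ← Subgroup.relIndex_bot_left, ← Subgroup.relIndex_bot_left]
    exact (Subgroup.relIndex_mul_relIndex ⊥ K N bot_le hKN).symm
  have hMcard : Nat.card M = p ^ m := by
    have h := card_comap_mk K M
    rw [← hq, hcm, hNcard, mul_comm] at h
    exact (Nat.eq_of_mul_eq_mul_right Nat.card_pos h).symm
  have hMP : M = (P : Subgroup G).map q := by
    have hle : (P : Subgroup G).map q ≤ M := Subgroup.map_mono hPN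
    apply le_antisymm _ hle
    rw [← Subgroup.relIndex_eq_one]
    have d1 : ((P : Subgroup G).map q).relIndex M ∣ p ^ m := by
      rw [← hMcard]; exact Subgroup.relIndex_dvd_card _ _
    have d2 : ¬ p ∣ ((P : Subgroup G).map q).relIndex M := by
      intro h
      apply hPidx
      exact (h.trans (Subgroup.relIndex_dvd_index_of_le hle)).trans
        (Subgroup.index_map_dvd _ hqs)
    obtain ⟨k, hk, hk2⟩ := (Nat.dvd_prime_pow hp).mp d1
    rw [hk2] at d2 ⊢
    rcases Nat.eq_zero_or_pos k with h0 | h0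
    · rw [h0, pow_zero]
    · exact absurd (dvd_pow_self p h0.ne') d2
  have hMcl : ∀ a b c : M, Commute (a * b * a⁻¹ * b⁻¹) c := by
    rintro ⟨a, ha⟩ ⟨b, hb⟩ ⟨c, hc⟩
    have ha' := ha
    have hb' := hb
    have hc' := hc
    rw [hMP] at ha' hb' hc'
    obtain ⟨x, hx, rfl⟩ := ha'
    obtain ⟨y, hy, rfl⟩ := hb'
    obtain ⟨z, hz, rfl⟩ := hc'
    apply Subtype.ext
    have := congrArg q (hP x hx y hy z hz).eq
    simpa using this
  have hform : ∃ f : M → M → M, BForm f ∧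
      ((∀ (τ : MulAut M) a b, f (τ a) (τ b) = τ (f a b)) ∨ M = ⊤) := by
    rcases h2 with h2 | h2
    · obtain ⟨f, hf, hf2⟩ := bform_odd (P := M)
        (by rw [hMcard]; exact (hp.odd_of_ne_two h2).pow) hMcl
      exact ⟨f, hf, Or.inl hf2⟩
    · obtain ⟨f, hf⟩ := bform_any hMcl
      refine ⟨f, hf, Or.inr ?_⟩
      rw [← Subgroup.index_eq_one, hMidx, h2, Subgroup.index_top]
  obtain ⟨f, hf, hinv⟩ := hform
  obtain ⟨inst, φ, ψ, h1, h3, h4⟩ := map_cocycle p M m hMcard (by rwa [hMidx]) f hf hinv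
  refine ⟨M, inst, fun g => φ (q g), fun g => ψ (q g), fun g => h1 _, ?_, ?_, ?_⟩
  · intro g h
    simp only [map_mul, h3]
  · intro g hg hgp
    have h5 := h4 (q g) hg (by rw [← map_pow, hgp, map_one])
    have hgK : g ∈ K := by rw [← hker]; exact h5
    have h6 : orderOf g ∣ Nat.card K := by
      have := orderOf_dvd_natCard (⟨g, hgK⟩ : K)
      rwa [Subgroup.orderOf_mk] at this
    rcases (Nat.dvd_prime hp).mp (orderOf_dvd_of_pow_eq_one hgp) with h7 | h7
    · exact orderOf_eq_one_iff.mp h7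
    · exact absurd (h7 ▸ h6) hpK
  · rw [hMcard]
    congr 1
    have hG : Nat.card G = p ^ m * (Nat.card K * N.index) := by
      rw [← N.card_mul_index, hNcard]; ring
    have hne : Nat.card K * N.index ≠ 0 :=
      mul_ne_zero Nat.card_pos.ne' Subgroup.index_ne_zero_of_finite
    have hnd : ¬ p ∣ Nat.card K * N.index := by
      rw [hp.dvd_mul]; tauto
    rw [hG, Nat.factorization_mul (pow_ne_zero _ hp.ne_zero) hne, hp.factorization_pow]
    simp [Nat.factorization_eq_zero_of_not_dvd hnd]

lemma iyb_of_bij {G A : Type*} [Group G] [AddCommGroup A] (φ : G → A →+ A) (ψ : G → A)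
    (hψ : ∀ g h, ψ (g * h) = ψ g + φ g (ψ h)) (hb : Function.Bijective ψ) : IsIYB G := by
  let e : G ≃ A := Equiv.ofBijective ψ hb
  have he : ∀ g h, e (g * h) = e g + φ g (e h) := hψ
  refine ⟨fun a b => e.symm (e a + e b), fun a => e.symm (- e a), e.symm 0, ?_, ?_, ?_, ?_, ?_⟩
  · intro a b
    simp only [add_comm]
  · intro a b c
    simp [add_assoc]
  · intro a
    simp
  · intro a
    simp
  · intro a b c
    apply e.injective
    simp [he]
    abel

/-- a finite soluble `2`-nilpotent group (one possessing a normal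
Hall `2'`-subgroup, i.e. a normal `2`-complement) all of whose Sylow subgroups have
nilpotency class at most `2` is an IYB-group. -/
theorem isIYB_of_two_nilpotent
    {G : Type*} [Group G] [Finite G] (hsol : IsSolvable G)
    (hSyl : ∀ p : ℕ, p.Prime → ∀ P : Sylow p G,
      lowerCentralSeries (P : Subgroup G) 2 = ⊥)
    (h2nil : ∃ H : Subgroup G, H.Normal ∧ Odd (Nat.card H) ∧
      ∃ n : ℕ, H.index = 2 ^ n) :
    IsIYB G := by
  obtain ⟨H, hHn, hHo, hHi⟩ := h2nil
  have hcl : ∀ p : ℕ, p.Prime → ∀ P : Sylow p G,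
      ∀ a ∈ P, ∀ b ∈ P, ∀ c ∈ P, Commute (a * b * a⁻¹ * b⁻¹) c := by
    intro p hp P a ha b hb c hc
    have h := hSyl p hp P
    have h1 : ⁅⁅(P : Subgroup G), (P : Subgroup G)⁆, (P : Subgroup G)⁆ = ⊥ := h
    rw [Subgroup.commutator_eq_bot_iff_le_centralizer] at h1
    have h2 := h1 (Subgroup.commutator_mem_commutator (g₁ := a) (g₂ := b) ha hb)
    exact (Subgroup.mem_centralizer_iff.mp h2 c hc).symm
  have key : ∀ i : (Nat.card G).primeFactors,
      ∃ (A : Type _) (_ : AddCommGroup A) (φ : G → A →+ A) (ψ : G → A),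
      (∀ g, Function.Injective (φ g)) ∧ (∀ g h, ψ (g * h) = ψ g + φ g (ψ h)) ∧
      (∀ g, ψ g = 0 → g ^ (i : ℕ) = 1 → g = 1) ∧
      Nat.card A = (i : ℕ) ^ (Nat.card G).factorization i := by
    rintro ⟨p, hpi⟩
    have hp : p.Prime := Nat.prime_of_mem_primeFactors hpi
    have : Fact p.Prime := ⟨hp⟩
    let P : Sylow p G := default
    by_cases hp2 : p = 2
    · subst hp2
      obtain ⟨n, hn⟩ := hHi
      exact prime_cocycle 2 P (hcl 2 hp P) H ⊤ hHn inferInstance le_top le_top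
        hHo.not_two_dvd_nat n (by rw [Subgroup.relIndex_top_right, hn])
        (Or.inr rfl)
    · obtain ⟨K, N, hK, hN, hKN, hPN, hpK, m, hm⟩ :=
        p_length_one p hp2 _ G rfl hsol H hHn hHo hHi P (hcl p hp P)
      exact prime_cocycle p P (hcl p hp P) K N hK hN hKN hPN hpK m hm (Or.inl hp2)
  choose A inst φ ψ h1 h2 h3 h4 using key
  let Φ : G → ((i : (Nat.card G).primeFactors) → A i) →+ ((i : (Nat.card G).primeFactors) → A i) :=
    fun g => AddMonoidHom.mk' (fun v i => φ i g (v i)) (by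
      intro v w
      funext i
      simp)
  let Ψ : G → ((i : (Nat.card G).primeFactors) → A i) := fun g i => ψ i g
  have hΨ : ∀ g h, Ψ (g * h) = Ψ g + Φ g (Ψ h) := by
    intro g h
    funext i
    exact h2 i g h
  have hΦ : ∀ g v, Φ g v = 0 → v = 0 := by
    intro g v hv
    funext i
    apply h1 i g
    rw [Pi.zero_apply, map_zero]
    exact congrFun hv i
  have hΨ1 : Ψ 1 = 0 := by
    have := hΨ 1 1
    rw [mul_one] at this
    exact hΦ 1 _ (left_eq_add.mp this)
  let L : Subgroup G :=
    { carrier := {g | Ψ g = 0}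
      one_mem' := hΨ1
      mul_mem' := by
        intro a b ha hb
        change Ψ (a * b) = 0
        rw [hΨ, show Ψ a = 0 from ha, show Ψ b = 0 from hb, map_zero, add_zero]
      inv_mem' := by
        intro a ha
        change Ψ a⁻¹ = 0
        have h := hΨ a a⁻¹
        rw [mul_inv_cancel, hΨ1, show Ψ a = 0 from ha, zero_add] at h
        exact hΦ a _ h.symm }
  have hL : L = ⊥ := by
    rw [← Subgroup.card_eq_one]
    by_contra hne
    obtain ⟨p, hp, hpd⟩ := Nat.exists_prime_and_dvd hne
    have : Fact p.Prime := ⟨hp⟩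
    obtain ⟨x, hx⟩ := exists_prime_orderOf_dvd_card' p hpd
    have hpm : p ∈ (Nat.card G).primeFactors :=
      Nat.mem_primeFactors.mpr ⟨hp, hpd.trans L.card_subgroup_dvd_card, Nat.card_pos.ne'⟩
    have hx0 : Ψ (x : G) = 0 := x.2
    have hxp : (x : G) ^ p = 1 := by
      have := pow_orderOf_eq_one x
      rw [hx] at this
      simpa using congrArg Subtype.val this
    have h5 := h3 ⟨p, hpm⟩ x (congrFun hx0 _) hxp
    have h6 : x = 1 := Subtype.ext h5
    rw [h6, orderOf_one] at hx
    exact hp.one_lt.ne hx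
  have hinj : Function.Injective Ψ := by
    intro a b hab
    have h := hΨ a (a⁻¹ * b)
    rw [mul_inv_cancel_left, hab] at h
    have h5 : a⁻¹ * b ∈ L := hΦ a _ (left_eq_add.mp h)
    rw [hL, Subgroup.mem_bot] at h5
    exact (inv_mul_eq_one.mp h5)
  have hcard : Nat.card ((i : (Nat.card G).primeFactors) → A i) = Nat.card G := by
    rw [Nat.card_pi]
    simp only [h4]
    rw [Finset.prod_coe_sort (Nat.card G).primeFactors
      (fun p => p ^ (Nat.card G).factorization p)]
    exact Nat.prod_factorization_pow_eq_self Nat.card_pos.ne'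
  have hfin : Finite ((i : (Nat.card G).primeFactors) → A i) :=
    Nat.finite_of_card_ne_zero (by rw [hcard]; exact Nat.card_pos.ne')
  have hbij : Function.Bijective Ψ :=
    (Nat.bijective_iff_injective_and_card Ψ).mpr ⟨hinj, hcard.symm⟩
  exact iyb_of_bij Φ Ψ hΨ hbij
end

section
/- Every finite soluble group G all of whose Sylow subgroups have nilpotency class at most 2 is the multiplicative group of a skew left brace of nilpotent type. -/
/-- A finite group is an `𝒩·YB`-group iff it is the multiplicative group of a skew
left brace of nilpotent type: there is a second, nilpotent group structure `(G, +)`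
(transported from a nilpotent group `A` along a bijection `f`) satisfying the skew
brace law `x(y + z) = xy − x + xz`. -/
def IsNilpotentTypeSkewBraceGroup (G : Type u) [Group G] : Prop :=
  ∃ (A : Type u) (_ : Group A) (f : G ≃ A),
    Group.IsNilpotent A ∧
    ∀ x y z : G, x * f.symm (f y * f z) = f.symm (f (x * y) * (f x)⁻¹ * f (x * z))

open scoped commutatorElement

namespace NYB

/-- Gluing a brace on `H` with the trivial brace on a normal subgroup `N`. -/
theorem glue {G A : Type u} [Group G] [Group A] (N H : Subgroup G) [hN : N.Normal]
    (hNH : ∀ g : G, ∃ n : N, ∃ h : H, g = n * h)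
    (f : H ≃ A) (hf : ∀ x y z : H,
      f (x * f.symm (f y * f z)) = f (x * y) * (f x)⁻¹ * f (x * z))
    (hc : ∀ k : H, (k : G) ∈ N → (∀ n : N, (k : G) * n = n * k) ∧
      ∀ h : H, f (k * h) = f k * f h ∧ f (k * h) = f h * f k)
    [Group.IsNilpotent N] [Group.IsNilpotent A] :
    ∃ (B : Type u) (_ : Group B) (F : G ≃ B) (π : (N × A) →* B), Group.IsNilpotent B ∧
      (∀ (n : N) (h : H), F (n * h) = π (n, f h)) ∧
      ∀ x y z : G, x * F.symm (F y * F z) = F.symm (F (x * y) * (F x)⁻¹ * F (x * z)) := by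
  classical
  have f1 : f 1 = 1 := by
    have := ((hc 1 (by simp)).2 1).1
    simpa using this
  let I : Subgroup (N × A) :=
    { carrier := {x | ∃ k : H, (x.1 : G) = (k : G)⁻¹ ∧ x.2 = f k}
      one_mem' := ⟨1, by simp [f1]⟩
      mul_mem' := by
        rintro ⟨a, b⟩ ⟨a', b'⟩ ⟨k, h1, h2⟩ ⟨k', h1', h2'⟩
        have hk : (k : G) ∈ N := by
          have := N.inv_mem a.2
          simp only at h1
          rw [h1] at this; simpa using this
        refine ⟨k * k', ?_, ?_⟩
        · have h3 := (hc k hk).1 a'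
          simp only at h1 h1'
          simp only [Prod.mk_mul_mk, Subgroup.coe_mul, h1, h1', mul_inv_rev]
          rw [h1'] at h3
          rw [inv_mul_eq_iff_eq_mul, ← mul_assoc, h3]; group
        · simp only at h2 h2'
          simp [h2, h2', ((hc k hk).2 k').1]
      inv_mem' := by
        rintro ⟨a, b⟩ ⟨k, h1, h2⟩
        have hk : (k : G) ∈ N := by
          have := N.inv_mem a.2
          simp only at h1
          rw [h1] at this; simpa using this
        refine ⟨k⁻¹, ?_, ?_⟩
        · simp only at h1
          simp [h1]
        · simp only at h2
          have := ((hc k hk).2 k⁻¹).1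
          rw [mul_inv_cancel, f1] at this
          simp [h2, inv_eq_iff_mul_eq_one, ← this] }
  have hI : ∀ n : N, ∀ a : A, (n, a) ∈ I ↔ ∃ k : H, (n : G) = (k : G)⁻¹ ∧ a = f k :=
    fun _ _ => Iff.rfl
  have hInorm : I.Normal := by
    constructor
    rintro ⟨a, b⟩ ⟨k, h1, h2⟩ ⟨n, c⟩
    have hk : (k : G) ∈ N := by
      have := N.inv_mem a.2
      simp only at h1
      rw [h1] at this; simpa using this
    refine ⟨k, ?_, ?_⟩
    · simp only at h1
      have h3 := (hc k hk).1 n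
      simp only [Prod.mk_mul_mk, Prod.inv_mk, Subgroup.coe_mul, h1, Subgroup.coe_inv]
      rw [mul_inv_eq_iff_eq_mul, mul_inv_eq_iff_eq_mul, mul_assoc, ← h3]; group
    · simp only at h2
      have h3 := (hc k hk).2 (f.symm c)
      have := h3.1.symm.trans h3.2
      simp only [Equiv.apply_symm_apply] at this
      simp only [Prod.mk_mul_mk, Prod.inv_mk, h2]
      rw [← this]; group
  let π : N × A →* (N × A) ⧸ I := QuotientGroup.mk' I
  have key : ∀ (n n' : N) (h h' : H), (n : G) * h = n' * h' ↔ π (n, f h) = π (n', f h') := by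
    intro n n' h h'
    have e : π (n, f h) = π (n', f h') ↔ (n, f h)⁻¹ * (n', f h') ∈ I := QuotientGroup.eq
    rw [e, Prod.inv_mk, Prod.mk_mul_mk, hI]
    constructor
    · intro heq
      have hk : ((h' * h⁻¹ : H) : G) = (n' : G)⁻¹ * n := by
        have : (n : G) = n' * h' * (h : G)⁻¹ := by rw [← heq]; group
        rw [this]; push_cast; group
      refine ⟨h' * h⁻¹, ?_, ?_⟩
      · rw [hk]; push_cast; group
      · have hkN : ((h' * h⁻¹ : H) : G) ∈ N := by
          rw [hk]; exact N.mul_mem (N.inv_mem n'.2) n.2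
        have := ((hc _ hkN).2 h).2
        rw [inv_mul_cancel_right] at this
        rw [this]; group
    · rintro ⟨k, h1, h2⟩
      have hk : (k : G) ∈ N := by
        have := N.inv_mem (n⁻¹ * n').2
        rw [h1] at this; simpa using this
      have h3 : f h' = f (k * h) := by
        rw [((hc k hk).2 h).2, ← h2]; group
      have h4 := f.injective h3
      rw [h4]
      push_cast at h1 ⊢
      have : (n' : G) = n * (k : G)⁻¹ := by rw [← h1]; group
      rw [this]; group
  choose sn sh hs using hNH
  let F0 : G → (N × A) ⧸ I := fun g => π (sn g, f (sh g))
  have hF0 : ∀ (n : N) (h : H), F0 (n * h) = π (n, f h) := fun n h =>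
    ((key _ _ _ _).1 (hs (n * h)).symm)
  have hbij : Function.Bijective F0 := by
    constructor
    · intro a b hab
      have := (key _ _ _ _).2 hab
      rw [← hs, ← hs] at this
      exact this
    · intro b
      obtain ⟨⟨n, a⟩, rfl⟩ := QuotientGroup.mk'_surjective I b
      refine ⟨n * (f.symm a : H), ?_⟩
      rw [hF0]; simp [π]
  let F : G ≃ (N × A) ⧸ I := Equiv.ofBijective F0 hbij
  have hF : ∀ (n : N) (h : H), F (n * h) = π (n, f h) := hF0
  refine ⟨(N × A) ⧸ I, inferInstance, F, π, inferInstance, hF, ?_⟩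
  intro x y z
  apply F.injective
  rw [Equiv.apply_symm_apply]
  rw [hs x, hs y, hs z]
  generalize sn x = n, sh x = h, sn y = n1, sh y = h1, sn z = n2, sh z = h2
  have cj : ∀ (m : N) (l : H), (n : G) * h * (m * l) =
      ((n * ⟨h * m * (h : G)⁻¹, hN.conj_mem _ m.2 _⟩ : N) : G) * ((h * l : H) : G) := by
    intro m l; push_cast; group
  have e1 : F.symm (F (n1 * h1) * F (n2 * h2)) =
      ((n1 * n2 : N) : G) * (f.symm (f h1 * f h2) : H) := by
    apply F.injective
    rw [Equiv.apply_symm_apply, hF, hF, hF, ← map_mul, Equiv.apply_symm_apply]; rfl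
  rw [e1, cj, cj, cj, hF, hF, hF, hF, hf, ← map_inv π, ← map_mul π, ← map_mul π]
  congr 1
  refine Prod.ext ?_ rfl
  apply Subtype.ext
  simp only [Prod.mk_mul_mk, Prod.inv_mk]
  push_cast
  group

/-- A fixed point in a coset, for the action of a `q`-group on a `p`-group. -/
theorem fix_coset {G : Type u} [Group G] [Finite G] {p q : ℕ} [Fact p.Prime] [Fact q.Prime]
    (hpq : p ≠ q) (V Q : Subgroup G) (hV : IsPGroup p V) (hQ : IsPGroup q Q)
    (hn : ∀ y ∈ Q, ∀ v ∈ V, y * v * y⁻¹ ∈ V) (x : G)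
    (hx : ∀ y ∈ Q, x⁻¹ * (y * x * y⁻¹) ∈ V) :
    ∃ v ∈ V, ∀ y ∈ Q, y * (x * v) = x * v * y := by
  let act : MulAction Q {g : G // x⁻¹ * g ∈ V} :=
    { smul := fun y g => ⟨y * g.1 * (y : G)⁻¹, by
        have h1 := hx y y.2
        have h2 := hn y y.2 _ g.2
        have := V.mul_mem h1 h2
        convert this using 1
        group⟩
      one_smul := fun g => Subtype.ext (by
        change ((1 : Q) : G) * g.1 * ((1 : Q) : G)⁻¹ = g.1; simp)
      mul_smul := fun y z g => Subtype.ext (by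
        change ((y * z : Q) : G) * g.1 * ((y * z : Q) : G)⁻¹ = y * (z * g.1 * (z : G)⁻¹) * (y : G)⁻¹
        push_cast; group) }
  have hcard : Nat.card {g : G // x⁻¹ * g ∈ V} = Nat.card V :=
    Nat.card_congr ⟨fun g => ⟨x⁻¹ * g.1, g.2⟩, fun v => ⟨x * v.1, by simp⟩,
      fun g => by simp, fun v => by simp⟩
  have hnd : ¬ q ∣ Nat.card {g : G // x⁻¹ * g ∈ V} := by
    rw [hcard]
    obtain ⟨n, hn⟩ := IsPGroup.iff_card.1 hV
    rw [hn]
    intro h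
    have := (Fact.out : q.Prime).dvd_of_dvd_pow h
    exact hpq ((Nat.prime_dvd_prime_iff_eq Fact.out Fact.out).1 this).symm
  obtain ⟨g, hg⟩ := hQ.nonempty_fixed_point_of_prime_not_dvd_card _ hnd
  refine ⟨x⁻¹ * g.1, g.2, fun y hy => ?_⟩
  have h1 : y * g.1 * y⁻¹ = g.1 := congrArg Subtype.val (hg ⟨y, hy⟩)
  rw [mul_inv_eq_iff_eq_mul] at h1
  rw [mul_inv_cancel_left, h1]

/-- Fixed points in the commutator lie in the derived subgroup. -/
theorem fixed_mem_commutator {G : Type u} [Group G] [Finite G] {p q : ℕ} [Fact p.Prime]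
    [Fact q.Prime] (hpq : p ≠ q) (U Q : Subgroup G) [hUn : U.Normal]
    (hU : IsPGroup p U) (hQ : IsPGroup q Q) (c : G) (hc : c ∈ ⁅U, Q⁆)
    (hcQ : ∀ y ∈ Q, y * c = c * y) : c ∈ ⁅U, U⁆ := by
  classical
  have := Fintype.ofFinite Q
  let φ : U →* Abelianization U :=
    ∏ y : Q, Abelianization.of.comp (MulAut.conjNormal (y : G) : MulAut U).toMonoidHom
  have hφ : ∀ u : U, φ u = ∏ y : Q, Abelianization.of ((MulAut.conjNormal (y : G) : MulAut U) u) := by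
    intro u; simp [φ, MonoidHom.finsetProd_apply]
  have hinv : ∀ (u : U) (z : Q), φ ((MulAut.conjNormal (z : G) : MulAut U) u) = φ u := by
    intro u z
    rw [hφ, hφ]
    refine Fintype.prod_equiv (Equiv.mulRight z) _ _ fun y => ?_
    simp
  have hle : ⁅U, Q⁆ ≤ φ.ker.map U.subtype := by
    rw [Subgroup.commutator_le]
    intro u hu y hy
    refine ⟨⟨u, hu⟩ * ((MulAut.conjNormal y : MulAut U) ⟨u, hu⟩)⁻¹, ?_, ?_⟩
    · have := hinv ⟨u, hu⟩ ⟨y, hy⟩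
      simp only at this
      simp [MonoidHom.mem_ker, this]
    · simp [commutatorElement_def, mul_assoc]
  obtain ⟨c', hc', rfl⟩ := hle hc
  have h1 : φ c' = Abelianization.of c' ^ Nat.card Q := by
    rw [hφ, Finset.prod_congr rfl (g := fun _ => Abelianization.of c')]
    · simp [Nat.card_eq_fintype_card]
    · intro y _
      congr 1
      apply Subtype.ext
      have := hcQ y y.2
      simp only [Subgroup.subtype_apply] at this
      simp [this]
  have h2 : Abelianization.of c' ^ Nat.card Q = 1 := by rw [← h1]; exact hc'
  have h3 : c' ∈ commutator U := by
    rw [← Abelianization.ker_of, MonoidHom.mem_ker, ← orderOf_eq_one_iff]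
    obtain ⟨k, hk⟩ := hU c'
    have h4 : orderOf (Abelianization.of c') ∣ p ^ k := by
      apply orderOf_dvd_of_pow_eq_one
      rw [← map_pow, hk, map_one]
    obtain ⟨m, hm⟩ := IsPGroup.iff_card.1 hQ
    have h5 : orderOf (Abelianization.of c') ∣ q ^ m := by
      rw [← hm]; exact orderOf_dvd_of_pow_eq_one h2
    exact Nat.eq_one_of_dvd_coprimes
      (Nat.Coprime.pow _ _ ((Nat.coprime_primes Fact.out Fact.out).2 hpq)) h4 h5
  have := Subgroup.mem_map_of_mem U.subtype h3
  rwa [commutator_def, Subgroup.map_commutator, ← MonoidHom.range_eq_map, Subgroup.range_subtype] at this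

/-- `p`-elements commuting with every `p`-element. -/
def InT {G : Type u} [Group G] (p : ℕ) (t : G) : Prop :=
  (∃ k : ℕ, t ^ p ^ k = 1) ∧ ∀ x : G, (∃ k : ℕ, x ^ p ^ k = 1) → t * x = x * t

/-- `InT` as a subgroup. -/
def T (G : Type u) [Group G] (p : ℕ) : Subgroup G where
  carrier := {t | InT p t}
  one_mem' := ⟨⟨0, by simp⟩, by simp⟩
  mul_mem' := by
    rintro a b ⟨⟨k, hk⟩, ha⟩ ⟨⟨l, hl⟩, hb⟩
    refine ⟨⟨k + l, ?_⟩, fun x hx => ?_⟩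
    · have hab : Commute a b := ha b ⟨l, hl⟩
      rw [hab.mul_pow, pow_add, pow_mul, hk, mul_comm, pow_mul, hl]; simp
    · rw [mul_assoc, hb x hx, ← mul_assoc, ha x hx, mul_assoc]
  inv_mem' := by
    rintro a ⟨⟨k, hk⟩, ha⟩
    refine ⟨⟨k, by simp [hk]⟩, fun x hx => ?_⟩
    have : Commute a x := ha x hx
    exact this.inv_left

theorem mem_T {G : Type u} [Group G] {p : ℕ} {t : G} : t ∈ T G p ↔ InT p t := Iff.rfl

instance T_normal (G : Type u) [Group G] (p : ℕ) : (T G p).Normal := by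
  constructor
  rintro t ⟨⟨k, hk⟩, ht⟩ g
  refine ⟨⟨k, by simp [hk]⟩, fun x ⟨l, hl⟩ => ?_⟩
  have := ht (g⁻¹ * x * g) ⟨l, by
    have : (g⁻¹ * x * g⁻¹⁻¹) ^ p ^ l = 1 := by rw [conj_pow, hl]; simp
    simpa using this⟩
  have h2 : t * (g⁻¹ * x * g) = g⁻¹ * x * g * t := this
  calc g * t * g⁻¹ * x = g * (t * (g⁻¹ * x * g)) * g⁻¹ := by group
    _ = _ := by rw [h2]; group

theorem T_isPGroup (G : Type u) [Group G] (p : ℕ) : IsPGroup p (T G p) := by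
  rintro ⟨t, ⟨k, hk⟩, ht⟩
  exact ⟨k, Subtype.ext (by simpa using hk)⟩

theorem exists_largest {G : Type u} [Group G] [Finite G] (Pr : Subgroup G → Prop) (hb : Pr ⊥)
    (hs : ∀ A B : Subgroup G, A.Normal → B.Normal → Pr A → Pr B → Pr (A ⊔ B)) :
    ∃ U : Subgroup G, U.Normal ∧ Pr U ∧ ∀ V : Subgroup G, V.Normal → Pr V → V ≤ U := by
  obtain ⟨U, hU⟩ := (Set.toFinite {U : Subgroup G | U.Normal ∧ Pr U}).exists_maximal
    ⟨⊥, inferInstance, hb⟩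
  refine ⟨U, hU.prop.1, hU.prop.2, fun V hV hPV => ?_⟩
  have h1 := hU.prop.1
  have : U ⊔ V ∈ {U : Subgroup G | U.Normal ∧ Pr U} :=
    ⟨Subgroup.sup_normal U V, hs U V h1 hV hU.prop.2 hPV⟩
  exact le_sup_right.trans (hU.le_of_ge this le_sup_left)

theorem card_sup_dvd {G : Type u} [Group G] (A B : Subgroup G) [A.Normal] :
    Nat.card (A ⊔ B : Subgroup G) ∣ Nat.card A * Nat.card B := by
  have h1 := Subgroup.relIndex_mul_relIndex ⊥ A (A ⊔ B) bot_le le_sup_left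
  rw [Subgroup.relIndex_bot_left, Subgroup.relIndex_bot_left, Subgroup.relIndex_sup_left] at h1
  rw [← h1]
  exact Nat.mul_dvd_mul_left _ (Subgroup.relIndex_dvd_card _ _)

/-- `U` is the `p`-core. -/
def IsCore {G : Type u} [Group G] (p : ℕ) (U : Subgroup G) : Prop :=
  U.Normal ∧ IsPGroup p U ∧ ∀ V : Subgroup G, V.Normal → IsPGroup p V → V ≤ U

/-- `W` is the core of order prime to p. -/
def IsCore' {G : Type u} [Group G] (p : ℕ) (U : Subgroup G) : Prop :=
  U.Normal ∧ (Nat.card U).Coprime p ∧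
    ∀ V : Subgroup G, V.Normal → (Nat.card V).Coprime p → V ≤ U

theorem exists_core (G : Type u) [Group G] [Finite G] (p : ℕ) :
    ∃ U : Subgroup G, IsCore p U :=
  exists_largest (fun U => IsPGroup p U) IsPGroup.of_bot
    (fun _ _ _ _ hA hB => hA.to_sup_of_normal_left hB)

theorem exists_core' (G : Type u) [Group G] [Finite G] (p : ℕ) :
    ∃ U : Subgroup G, IsCore' p U :=
  exists_largest (fun U => (Nat.card U).Coprime p) (by simp)
    (fun A B _ _ hA hB => Nat.Coprime.of_dvd_left (card_sup_dvd A B) (Nat.Coprime.mul_left hA hB))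

theorem coprime_of_isPGroup {G : Type u} [Group G] [Finite G] {p l : ℕ} (hp : p.Prime)
    (hl : l.Prime) (h : l ≠ p) {V : Subgroup G} (hV : IsPGroup l V) : (Nat.card V).Coprime p := by
  have := Fact.mk hl
  obtain ⟨n, hn⟩ := IsPGroup.iff_card.1 hV
  rw [hn]
  exact Nat.Coprime.pow_left _ ((Nat.coprime_primes hl hp).2 h)

theorem disjoint_of_card {G : Type u} [Group G] [Finite G] {p : ℕ} (hp : p.Prime)
    {U W : Subgroup G} (hU : IsPGroup p U) (hW : (Nat.card W).Coprime p) : Disjoint U W := by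
  have := Fact.mk hp
  obtain ⟨n, hn⟩ := IsPGroup.iff_card.1 hU

  apply Subgroup.disjoint_of_coprime_natCard
  rw [hn]
  exact Nat.Coprime.pow_left _ hW.symm

/-- Every `p`-subgroup has class at most two. -/
def C2 (G : Type u) [Group G] : Prop :=
  ∀ p : ℕ, p.Prime → ∀ S : Subgroup G, IsPGroup p S → ∀ a ∈ S, ∀ b ∈ S, ∀ c ∈ S,
    ⁅a, b⁆ * c = c * ⁅a, b⁆

theorem C2.subgroup {G : Type u} [Group G] (h : C2 G) (H : Subgroup G) : C2 H := by
  intro p hp S hS a ha b hb c hc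
  have := h p hp (S.map H.subtype) (hS.map _) a ⟨a, ha, rfl⟩ b ⟨b, hb, rfl⟩ c ⟨c, hc, rfl⟩
  apply Subtype.ext
  simpa [commutatorElement_def] using this

theorem InT.subgroup {G : Type u} [Group G] {H : Subgroup G} {p : ℕ} {t : H}
    (h : InT p (t : G)) : InT p t := by
  obtain ⟨⟨k, hk⟩, h2⟩ := h
  refine ⟨⟨k, Subtype.ext (by simpa using hk)⟩, fun x ⟨l, hl⟩ => Subtype.ext ?_⟩
  simpa using h2 x ⟨l, by simpa using congrArg Subtype.val hl⟩

theorem commutator_le_T {G : Type u} [Group G] [Finite G] (h : C2 G) {p : ℕ} (hp : p.Prime)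
    (U : Subgroup G) [hUn : U.Normal] (hU : IsPGroup p U) : ⁅U, U⁆ ≤ T G p := by
  have := Fact.mk hp
  rw [Subgroup.commutator_le]
  intro a ha b hb
  have hab : ⁅a, b⁆ ∈ U := by
    rw [commutatorElement_def]
    exact U.mul_mem (U.mul_mem (U.mul_mem ha hb) (U.inv_mem ha)) (U.inv_mem hb)
  refine ⟨?_, fun x ⟨k, hk⟩ => ?_⟩
  · obtain ⟨k, hk⟩ := hU ⟨_, hab⟩
    exact ⟨k, by simpa using congrArg Subtype.val hk⟩
  · have hx : IsPGroup p (Subgroup.zpowers x) := by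
      rintro ⟨y, m, rfl⟩
      refine ⟨k, Subtype.ext ?_⟩
      change (x ^ m) ^ p ^ k = 1
      rw [← zpow_natCast, ← zpow_mul, mul_comm, zpow_mul, zpow_natCast, hk, one_zpow]
    obtain ⟨P, hP⟩ := hx.exists_le_sylow
    have hUP : U ≤ P := hU.le_sylow_of_normal P
    exact h p hp P P.isPGroup' a (hUP ha) b (hUP hb) x (hP (Subgroup.mem_zpowers x))

theorem commutator_conj {G : Type u} [Group G] (U Q : Subgroup G) (g : G)
    (h : ∀ u ∈ U, ∀ y ∈ Q, g * ⁅u, y⁆ * g⁻¹ ∈ ⁅U, Q⁆) :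
    ∀ v ∈ ⁅U, Q⁆, g * v * g⁻¹ ∈ ⁅U, Q⁆ := by
  have : ⁅U, Q⁆ ≤ (⁅U, Q⁆).comap (MulAut.conj g).toMonoidHom := by
    refine Subgroup.commutator_le.2 ?_
    intro u hu y hy
    change (MulAut.conj g) ⁅u, y⁆ ∈ ⁅U, Q⁆
    rw [MulAut.conj_apply]
    exact h u hu y hy
  intro v hv
  simpa using this hv

theorem step {G : Type u} [Group G] [Finite G] (hC : C2 G) {p q : ℕ} (hp : p.Prime) (hq : q.Prime)
    (hpq : p ≠ q) (U W Q : Subgroup G) (hU : IsCore p U) (hW : IsCore' p W) (hQ : IsPGroup q Q)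
    (htop : U ⊔ (W ⊔ Subgroup.normalizer (Q : Set G)) = ⊤)
    (hnc : ∃ u ∈ U, ∃ y ∈ Q, y * u ≠ u * y) :
    ∃ N H : Subgroup G, N.Normal ∧ IsPGroup p N ∧ H ≠ ⊤ ∧
      (∀ g : G, ∃ n : N, ∃ h : H, g = n * h) ∧
      (∀ k ∈ N, k ∈ H → InT p k) ∧
      (∀ l : ℕ, l.Prime → ∀ t : G, InT l t → ∃ n : N, ∃ h : H, t = n * h ∧ InT l (h : G) ∧
        (∀ m : N, n * m = m * n) ∧ ∀ m : N, (h : G) * m = m * h) := by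
  have := Fact.mk hp
  have := Fact.mk hq
  obtain ⟨hUn, hUp, hUmax⟩ := hU
  obtain ⟨hWn, hWp, hWmax⟩ := hW
  have hUW : Disjoint U W := disjoint_of_card hp hUp hWp
  have hcUW : ∀ u ∈ U, ∀ w ∈ W, u * w = w * u := fun u hu w hw =>
    Subgroup.commute_of_normal_of_disjoint U W hUn hWn hUW u w hu hw
  set N : Subgroup G := ⁅U, Q⁆ with hNdef
  set H : Subgroup G := W ⊔ Subgroup.normalizer (Q : Set G) with hHdef
  have hNU : N ≤ U := Subgroup.commutator_le_left U Q
  have hNp : IsPGroup p N := hUp.to_le hNU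
  have hQH : Q ≤ H := Subgroup.le_normalizer.trans le_sup_right
  -- normality
  have cU : ∀ g ∈ U, ∀ v ∈ N, g * v * g⁻¹ ∈ N := by
    intro g hg
    apply commutator_conj
    intro u hu y hy
    have e : g * ⁅u, y⁆ * g⁻¹ = ⁅g * u, y⁆ * ⁅g, y⁆⁻¹ := by
      simp only [commutatorElement_def]; group
    rw [e]
    exact N.mul_mem (Subgroup.commutator_mem_commutator (U.mul_mem hg hu) hy)
      (N.inv_mem (Subgroup.commutator_mem_commutator hg hy))
  have cW : ∀ g ∈ W, ∀ v ∈ N, g * v * g⁻¹ ∈ N := by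
    intro g hg v hv
    rw [← hcUW v (hNU hv) g hg]; simpa using hv
  have cQ : ∀ g ∈ Subgroup.normalizer (Q : Set G), ∀ v ∈ N, g * v * g⁻¹ ∈ N := by
    intro g hg
    apply commutator_conj
    intro u hu y hy
    have e : g * ⁅u, y⁆ * g⁻¹ = ⁅g * u * g⁻¹, g * y * g⁻¹⁆ := by
      simp only [commutatorElement_def]; group
    rw [e]
    exact Subgroup.commutator_mem_commutator (hUn.conj_mem _ hu _)
      ((Subgroup.mem_normalizer_iff.1 hg y).1 hy)
  have hNn : N.Normal := by
    rw [← Subgroup.normalizer_eq_top_iff, eq_top_iff, ← htop]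
    have aux : ∀ K : Subgroup G, (∀ g ∈ K, ∀ v ∈ N, g * v * g⁻¹ ∈ N) →
        K ≤ Subgroup.normalizer (N : Set G) := by
      intro K hK g hg
      rw [Subgroup.mem_normalizer_iff]
      refine fun v => ⟨hK g hg v, fun hv => ?_⟩
      have := hK _ (K.inv_mem hg) _ hv
      convert this using 1; group
    exact sup_le (aux _ cU) (sup_le (aux _ cW) (aux _ cQ))
  -- coprime decomposition
  have hdec : ∀ V : Subgroup G, V.Normal → V ≤ U → ∀ x ∈ V, ∃ n ∈ N, n ∈ V ∧
      ∃ c ∈ V, (∀ y ∈ Q, y * c = c * y) ∧ x = n * c := by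
    intro V hV hVU x hx
    have hVp : IsPGroup p ((N ⊓ V : Subgroup G)) := hNp.to_inf_left
    obtain ⟨v, hv, hvQ⟩ := fix_coset hpq (N ⊓ V) Q hVp hQ
      (fun y hy v hv => ⟨hNn.conj_mem _ hv.1 _, hV.conj_mem _ hv.2 _⟩) x
      (fun y hy => ⟨by
        have := Subgroup.commutator_mem_commutator (U.inv_mem (hVU hx)) hy
        rw [commutatorElement_def, inv_inv] at this
        simpa [mul_assoc, hNdef] using this,
        V.mul_mem (V.inv_mem hx) (hV.conj_mem _ hx _)⟩)
    refine ⟨x * v⁻¹ * x⁻¹, hNn.conj_mem _ (N.inv_mem hv.1) _,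
      hV.conj_mem _ (V.inv_mem hv.2) _, x * v, V.mul_mem hx hv.2, hvQ, by group⟩
  have hcent : ∀ c : G, (∀ y ∈ Q, y * c = c * y) → c ∈ H := by
    intro c hc
    apply Subgroup.mem_sup_right
    rw [Subgroup.mem_normalizer_iff]
    intro y
    constructor
    · intro hy
      rw [← hc y hy]; simpa using hy
    · intro hy
      have := hc _ hy
      have h2 : c * y = y * c := by
        have : c * (y * c⁻¹ * c) = c * (c * y * c⁻¹) := by rw [← this]; group
        have := mul_left_cancel this
        simp only [inv_mul_cancel_right] at this
        rw [eq_mul_inv_iff_mul_eq] at this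
        exact this.symm
      rwa [h2, mul_inv_cancel_right] at hy
  have hgen : ∀ g : G, ∃ n : N, ∃ h : H, g = n * h := by
    intro g
    have hg : g ∈ U ⊔ H := by rw [htop]; trivial
    obtain ⟨u, hu, h, hh, rfl⟩ := (Subgroup.mem_sup_of_normal_left).1 hg
    obtain ⟨n, hn, -, c, -, hc, rfl⟩ := hdec U hUn le_rfl u hu
    exact ⟨⟨n, hn⟩, ⟨c * h, H.mul_mem (hcent c hc) hh⟩, by simp [mul_assoc]⟩
  -- intersection
  have hWQ : (Nat.card (W ⊔ Q : Subgroup G)).Coprime p :=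
    Nat.Coprime.of_dvd_left (card_sup_dvd W Q)
      (Nat.Coprime.mul_left hWp (coprime_of_isPGroup hp hq hpq.symm hQ))
  have hUWQ : Disjoint U (W ⊔ Q) := disjoint_of_card hp hUp hWQ
  have hinter : ∀ k ∈ N, k ∈ H → ∀ y ∈ Q, y * k = k * y := by
    intro k hk hkH y hy
    obtain ⟨w, hw, h, hh, hwh⟩ := (Subgroup.mem_sup_of_normal_left).1 hkH
    have h1 : k * y * k⁻¹ * y⁻¹ ∈ U := by
      have : k * (y * k⁻¹ * y⁻¹) ∈ U :=
        U.mul_mem (hNU hk) (hUn.conj_mem _ (U.inv_mem (hNU hk)) _)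
      simpa [mul_assoc] using this
    have h2 : k * y * k⁻¹ * y⁻¹ ∈ W ⊔ Q := by
      have e : k * y * k⁻¹ * y⁻¹ = w * (h * y * h⁻¹) * w⁻¹ * y⁻¹ := by rw [← hwh]; group
      rw [e]
      have hw' : w ∈ W ⊔ Q := Subgroup.mem_sup_left hw
      exact mul_mem (mul_mem (mul_mem hw' (Subgroup.mem_sup_right
        ((Subgroup.mem_normalizer_iff.1 hh y).1 hy))) (inv_mem hw'))
        (inv_mem (Subgroup.mem_sup_right hy))
    have h3 := Subgroup.disjoint_def.1 hUWQ h1 h2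
    rw [mul_inv_eq_one, mul_inv_eq_iff_eq_mul] at h3
    exact h3.symm
  refine ⟨N, H, hNn, hNp, ?_, hgen, ?_, ?_⟩
  · intro hH
    obtain ⟨u, hu, y, hy, hne⟩ := hnc
    obtain ⟨n, hn, -, c, -, hc, rfl⟩ := hdec U hUn le_rfl u hu
    apply hne
    rw [← mul_assoc, hinter n hn (by rw [hH]; trivial) y hy, mul_assoc, hc y hy, mul_assoc]
  · intro k hk hkH
    exact commutator_le_T hC hp U hUp
      (fixed_mem_commutator hpq U Q hUp hQ k hk (hinter k hk hkH))
  · intro l hl t ht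
    by_cases hlp : l = p
    · subst hlp
      obtain ⟨n, hn, hnT, c, hcT, hc, rfl⟩ := hdec (T G l) inferInstance
        (hUmax _ inferInstance (T_isPGroup G l)) t ht
      have hNe : ∀ m : N, ∃ k : ℕ, (m : G) ^ l ^ k = 1 := fun m => by
        obtain ⟨k, hk⟩ := hNp m
        exact ⟨k, by simpa using congrArg Subtype.val hk⟩
      exact ⟨⟨n, hn⟩, ⟨c, hcent c hc⟩, rfl, hcT,
        fun m => Subtype.ext (hnT.2 m (hNe m)), fun m => hcT.2 m (hNe m)⟩
    · have hTW : T G l ≤ W := hWmax _ inferInstance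
        (coprime_of_isPGroup hp hl hlp (T_isPGroup G l))
      refine ⟨1, ⟨t, Subgroup.mem_sup_left (hTW ht)⟩, by simp, ht, by simp, fun m => ?_⟩
      exact (hcUW m (hNU m.2) t (hTW ht)).symm

theorem exists_normal_elem {G : Type u} [Group G] [Finite G] [Nontrivial G]
    (hs : Group.IsSolvable G) : ∃ (q : ℕ) (M : Subgroup G), q.Prime ∧ M.Normal ∧ M ≠ ⊥ ∧
      ∀ m ∈ M, m ^ q = 1 := by
  classical
  have hex := (Group.isSolvable_def G).1 hs
  obtain ⟨k, hk⟩ : ∃ k, Nat.find hex = k + 1 := by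
    apply Nat.exists_eq_succ_of_ne_zero
    intro h0
    have := Nat.find_spec hex
    rw [h0, derivedSeries_zero] at this
    exact top_ne_bot this
  have h1 : derivedSeries G (k + 1) = ⊥ := hk ▸ Nat.find_spec hex
  have h2 : derivedSeries G k ≠ ⊥ := Nat.find_min hex (by omega)
  set A := derivedSeries G k with hA
  have hAn : A.Normal := derivedSeries_normal G k
  have hcomm : ∀ a ∈ A, ∀ b ∈ A, Commute a b := by
    intro a ha b hb
    rw [derivedSeries_succ] at h1
    have := Subgroup.commutator_mem_commutator ha hb
    rw [h1, Subgroup.mem_bot] at this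
    exact commutatorElement_eq_one_iff_mul_comm.1 this
  have hcard : Nat.card A ≠ 1 := by
    rwa [Ne, Subgroup.card_eq_one]
  obtain ⟨q, hq, hqd⟩ := Nat.exists_prime_and_dvd hcard
  have := Fact.mk hq
  obtain ⟨x, hx⟩ := exists_prime_orderOf_dvd_card' q hqd
  let M : Subgroup G :=
    { carrier := {a | a ∈ A ∧ a ^ q = 1}
      one_mem' := ⟨A.one_mem, one_pow _⟩
      mul_mem' := fun {a b} ha hb => ⟨A.mul_mem ha.1 hb.1, by
        rw [(hcomm a ha.1 b hb.1).mul_pow, ha.2, hb.2, one_mul]⟩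
      inv_mem' := fun {a} ha => ⟨A.inv_mem ha.1, by rw [inv_pow, ha.2, inv_one]⟩ }
  refine ⟨q, M, hq, ⟨?_⟩, ?_, fun m hm => hm.2⟩
  · rintro a ⟨ha, haq⟩ g
    exact ⟨hAn.conj_mem _ ha _, by rw [conj_pow, haq]; simp⟩
  · intro hM
    have hxM : (x : G) ∈ M := ⟨x.2, by
      have := pow_orderOf_eq_one x
      rw [hx] at this
      simpa using congrArg Subtype.val this⟩
    rw [hM, Subgroup.mem_bot] at hxM
    have : x = 1 := Subtype.ext hxM
    rw [this, orderOf_one] at hx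
    exact hq.one_lt.ne hx

theorem dichotomy {G : Type u} [Group G] [Finite G] (hs : Group.IsSolvable G) :
    (Group.IsNilpotent G ∧ ∀ l : ℕ, l.Prime → ∀ t : G, InT l t → ∀ g, t * g = g * t) ∨
    ∃ (p q : ℕ) (U W Q : Subgroup G), p.Prime ∧ q.Prime ∧ p ≠ q ∧ IsCore p U ∧ IsCore' p W ∧
      IsPGroup q Q ∧ U ⊔ (W ⊔ Subgroup.normalizer (Q : Set G)) = ⊤ ∧
      ∃ u ∈ U, ∃ y ∈ Q, y * u ≠ u * y := by
  choose O hO using exists_core G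
  choose W hW using exists_core' G
  let F : Subgroup G := ⨆ l : {l : ℕ // l.Prime}, O l
  have hOF : ∀ l : ℕ, l.Prime → O l ≤ F := fun l hl =>
    le_iSup (fun l : {l : ℕ // l.Prime} => O l) ⟨l, hl⟩
  have hFOW : ∀ p : ℕ, p.Prime → F ≤ O p ⊔ W p := by
    intro p hp
    refine iSup_le fun l => ?_
    by_cases h : l.1 = p
    · rw [h]; exact le_sup_left
    · exact ((hW p).2.2 _ (hO l).1 (coprime_of_isPGroup hp l.2 h (hO l).2.1)).trans le_sup_right
  have hFn : F.Normal := by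
    have : ∀ l : {l : ℕ // l.Prime}, (O l).Normal := fun l => (hO l).1
    exact Subgroup.iSup_normal _
  by_cases hF : F = ⊤
  · left
    have hdj : ∀ p : ℕ, p.Prime → Disjoint (O p) (W p) := fun p hp =>
      disjoint_of_card hp (hO p).2.1 (hW p).2.1
    have htop : ∀ p : ℕ, p.Prime → O p ⊔ W p = ⊤ := fun p hp =>
      top_le_iff.1 (hF ▸ hFOW p hp)
    constructor
    · apply (Group.isNilpotent_of_finite_tfae.out 0 3 rfl rfl).2
      intro p hp P
      have hOn := (hO p).1
      have hle : O p ≤ P := (hO p).2.1.le_sylow_of_normal P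
      have hge : (P : Subgroup G) ≤ O p := by
        rw [← Subgroup.relIndex_eq_one]
        have h1 : (O p).relIndex P ∣ Nat.card P := Subgroup.relIndex_dvd_card _ _
        have h2 : (O p).relIndex P ∣ Nat.card (W p) := by
          have h3 : (O p).relIndex P ∣ (O p).index := Subgroup.relIndex_dvd_index_of_normal _ _
          have h4 : (O p).index = (O p).relIndex (W p) := by
            rw [← Subgroup.relIndex_top_right, ← htop p hp.out, Subgroup.relIndex_sup_left]
          rw [h4] at h3
          exact h3.trans (Subgroup.relIndex_dvd_card _ _)
        obtain ⟨n, hn⟩ := IsPGroup.iff_card.1 P.isPGroup'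
        rw [hn] at h1
        exact Nat.eq_one_of_dvd_coprimes (Nat.Coprime.pow_left _ (hW p).2.1.symm) h1 h2
      rw [← le_antisymm hle hge]
      exact hOn
    · intro l hl t ht g
      have htO : t ∈ O l := (hO l).2.2 (T G l) inferInstance (T_isPGroup G l) ht
      have hle : O l ⊔ W l ≤ Subgroup.centralizer {t} := by
        refine sup_le ?_ ?_
        · intro u hu
          rw [Subgroup.mem_centralizer_singleton_iff]
          obtain ⟨k, hk⟩ := (hO l).2.1 ⟨u, hu⟩
          exact (ht.2 u ⟨k, by simpa using congrArg Subtype.val hk⟩).symm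
        · intro w hw
          rw [Subgroup.mem_centralizer_singleton_iff]
          exact (Subgroup.commute_of_normal_of_disjoint _ _ (hO l).1 (hW l).1 (hdj l hl)
            t w htO hw).symm
      rw [htop l hl] at hle
      exact (Subgroup.mem_centralizer_singleton_iff.1 (hle (Subgroup.mem_top g))).symm
  · right
    have hnt : Nontrivial (G ⧸ F) := QuotientGroup.nontrivial_iff.2 hF
    have hsq : Group.IsSolvable (G ⧸ F) := inferInstance
    obtain ⟨q, M', hq, hM'n, hM'b, hM'q⟩ := exists_normal_elem hsq
    have := Fact.mk hq
    let M : Subgroup G := M'.comap (QuotientGroup.mk' F)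
    have hMn : M.Normal := hM'n.comap _
    have hFM : F ≤ M := by
      intro x hx
      have : (QuotientGroup.mk' F) x = 1 := (QuotientGroup.eq_one_iff x).2 hx
      change (QuotientGroup.mk' F) x ∈ M'
      rw [this]; exact M'.one_mem
    have hMF : ¬ M ≤ F := by
      intro h
      apply hM'b
      rw [eq_bot_iff]
      intro y hy
      obtain ⟨x, rfl⟩ := QuotientGroup.mk'_surjective F y
      exact (QuotientGroup.eq_one_iff x).2 (h hy)
    have hMq : ∀ m ∈ M, m ^ q ∈ F := by
      intro m hm
      have := hM'q _ hm
      rw [← map_pow] at this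
      exact (QuotientGroup.eq_one_iff _).1 this
    obtain ⟨S⟩ : Nonempty (Sylow q M) := inferInstance
    let Q : Subgroup G := (S : Subgroup M).map M.subtype
    have hQ : IsPGroup q Q := S.isPGroup'.map _
    have hQM : Q ≤ M := Subgroup.map_subtype_le _
    have hfr : Subgroup.normalizer (Q : Set G) ⊔ M = ⊤ := Sylow.normalizer_sup_eq_top S
    have hMFQ : M ≤ F ⊔ Q := by
      rw [← Subgroup.relIndex_eq_one]
      have h1 : (F ⊔ Q).relIndex M ∣ F.relIndex M := Subgroup.relIndex_dvd_of_le_left _ le_sup_left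
      have h2 : (F ⊔ Q).relIndex M ∣ Q.relIndex M := Subgroup.relIndex_dvd_of_le_left _ le_sup_right
      have h3 : Q.relIndex M = (S : Subgroup M).index := by
        rw [Subgroup.relIndex]
        congr 1
        exact Subgroup.comap_map_eq_self_of_injective M.subtype_injective _
      have h4 : IsPGroup q (M ⧸ F.subgroupOf M) := by
        intro x
        obtain ⟨m, rfl⟩ := QuotientGroup.mk'_surjective _ x
        refine ⟨1, ?_⟩
        rw [← map_pow, pow_one]
        exact (QuotientGroup.eq_one_iff _).2 (hMq m m.2)
      obtain ⟨n, hn⟩ := IsPGroup.iff_card.1 h4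
      have h5 : F.relIndex M = q ^ n := hn
      rw [h5] at h1
      rw [h3] at h2
      exact Nat.eq_one_of_dvd_coprimes (Nat.Coprime.pow_left _
        ((Nat.Prime.coprime_iff_not_dvd hq).2 S.not_dvd_index)) h1 h2
    have hOQ : O q ≤ Q := by
      have h1 : O q ≤ M := (hOF q hq).trans hFM
      have hOn := (hO q).1
      have h2 : IsPGroup q ((O q).subgroupOf M) := (hO q).2.1.comap_subtype
      have h3 := h2.le_sylow_of_normal S
      have h4 := Subgroup.map_mono (f := M.subtype) h3
      rwa [Subgroup.subgroupOf_map_subtype, inf_of_le_left h1] at h4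
    have hNtop : F ⊔ Subgroup.normalizer (Q : Set G) = ⊤ := by
      rw [← top_le_iff, ← hfr]
      refine sup_le le_sup_right (hMFQ.trans (sup_le le_sup_left ?_))
      exact Subgroup.le_normalizer.trans le_sup_right
    by_contra hcon
    have hcen : ∀ p : ℕ, p.Prime → p ≠ q → ∀ u ∈ O p, ∀ y ∈ Q, y * u = u * y := by
      intro p hp hpq
      by_contra hne
      push Not at hne
      refine hcon ⟨p, q, O p, W p, Q, hp, hq, hpq, hO p, hW p, hQ, ?_, hne⟩
      rw [← top_le_iff, ← hNtop, ← sup_assoc]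
      exact sup_le_sup_right (hFOW p hp) _
    have hFN : F ≤ Subgroup.normalizer (Q : Set G) := by
      refine iSup_le fun l => ?_
      by_cases h : l.1 = q
      · rw [h]; exact hOQ.trans Subgroup.le_normalizer
      · have : O l ≤ Subgroup.centralizer (Q : Set G) := by
          intro u hu
          rw [Subgroup.mem_centralizer_iff]
          intro y hy
          exact hcen l l.2 h u hu y hy
        exact this.trans (Subgroup.centralizer_le_normalizer _)
    have hQn : Q.Normal := by
      rw [← Subgroup.normalizer_eq_top_iff, ← hNtop, sup_eq_right.2 hFN]
    have hQF : Q ≤ F := ((hO q).2.2 Q hQn hQ).trans (hOF q hq)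
    exact hMF (hMFQ.trans (sup_le le_rfl hQF))

theorem main (n : ℕ) : ∀ (G : Type u) [Group G] [Finite G], Nat.card G = n →
    Group.IsSolvable G → C2 G →
    ∃ (A : Type u) (_ : Group A) (f : G ≃ A), Group.IsNilpotent A ∧
      (∀ x y z : G, x * f.symm (f y * f z) = f.symm (f (x * y) * (f x)⁻¹ * f (x * z))) ∧
      ∀ l : ℕ, l.Prime → ∀ t : G, InT l t → ∀ g, f (t * g) = f t * f g ∧ f (t * g) = f g * f t := by
  induction n using Nat.strong_induction_on with
  | _ n ih =>
  intro G _ _ hn hs hC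
  rcases dichotomy hs with ⟨hnil, hcen⟩ | ⟨p, q, U, W, Q, hp, hq, hpq, hU, hW, hQ, htop, hnc⟩
  · refine ⟨G, inferInstance, Equiv.refl G, hnil, fun x y z => ?_, fun l hl t ht g => ?_⟩
    · simp [mul_assoc]
    · exact ⟨rfl, hcen l hl t ht g⟩
  · obtain ⟨N, H, hNn, hNp, hH, hgen, hinter, hT⟩ := step hC hp hq hpq U W Q hU hW hQ htop hnc
    have := Fact.mk hp
    have hlt : Nat.card H < n := by
      rw [← hn]
      exact lt_of_le_of_ne (Subgroup.card_le_card_group H)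
        (fun h => hH (Subgroup.eq_top_of_card_eq H h))
    obtain ⟨A, _, f, hAnil, hf, hfT⟩ := ih _ hlt H rfl inferInstance (hC.subgroup H)
    have hNnil : Group.IsNilpotent N := hNp.isNilpotent
    obtain ⟨B, _, F, π, hB, hF, hlaw⟩ := glue N H hgen f
      (fun x y z => by rw [hf, Equiv.apply_symm_apply])
      (fun k hk => by
        have hkT := hinter k hk k.2
        refine ⟨fun m => ?_, fun h => hfT p hp k hkT.subgroup h⟩
        obtain ⟨j, hj⟩ := hNp m
        exact hkT.2 m ⟨j, by simpa using congrArg Subtype.val hj⟩)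
    refine ⟨B, inferInstance, F, hB, hlaw, fun l hl t ht g => ?_⟩
    obtain ⟨a, h, rfl, hhT, haN, hhN⟩ := hT l hl t ht
    obtain ⟨m, k, rfl⟩ := hgen g
    have e : (a : G) * h * (m * k) = ((a * m : N) : G) * ((h * k : H) : G) := by
      push_cast
      rw [mul_assoc, ← mul_assoc (h : G), hhN m]; group
    obtain ⟨h1, h2⟩ := hfT l hl h hhT.subgroup k
    rw [e, hF, hF, hF, ← map_mul, ← map_mul, Prod.mk_mul_mk, Prod.mk_mul_mk]
    constructor
    · rw [h1]
    · rw [h2, haN]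

end NYB

/-- every finite soluble group all of whose Sylow subgroups have
nilpotency class at most `2` is the multiplicative group of a skew left brace of
nilpotent type. -/
theorem isNilpotentTypeSkewBraceGroup_of_sylow_class_two
    {G : Type u} [Group G] [Finite G] (hsol : IsSolvable G)
    (hSyl : ∀ p : ℕ, p.Prime → ∀ P : Sylow p G,
      lowerCentralSeries (P : Subgroup G) 2 = ⊥) :
    IsNilpotentTypeSkewBraceGroup G := by
  have hC : NYB.C2 G := by
    intro p hp S hS a ha b hb c hc
    obtain ⟨P, hP⟩ := hS.exists_le_sylow
    have h := hSyl p hp P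
    have h2 : ⁅⁅(P : Subgroup G), (P : Subgroup G)⁆, (P : Subgroup G)⁆ = ⊥ := h
    have h3 := Subgroup.commutator_mem_commutator
      (Subgroup.commutator_mem_commutator (hP ha) (hP hb)) (hP hc)
    rw [h2, Subgroup.mem_bot] at h3
    exact commutatorElement_eq_one_iff_mul_comm.1 h3
  obtain ⟨A, _, f, h1, h2, -⟩ := NYB.main (Nat.card G) G rfl hsol hC
  exact ⟨A, inferInstance, f, h1, h2⟩
end
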